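/- arXiv:2310.20449 — 6 statements merged into one kernel-verified Lean document; each statement's English description precedes it below -/
import Mathlib

section
/- The polynomial F has integer coefficients, i.e., F ∈ ℤ[x]. -/
open scoped BigOperators Classical

noncomputable section

theorem stmt6_symm_int {d : ℕ} (s : Fin d → ℂ)
    (hs : ∀ i : Fin d, ∃ m : ℤ, MvPolynomial.aeval s (MvPolynomial.esymm (Fin d) ℤ (i + 1)) = (m : ℂ))
    (p : MvPolynomial (Fin d) ℤ) (hp : p.IsSymmetric) :
    ∃ m : ℤ, MvPolynomial.aeval s p = (m : ℂ) := by
  choose m hm using hs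
  obtain ⟨q, hq⟩ := MvPolynomial.esymmAlgHom_surjective (σ := Fin d) ℤ (n := d) (by simp) ⟨p, hp⟩
  have h1 : MvPolynomial.aeval (fun i : Fin d => MvPolynomial.esymm (Fin d) ℤ (i + 1)) q = p := by
    rw [← MvPolynomial.esymmAlgHom_apply, hq]
  refine ⟨MvPolynomial.aeval m q, ?_⟩
  rw [← h1]
  have e : (MvPolynomial.aeval s).comp
      (MvPolynomial.aeval (fun i : Fin d => MvPolynomial.esymm (Fin d) ℤ (i + 1)))
      = (Algebra.ofId ℤ ℂ).comp (MvPolynomial.aeval m) := by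
    ext i
    simpa [Algebra.ofId_apply] using hm i
  simpa [Algebra.ofId_apply] using congrArg (fun g => g q) e

theorem stmt6_esymm_int {d : ℕ} (f : Polynomial ℂ) (c : ℤ) (r : Fin d → ℂ)
    (hf : f = Polynomial.C (c : ℂ) * ∏ i : Fin d, (Polynomial.X - Polynomial.C (r i)))
    (hfi : ∀ n, ∃ m : ℤ, f.coeff n = m) (i : Fin d) :
    ∃ m : ℤ, MvPolynomial.aeval (fun j => (c : ℂ) * r j)
      (MvPolynomial.esymm (Fin d) ℤ (i + 1)) = (m : ℂ) := by
  have h1 : MvPolynomial.aeval (fun j => (c : ℂ) * r j) (MvPolynomial.esymm (Fin d) ℤ (i + 1))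
      = (c : ℂ) ^ (i.1 + 1) * MvPolynomial.aeval r (MvPolynomial.esymm (Fin d) ℤ (i + 1)) := by
    simp only [MvPolynomial.esymm, map_sum, map_prod, MvPolynomial.aeval_X, Finset.mul_sum]
    refine Finset.sum_congr rfl fun t ht => ?_
    rw [Finset.prod_mul_distrib, Finset.prod_const, (Finset.mem_powersetCard.1 ht).2]
  have h2 : f.coeff (d - (i.1 + 1)) = (c : ℂ) * ((-1) ^ (i.1 + 1) *
      MvPolynomial.aeval r (MvPolynomial.esymm (Fin d) ℤ (i + 1))) := by
    have hi := i.2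
    have e : (∏ i : Fin d, (Polynomial.X - Polynomial.C (r i)))
      = ((Finset.univ.val.map r).map fun t => Polynomial.X - Polynomial.C t).prod := by
      rw [Multiset.map_map]; rfl
    rw [hf, Polynomial.coeff_C_mul, e, Multiset.prod_X_sub_C_coeff _ (by simp),
      MvPolynomial.aeval_esymm_eq_multiset_esymm]
    have : (Finset.univ.val.map r).card - (d - (i.1 + 1)) = i.1 + 1 := by simp; omega
    rw [this]
  obtain ⟨m, hm⟩ := hfi (d - (i.1 + 1))
  refine ⟨c ^ i.1 * (-1) ^ (i.1 + 1) * m, ?_⟩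
  rw [h1]
  push_cast
  rw [← hm, h2]
  have : ((-1 : ℂ) ^ (i.1 + 1)) * (-1) ^ (i.1 + 1) = 1 := by
    rw [← mul_pow]; simp
  linear_combination (-(c : ℂ) ^ (i.1 + 1) *
    MvPolynomial.aeval r (MvPolynomial.esymm (Fin d) ℤ (i + 1))) * this

theorem stmt6_diff_int {d : ℕ} (s : Fin d → ℂ)
    (hs : ∀ i : Fin d, ∃ m : ℤ, MvPolynomial.aeval s (MvPolynomial.esymm (Fin d) ℤ (i + 1)) = (m : ℂ)) :
    ∃ G : Polynomial ℤ, G.map (Int.castRingHom ℂ) =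
      ∏ ij : Fin d × Fin d, (Polynomial.X - Polynomial.C (s ij.1 - s ij.2)) := by
  set P : Polynomial (MvPolynomial (Fin d) ℤ) := ∏ ij : Fin d × Fin d,
    (Polynomial.X - Polynomial.C (MvPolynomial.X ij.1 - MvPolynomial.X ij.2)) with hP
  have hmap : P.map (MvPolynomial.aeval (R := ℤ) s : MvPolynomial (Fin d) ℤ →ₐ[ℤ] ℂ).toRingHom =
      ∏ ij : Fin d × Fin d, (Polynomial.X - Polynomial.C (s ij.1 - s ij.2)) := by
    simp [hP, Polynomial.map_prod]
  rw [← hmap]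
  have hsym : ∀ n, (P.coeff n).IsSymmetric := by
    intro n e
    have : P.map (MvPolynomial.rename (R := ℤ) e).toRingHom = P := by
      simp only [hP, Polynomial.map_prod]
      refine Fintype.prod_equiv (Equiv.prodCongr e e) _ _ fun ij => ?_
      simp
    conv_rhs => rw [← this]
    simp
  rw [← Polynomial.mem_lifts, Polynomial.lifts_iff_coeff_lifts]
  intro n
  obtain ⟨m, hm⟩ := stmt6_symm_int s hs _ (hsym n)
  exact ⟨m, by simp [hm]⟩

/-- **Lemma (i): `F ∈ ℤ[x]`.**  The polynomial `F(x) = c^{d²+d} ∏_{i,j} (x-(r_i-r_j))`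
built from the differences of the roots of `f̃ = t·f` has integer coefficients. -/
theorem stmt6 (f : Polynomial ℚ) (d : ℕ) (hdeg : f.natDegree = d) (hd1 : 1 ≤ d)
    (hint : ∀ n : ℤ, ∃ m : ℤ, f.eval (n : ℚ) = (m : ℚ))
    (hlead : 0 < f.leadingCoeff)
    (hirr : Irreducible f)
    -- `t` is the minimal positive integer with `t·f ∈ ℤ[x]`
    (t : ℕ) (ht : 0 < t)
    (htf : ∀ n : ℕ, ∃ m : ℤ, (t : ℚ) * f.coeff n = (m : ℚ))
    (htmin : ∀ t' : ℕ, 0 < t' → (∀ n : ℕ, ∃ m : ℤ, (t' : ℚ) * f.coeff n = (m : ℚ)) → t ≤ t')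
    -- `c` is the leading coefficient of `f̃ = t·f` and `r 0, …, r (d-1)` its complex roots
    (c : ℂ) (hc : c = (t : ℂ) * (f.map (algebraMap ℚ ℂ)).leadingCoeff)
    (r : Fin d → ℂ)
    (hroots : (Polynomial.C (t : ℚ) * f).map (algebraMap ℚ ℂ)
      = Polynomial.C c * ∏ i : Fin d, (Polynomial.X - Polynomial.C (r i)))
    -- `F(x) = c^{d²+d} ∏_{1 ≤ i,j ≤ d} (x - (r_i - r_j))`
    (F : Polynomial ℂ)
    (hF : F = Polynomial.C (c ^ (d ^ 2 + d)) *
      ∏ ij : Fin d × Fin d, (Polynomial.X - Polynomial.C (r ij.1 - r ij.2)))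
    :
    ∃ G : Polynomial ℤ, G.map (Int.castRingHom ℂ) = F := by
  obtain ⟨m, hm⟩ := htf d
  have hcm : c = (m : ℂ) := by
    rw [hc, Polynomial.leadingCoeff_map, Polynomial.leadingCoeff, hdeg]
    have := congrArg (algebraMap ℚ ℂ) hm
    simpa using this
  subst hcm
  have hco : ∀ n, ∃ k : ℤ, ((Polynomial.C (t : ℚ) * f).map (algebraMap ℚ ℂ)).coeff n = k := by
    intro n
    obtain ⟨k, hk⟩ := htf n
    refine ⟨k, ?_⟩
    rw [Polynomial.coeff_map, Polynomial.coeff_C_mul, hk]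
    simp
  obtain ⟨G, hG⟩ := stmt6_diff_int _ (stmt6_esymm_int _ m r hroots hco)
  refine ⟨Polynomial.C (m ^ d) * G.comp (Polynomial.C m * Polynomial.X), ?_⟩
  rw [hF, Polynomial.map_mul, Polynomial.map_comp, hG, Polynomial.prod_comp, pow_add,
    mul_comm ((m : ℂ) ^ d ^ 2), Polynomial.C_mul, mul_assoc]
  have e : ∀ ij : Fin d × Fin d, (Polynomial.X - Polynomial.C ((m : ℂ) * r ij.1 - m * r ij.2)).comp
      ((Polynomial.C m * Polynomial.X).map (Int.castRingHom ℂ))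
      = Polynomial.C (m : ℂ) * (Polynomial.X - Polynomial.C (r ij.1 - r ij.2)) := by
    intro ij
    simp
    ring
  simp only [e, Finset.prod_mul_distrib, Finset.prod_const]
  simp [sq]

end
end

section
/- If q is a prime and a, b are integers with f(a) ≡ f(b) ≡ 0 (mod q), then F(a − b) ≡ 0 (mod q). -/
open scoped BigOperators Classical

noncomputable section

/-- **Lemma (ii).**  If `q` is a prime and `a, b` are integers with
`f(a) ≡ f(b) ≡ 0 (mod q)`, then `F(a-b) ≡ 0 (mod q)`.  (Here `f(a), f(b)` and
`F(a-b)` are the integers `va, vb, vF` equal to the corresponding values.) -/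
theorem stmt7 (f : Polynomial ℚ) (d : ℕ) (hdeg : f.natDegree = d) (hd1 : 1 ≤ d)
    (hint : ∀ n : ℤ, ∃ m : ℤ, f.eval (n : ℚ) = (m : ℚ))
    (hlead : 0 < f.leadingCoeff)
    (hirr : Irreducible f)
    -- `t` is the minimal positive integer with `t·f ∈ ℤ[x]`
    (t : ℕ) (ht : 0 < t)
    (htf : ∀ n : ℕ, ∃ m : ℤ, (t : ℚ) * f.coeff n = (m : ℚ))
    (htmin : ∀ t' : ℕ, 0 < t' → (∀ n : ℕ, ∃ m : ℤ, (t' : ℚ) * f.coeff n = (m : ℚ)) → t ≤ t')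
    -- `c` is the leading coefficient of `f̃ = t·f` and `r 0, …, r (d-1)` its complex roots
    (c : ℂ) (hc : c = (t : ℂ) * (f.map (algebraMap ℚ ℂ)).leadingCoeff)
    (r : Fin d → ℂ)
    (hroots : (Polynomial.C (t : ℚ) * f).map (algebraMap ℚ ℂ)
      = Polynomial.C c * ∏ i : Fin d, (Polynomial.X - Polynomial.C (r i)))
    -- `F(x) = c^{d²+d} ∏_{1 ≤ i,j ≤ d} (x - (r_i - r_j))`
    (F : Polynomial ℂ)
    (hF : F = Polynomial.C (c ^ (d ^ 2 + d)) *
      ∏ ij : Fin d × Fin d, (Polynomial.X - Polynomial.C (r ij.1 - r ij.2)))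
    :
    ∀ q : ℕ, q.Prime → ∀ a b : ℤ,
      ∀ va vb : ℤ, (va : ℚ) = f.eval (a : ℚ) → (vb : ℚ) = f.eval (b : ℚ) →
        (q : ℤ) ∣ va → (q : ℤ) ∣ vb →
        ∀ vF : ℤ, (vF : ℂ) = F.eval ((a - b : ℤ) : ℂ) → (q : ℤ) ∣ vF := by
  intro q hq a b va vb hva hvb hqa hqb vF hvF
  -- the integral polynomial g = t f
  obtain ⟨g, hg⟩ : ∃ g : Polynomial ℤ, g.map (Int.castRingHom ℚ) = Polynomial.C (t : ℚ) * f := by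
    have : Polynomial.C (t : ℚ) * f ∈ Polynomial.lifts (Int.castRingHom ℚ) := by
      rw [Polynomial.lifts_iff_coeff_lifts]
      intro n
      obtain ⟨m, hm⟩ := htf n
      exact ⟨m, by simp [hm]⟩
    exact (Polynomial.mem_lifts _).1 this
  have hgC : g.map (algebraMap ℤ ℂ)
      = Polynomial.C c * ∏ i : Fin d, (Polynomial.X - Polynomial.C (r i)) := by
    rw [← hroots, ← hg, Polynomial.map_map]
    congr 1
  have hgc : (g.leadingCoeff : ℂ) = c := by
    have h1 : (g.map (algebraMap ℤ ℂ)).leadingCoeff = (g.leadingCoeff : ℂ) := by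
      rw [Polynomial.leadingCoeff_map_of_injective (by exact Int.cast_injective)]
      simp
    rw [← h1, hgC, Polynomial.leadingCoeff_mul, Polynomial.leadingCoeff_C,
      Polynomial.leadingCoeff_prod]
    simp
  set k : ℤ := g.leadingCoeff with hk
  have hs : ∀ i, IsIntegral ℤ (c * r i) := by
    intro i
    have h := isIntegral_leadingCoeff_smul g (r i) (by
      rw [Polynomial.aeval_def, ← Polynomial.eval_map, hgC, Polynomial.eval_mul,
        Polynomial.eval_prod, Finset.prod_eq_zero (Finset.mem_univ i) (by simp), mul_zero])
    rwa [zsmul_eq_mul, ← hk, hgc] at h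
  let A := integralClosure ℤ ℂ
  let s : Fin d → A := fun i => ⟨c * r i, hs i⟩
  have hev : ∀ (x v : ℤ), (v : ℚ) = f.eval (x : ℚ) →
      c * ∏ i, ((x : ℂ) - r i) = ((t * v : ℤ) : ℂ) := by
    intro x v hv
    have h1 : (g.map (algebraMap ℤ ℂ)).eval (x : ℂ) = c * ∏ i, ((x : ℂ) - r i) := by
      rw [hgC]; simp [Polynomial.eval_prod]
    have h2 : ((g.eval x : ℤ) : ℚ) = t * v := by
      have := congrArg (Polynomial.eval (x : ℚ)) hg
      rw [Polynomial.eval_intCast_map] at this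
      simpa [hv] using this
    have h3 : g.eval x = t * v := by exact_mod_cast h2
    rw [← h1, Polynomial.eval_intCast_map, Int.cast_id, h3]
    simp
  have hprod : ∀ (x v : ℤ), (v : ℚ) = f.eval (x : ℚ) →
      ∏ i, ((k : A) * (x : A) - s i) = (k : A) ^ (d - 1) * (t : A) * (v : A) := by
    intro x v hv
    apply Subtype.ext
    have : c ^ d = c ^ (d - 1) * c := by rw [← pow_succ, Nat.sub_add_cancel hd1]
    have h4 : ∏ i, (c * (x : ℂ) - c * r i) = c ^ (d - 1) * t * v := by
      simp_rw [← mul_sub]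
      rw [Finset.prod_mul_distrib, Finset.prod_const, Finset.card_univ, Fintype.card_fin, this,
        mul_assoc, hev x v hv]
      push_cast
      ring
    push_cast
    rw [hgc]
    exact h4
  -- a maximal ideal over q
  have hqZ : Prime (q : ℤ) := Nat.prime_iff_prime_int.1 hq
  have hspan : Ideal.span {(q : A)} ≠ ⊤ := by
    intro h
    rw [Ideal.span_singleton_eq_top] at h
    obtain ⟨y, hy⟩ := h.exists_right_inv
    have hyC : (q : ℂ) * (y : ℂ) = 1 := by
      have := congrArg (Subtype.val) hy
      push_cast at this
      exact this
    have hq0 : (q : ℂ) ≠ 0 := by exact_mod_cast hq.ne_zero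
    have hyQ : (y : ℂ) = algebraMap ℚ ℂ ((q : ℚ)⁻¹) := by
      rw [eq_comm, map_inv₀, map_natCast]
      exact inv_eq_of_mul_eq_one_right hyC
    have hyi : IsIntegral ℤ ((q : ℚ)⁻¹) := by
      have := y.2
      rw [mem_integralClosure_iff, hyQ] at this
      exact (isIntegral_algebraMap_iff (algebraMap ℚ ℂ).injective).1 this
    obtain ⟨z, hz⟩ := IsIntegrallyClosed.isIntegral_iff.1 hyi
    have hq0' : (q : ℚ) ≠ 0 := by exact_mod_cast hq.ne_zero
    have : (q : ℤ) * z = 1 := by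
      have h5 : (q : ℚ) * (z : ℚ) = 1 := by
        have : (z : ℚ) = (q : ℚ)⁻¹ := by simpa using hz
        rw [this, mul_inv_cancel₀ hq0']
      exact_mod_cast h5
    exact hqZ.not_isUnit (IsUnit.of_mul_eq_one _ this)
  obtain ⟨P, hPm, hP⟩ := Ideal.exists_le_maximal _ hspan
  have hPp : P.IsPrime := hPm.isPrime
  have hqP : (q : A) ∈ P := hP (Ideal.mem_span_singleton_self _)
  have hdvd : ∀ v : ℤ, (q : ℤ) ∣ v → (v : A) ∈ P := by
    rintro _ ⟨w, rfl⟩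
    push_cast
    exact P.mul_mem_right _ hqP
  have hex : ∀ (x v : ℤ), (v : ℚ) = f.eval (x : ℚ) → (q : ℤ) ∣ v →
      ∃ i, (k : A) * (x : A) - s i ∈ P := by
    intro x v hv hqv
    have h : ∏ i, ((k : A) * (x : A) - s i) ∈ P := by
      rw [hprod x v hv]
      exact P.mul_mem_left _ (hdvd v hqv)
    obtain ⟨i, -, hi⟩ := hPp.prod_mem_iff.1 h
    exact ⟨i, hi⟩
  obtain ⟨i, hi⟩ := hex a va hva hqa
  obtain ⟨j, hj⟩ := hex b vb hvb hqb
  have hFA : (vF : A) = (k : A) ^ d *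
      ∏ ij : Fin d × Fin d, (((k : A) * (a : A) - s ij.1) - ((k : A) * (b : A) - s ij.2)) := by
    apply Subtype.ext
    have h6 : (vF : ℂ) = c ^ d * ∏ ij : Fin d × Fin d,
        ((c * (a : ℂ) - c * r ij.1) - (c * (b : ℂ) - c * r ij.2)) := by
      have h7 : ∀ ij : Fin d × Fin d, ((c * (a : ℂ) - c * r ij.1) - (c * (b : ℂ) - c * r ij.2))
          = c * (((a - b : ℤ) : ℂ) - (r ij.1 - r ij.2)) := by
        intro ij; push_cast; ring
      rw [hvF, hF, Finset.prod_congr rfl (fun ij _ => h7 ij), Finset.prod_mul_distrib]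
      simp only [Polynomial.eval_mul, Polynomial.eval_C, Polynomial.eval_prod,
        Polynomial.eval_sub, Polynomial.eval_X, Finset.prod_const, Finset.card_univ,
        Fintype.card_prod, Fintype.card_fin]
      ring
    push_cast
    rw [hgc]
    exact h6
  have hvP : (vF : A) ∈ P := by
    rw [hFA]
    refine P.mul_mem_left _ (hPp.prod_mem_iff.2 ⟨(i, j), Finset.mem_univ _, P.sub_mem hi hj⟩)
  by_contra hnd
  obtain ⟨x, y, hxy⟩ := (hqZ.irreducible.coprime_iff_not_dvd).2 hnd
  apply hPm.ne_top
  rw [Ideal.eq_top_iff_one]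
  have h8 : (x : A) * (q : A) + (y : A) * (vF : A) = 1 := by exact_mod_cast congrArg (Int.cast : ℤ → A) hxy
  rw [← h8]
  exact P.add_mem (P.mul_mem_left _ hqP) (P.mul_mem_left _ hvP)

end
end

section
/- F(l) ≠ 0 for every nonzero integer l. -/
open scoped BigOperators Classical

noncomputable section

/-- **Lemma (iii).**  `F(l) ≠ 0` for every nonzero integer `l`. -/
theorem stmt8 (f : Polynomial ℚ) (d : ℕ) (hdeg : f.natDegree = d) (hd1 : 1 ≤ d)
    (hint : ∀ n : ℤ, ∃ m : ℤ, f.eval (n : ℚ) = (m : ℚ))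
    (hlead : 0 < f.leadingCoeff)
    (hirr : Irreducible f)
    -- `t` is the minimal positive integer with `t·f ∈ ℤ[x]`
    (t : ℕ) (ht : 0 < t)
    (htf : ∀ n : ℕ, ∃ m : ℤ, (t : ℚ) * f.coeff n = (m : ℚ))
    (htmin : ∀ t' : ℕ, 0 < t' → (∀ n : ℕ, ∃ m : ℤ, (t' : ℚ) * f.coeff n = (m : ℚ)) → t ≤ t')
    -- `c` is the leading coefficient of `f̃ = t·f` and `r 0, …, r (d-1)` its complex roots
    (c : ℂ) (hc : c = (t : ℂ) * (f.map (algebraMap ℚ ℂ)).leadingCoeff)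
    (r : Fin d → ℂ)
    (hroots : (Polynomial.C (t : ℚ) * f).map (algebraMap ℚ ℂ)
      = Polynomial.C c * ∏ i : Fin d, (Polynomial.X - Polynomial.C (r i)))
    -- `F(x) = c^{d²+d} ∏_{1 ≤ i,j ≤ d} (x - (r_i - r_j))`
    (F : Polynomial ℂ)
    (hF : F = Polynomial.C (c ^ (d ^ 2 + d)) *
      ∏ ij : Fin d × Fin d, (Polynomial.X - Polynomial.C (r ij.1 - r ij.2)))
    :
    ∀ l : ℤ, l ≠ 0 → F.eval ((l : ℤ) : ℂ) ≠ 0 := by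
  intro l hl h0
  have hf0 : f ≠ 0 := hirr.ne_zero
  have htC : (t : ℂ) ≠ 0 := by exact_mod_cast ht.ne'
  have hc0 : c ≠ 0 := by
    rw [hc]
    refine mul_ne_zero htC ?_
    rw [Polynomial.leadingCoeff_ne_zero]
    exact (Polynomial.map_ne_zero_iff (algebraMap ℚ ℂ).injective).2 hf0
  have hr : ∀ i, Polynomial.aeval (r i) f = 0 := by
    intro i
    have h := congrArg (Polynomial.eval (r i)) hroots
    rw [Polynomial.eval_mul, Polynomial.eval_prod,
      Finset.prod_eq_zero (Finset.mem_univ i) (by simp), mul_zero, Polynomial.eval_map_algebraMap,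
      map_mul, Polynomial.aeval_C] at h
    rcases mul_eq_zero.1 h with h | h
    · exact absurd (by simpa using h) ht.ne'
    · exact h
  rw [hF, Polynomial.eval_mul, Polynomial.eval_C, Polynomial.eval_prod] at h0
  rcases mul_eq_zero.1 h0 with h0 | h0
  · exact pow_ne_zero _ hc0 h0
  obtain ⟨⟨i, j⟩, -, hij⟩ := Finset.prod_eq_zero_iff.1 h0
  have hij' : r i = r j + (l : ℂ) := by
    simp at hij
    linear_combination -hij
  have hdvd : f ∣ f.comp (Polynomial.X + Polynomial.C (l : ℚ)) := by
    have h1 : minpoly ℚ (r j) ∣ f.comp (Polynomial.X + Polynomial.C (l : ℚ)) := by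
      apply minpoly.dvd
      rw [Polynomial.aeval_comp]
      simp only [map_add, Polynomial.aeval_X, Polynomial.aeval_C, map_intCast]
      rw [← hij', hr i]
    rw [← minpoly.eq_of_irreducible hirr (hr j)] at h1
    exact dvd_of_mul_right_dvd h1
  have hstep : ∀ n : ℕ, Polynomial.aeval (r j + n * (l : ℂ)) f = 0 := by
    intro n
    induction n with
    | zero => simpa using hr j
    | succ n ih =>
      obtain ⟨g, hg⟩ := hdvd
      have h := congrArg (Polynomial.aeval (r j + n * (l : ℂ))) hg
      rw [map_mul, ih, zero_mul, Polynomial.aeval_comp] at h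
      simp only [map_add, Polynomial.aeval_X, Polynomial.aeval_C, map_intCast] at h
      rw [← h]
      congr 2
      push_cast
      ring
  have hfin : (f.rootSet ℂ).Finite := Polynomial.rootSet_finite f ℂ
  refine Set.infinite_of_injective_forall_mem (f := fun n : ℕ => r j + n * (l : ℂ)) ?_ ?_ hfin
  · intro a b hab
    have hlC : (l : ℂ) ≠ 0 := by exact_mod_cast hl
    simpa [hlC] using hab
  · intro n
    exact (Polynomial.mem_rootSet_of_ne hf0).2 (hstep n)

end
end

section
/- For any irreducible polynomial g ∈ ℤ[x] of degree ≥ 1, there is a constant C_g such that for all x ≥ 2, ∑_{1 ≤ k ≤ x, g(k) ≠ 0} τ(|g(k)|) ≤ C_g · x · log x. -/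
open Polynomial in
/-- Number of roots of `g` modulo `d`. -/
noncomputable def rho (g : ℤ[X]) (d : ℕ) : ℕ := Nat.card {r : ZMod d // aeval r g = 0}

namespace ErdosDiv
open Polynomial

theorem rho_one (g : ℤ[X]) : rho g 1 = 1 := by
  unfold rho
  rw [Nat.card_eq_one_iff_unique]
  exact ⟨inferInstance, ⟨⟨0, Subsingleton.elim _ _⟩⟩⟩

theorem ringHom_aeval {R S : Type*} [CommRing R] [CommRing S] (g : ℤ[X]) (f : R →+* S) (r : R) :
    f (aeval r g) = aeval (f r) g := (Polynomial.aeval_algHom_apply f.toIntAlgHom r g).symm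

theorem rho_mul (g : ℤ[X]) {m n : ℕ} (h : m.Coprime n) :
    rho g (m * n) = rho g m * rho g n := by
  unfold rho
  rw [← Nat.card_prod]
  have key : ∀ r : ZMod (m * n), aeval r g = 0 ↔
      aeval (ZMod.chineseRemainder h r).1 g = 0 ∧ aeval (ZMod.chineseRemainder h r).2 g = 0 := by
    intro r
    have e1 := ringHom_aeval g ((RingHom.fst _ _).comp (ZMod.chineseRemainder h).toRingHom) r
    have e2 := ringHom_aeval g ((RingHom.snd _ _).comp (ZMod.chineseRemainder h).toRingHom) r
    change _ = aeval (ZMod.chineseRemainder h r).1 g at e1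
    change _ = aeval (ZMod.chineseRemainder h r).2 g at e2
    rw [← e1, ← e2]
    constructor
    · intro h0; simp [h0]
    · rintro ⟨h1, h2⟩
      have : ZMod.chineseRemainder h (aeval r g) = 0 := Prod.ext (by simpa using h1) (by simpa using h2)
      simpa using this
  refine Nat.card_congr ?_
  refine ((ZMod.chineseRemainder h).toEquiv.subtypeEquiv (q := fun c => aeval c.1 g = 0 ∧ aeval c.2 g = 0)
    (fun r => key r)).trans ?_
  exact Equiv.subtypeProdEquivProd (p := fun a : ZMod m => aeval a g = 0)
    (q := fun a : ZMod n => aeval a g = 0)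

theorem aeval_natCast_zmod (g : ℤ[X]) (d : ℕ) (k : ℤ) :
    aeval (k : ZMod d) g = 0 ↔ (d : ℤ) ∣ g.eval k := by
  rw [← ZMod.intCast_zmod_eq_zero_iff_dvd]
  have : aeval (k : ZMod d) g = ((g.eval k : ℤ) : ZMod d) := by
    have := ringHom_aeval g (Int.castRingHom (ZMod d)) k
    simpa using this.symm
  rw [this]

/-- counting -/
theorem count_le (g : ℤ[X]) {N d : ℕ} (hd : 1 ≤ d) (hdN : d ≤ N) :
    ((((Finset.Icc 1 N).filter (fun k : ℕ => (d : ℤ) ∣ g.eval (k : ℤ))).card : ℕ) : ℝ)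
      ≤ 2 * N * (rho g d / d) := by
  have hd0 : NeZero d := ⟨by omega⟩
  have h1 : ((Finset.Icc 1 N).filter (fun k : ℕ => (d : ℤ) ∣ g.eval (k : ℤ))).card
      ≤ rho g d * (N / d + 1) := by
    unfold rho
    have : rho g d * (N / d + 1) = Nat.card ({r : ZMod d // aeval r g = 0} × Fin (N/d+1)) := by
      rw [Nat.card_prod]; simp [rho]
    unfold rho at this
    rw [this, ← Nat.card_eq_finsetCard]
    refine Nat.card_le_card_of_injective (fun k => (⟨((k.1 : ℤ) : ZMod d), ?_⟩, ⟨k.1 / d, ?_⟩)) ?_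
    · rw [aeval_natCast_zmod]
      exact (Finset.mem_filter.1 k.2).2
    · have := (Finset.mem_Icc.1 (Finset.mem_filter.1 k.2).1).2
      exact Nat.lt_succ_of_le (Nat.div_le_div_right this)
    · rintro ⟨a, ha⟩ ⟨b, hb⟩ hab
      simp only [Prod.mk.injEq, Subtype.mk.injEq, Fin.mk.injEq, Int.cast_natCast] at hab
      obtain ⟨e1, e2⟩ := hab
      rw [ZMod.natCast_eq_natCast_iff'] at e1
      simp only [Subtype.mk.injEq]
      rw [← Nat.div_add_mod a d, ← Nat.div_add_mod b d, e1, e2]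
  have hd' : (0:ℝ) < d := by exact_mod_cast hd
  have h2 : ((N / d + 1 : ℕ) : ℝ) ≤ 2 * N / d := by
    push_cast
    have a1 : ((N / d : ℕ) : ℝ) ≤ N / d := Nat.cast_div_le
    have a2 : (1:ℝ) ≤ N / d := by rw [le_div_iff₀ hd']; simpa using (by exact_mod_cast hdN : (d:ℝ) ≤ N)
    have : (2 * N / d : ℝ) = N / d + N / d := by ring
    linarith
  calc _ ≤ ((rho g d * (N / d + 1) : ℕ) : ℝ) := by exact_mod_cast h1
    _ = rho g d * ((N / d + 1 : ℕ) : ℝ) := by push_cast; ring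
    _ ≤ rho g d * (2 * N / d) := by gcongr
    _ = _ := by ring

theorem pow_dvd_aux {p : ℤ} (hp : Prime p) (e : ℕ) : ∀ (j : ℕ) (t m : ℤ), p ^ j ∣ t * m →
    ¬ p ^ (e+1) ∣ m → p ^ (j - e) ∣ t := by
  intro j t m h hm
  by_contra hcon
  have hje : e < j := by
    by_contra hh
    have : j - e = 0 := by omega
    rw [this] at hcon; simp at hcon
  have hm0 : m ≠ 0 := by rintro rfl; simp at hm
  have ht0 : t ≠ 0 := by rintro rfl; simp at hcon
  have f1 : FiniteMultiplicity p m := Int.finiteMultiplicity_iff.2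
    ⟨by simpa [Int.isUnit_iff_natAbs_eq] using hp.not_isUnit, hm0⟩
  have f2 : FiniteMultiplicity p t := Int.finiteMultiplicity_iff.2
    ⟨by simpa [Int.isUnit_iff_natAbs_eq] using hp.not_isUnit, ht0⟩
  have f3 : FiniteMultiplicity p (t*m) := Int.finiteMultiplicity_iff.2
    ⟨by simpa [Int.isUnit_iff_natAbs_eq] using hp.not_isUnit, mul_ne_zero ht0 hm0⟩
  have a1 := f1.multiplicity_lt_iff_not_dvd.2 hm
  have a2 := f2.multiplicity_lt_iff_not_dvd.2 hcon
  have a3 := f3.le_multiplicity_of_pow_dvd h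
  rw [multiplicity_mul hp f3] at a3
  omega

/-- two roots congruent to higher modulus -/
theorem root_cong {g u v : ℤ[X]} {D : ℤ} (hB : u * g + v * derivative g = C D)
    {p : ℕ} (hp : p.Prime) {e j : ℕ} (he : ¬ (p:ℤ) ^ (e+1) ∣ D) (hj : e + 1 ≤ j) {k k' : ℤ}
    (h1 : (p:ℤ) ^ j ∣ g.eval k) (h2 : (p:ℤ) ^ j ∣ g.eval k') (h3 : (p:ℤ)^(e+1) ∣ k' - k) :
    (p:ℤ) ^ (j - e) ∣ k' - k := by
  obtain ⟨w, hw⟩ := g.binomExpansion k (k' - k)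
  have e1 : k + (k' - k) = k' := by ring
  rw [e1] at hw
  refine pow_dvd_aux (Nat.prime_iff_prime_int.1 hp) e j _ ((derivative g).eval k + w * (k' - k)) ?_ ?_
  · have : (k' - k) * ((derivative g).eval k + w * (k' - k)) = g.eval k' - g.eval k := by
      rw [hw]; ring
    rw [this]; exact dvd_sub h2 h1
  · intro h4
    have h5 : (p:ℤ)^(e+1) ∣ (derivative g).eval k := by
      have := dvd_sub h4 (h3.mul_left w)
      simpa using this
    have h6 : (p:ℤ)^(e+1) ∣ g.eval k := (pow_dvd_pow _ hj).trans h1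
    apply he
    have := congrArg (eval k) hB
    simp only [eval_add, eval_mul, eval_C] at this
    rw [← this]
    exact dvd_add (h6.mul_left _) (h5.mul_left _)

theorem rho_le_self (g : ℤ[X]) {d : ℕ} (hd : 1 ≤ d) : rho g d ≤ d := by
  have : NeZero d := ⟨by omega⟩
  have := Nat.card_le_card_of_injective (fun r : {r : ZMod d // aeval r g = 0} => r.1) Subtype.val_injective
  simpa [rho] using this

theorem rho_prime_le {g : ℤ[X]} {p : ℕ} (hp : p.Prime) (hl : ¬ (p:ℤ) ∣ g.leadingCoeff) :
    rho g p ≤ g.natDegree := by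
  have := Fact.mk hp
  have hne : (algebraMap ℤ (ZMod p)) g.leadingCoeff ≠ 0 := by
    intro h
    apply hl
    rw [← ZMod.intCast_zmod_eq_zero_iff_dvd]
    simpa using h
  have hm : g.map (algebraMap ℤ (ZMod p)) ≠ 0 := by
    intro h
    have := congrArg (fun f => f.coeff g.natDegree) h
    simp only [coeff_map, coeff_zero] at this
    exact hne this
  have h1 : rho g p ≤ (g.map (algebraMap ℤ (ZMod p))).roots.toFinset.card := by
    unfold rho
    rw [← Nat.card_eq_finsetCard]
    refine Nat.card_le_card_of_injective (fun r => ⟨r.1, ?_⟩) ?_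
    · rw [Multiset.mem_toFinset, mem_roots hm, IsRoot, eval_map_algebraMap]; exact r.2
    · intro a b h; simpa [Subtype.ext_iff] using h
  refine h1.trans ((Multiset.toFinset_card_le _).trans ((card_roots' _).trans natDegree_map_le))

theorem rho_pow_le {g u v : ℤ[X]} {D : ℤ} (hD : D ≠ 0) (hB : u * g + v * derivative g = C D)
    (hl : g.leadingCoeff ∣ D) {p : ℕ} (hp : p.Prime) {j : ℕ} (hj : 1 ≤ j) :
    rho g (p ^ j) ≤ max g.natDegree (D.natAbs ^ 3) := by
  have hNe : NeZero (p ^ j) := ⟨(pow_pos hp.pos _).ne'⟩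
  have hval : ∀ r : {r : ZMod (p^j) // aeval r g = 0}, (p:ℤ)^j ∣ g.eval (r.1.val : ℤ) := by
    intro r
    have := r.2
    have h2 := (aeval_natCast_zmod g (p^j) (r.1.val : ℤ)).1 (by simpa using r.2)
    exact_mod_cast h2
  by_cases hpD : (p:ℤ) ∣ D
  · refine le_max_of_le_right ?_
    have hfin : FiniteMultiplicity (p:ℤ) D := Int.finiteMultiplicity_iff.2
      ⟨by simpa using hp.one_lt.ne', hD⟩
    set e := multiplicity (p:ℤ) D with he
    have hdvd : (p:ℤ)^e ∣ D := pow_multiplicity_dvd _ _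
    have hnd : ¬ (p:ℤ)^(e+1) ∣ D := hfin.multiplicity_lt_iff_not_dvd.1 (by omega)
    have hpe : p ^ e ≤ D.natAbs := by
      apply Nat.le_of_dvd (Int.natAbs_pos.2 hD)
      have := Int.natAbs_dvd_natAbs.2 hdvd
      simpa [Int.natAbs_pow] using this
    have hp1 : p ≤ D.natAbs := by
      apply Nat.le_of_dvd (Int.natAbs_pos.2 hD)
      have := Int.natAbs_dvd_natAbs.2 hpD
      simpa using this
    have hD1 : 1 ≤ D.natAbs := Int.natAbs_pos.2 hD
    by_cases hje : j ≤ e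
    · calc rho g (p^j) ≤ p ^ j := rho_le_self g (pow_pos hp.pos _)
        _ ≤ p ^ e := Nat.pow_le_pow_right hp.pos hje
        _ ≤ D.natAbs := hpe
        _ ≤ D.natAbs ^ 3 := Nat.le_self_pow (by norm_num) _
    · push Not at hje
      have hcard : rho g (p^j) ≤ Nat.card (Fin (p^(e+1)) × Fin (p^e)) := by
        unfold rho
        refine Nat.card_le_card_of_injective (fun r => (⟨r.1.val % p^(e+1), Nat.mod_lt _ (pow_pos hp.pos _)⟩,
          ⟨r.1.val / p^(j-e), ?_⟩)) ?_
        · rw [Nat.div_lt_iff_lt_mul (pow_pos hp.pos _), ← pow_add]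
          have := r.1.val_lt
          rwa [show e + (j - e) = j by omega]
        · intro r r' h
          simp only [Prod.mk.injEq, Fin.mk.injEq] at h
          obtain ⟨h1, h2⟩ := h
          have h3 : ((p^(e+1) : ℕ):ℤ) ∣ (r'.1.val : ℤ) - r.1.val := (Nat.modEq_iff_dvd).1 h1
          have h4 := root_cong hB hp hnd hje (hval r) (hval r') (by exact_mod_cast h3)
          have h5 : r.1.val % p^(j-e) = r'.1.val % p^(j-e) := by
            apply (Nat.modEq_iff_dvd).2
            exact_mod_cast h4
          apply Subtype.ext
          apply ZMod.val_injective
          rw [← Nat.div_add_mod r.1.val (p^(j-e)), ← Nat.div_add_mod r'.1.val (p^(j-e)), h5, h2]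
      calc rho g (p^j) ≤ p^(e+1) * p^e := by simpa using hcard
        _ = p^e * p * p^e := by ring
        _ ≤ D.natAbs * D.natAbs * D.natAbs := by gcongr
        _ = _ := by ring
  · refine le_max_of_le_left ?_
    have hlp : ¬ (p:ℤ) ∣ g.leadingCoeff := fun h => hpD (h.trans hl)
    refine le_trans ?_ (rho_prime_le hp hlp)
    have hNe : NeZero p := ⟨hp.pos.ne'⟩
    unfold rho
    refine Nat.card_le_card_of_injective (fun r => ⟨((r.1.val : ℤ) : ZMod p), ?_⟩) ?_
    · rw [aeval_natCast_zmod]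
      exact (dvd_pow_self _ (by omega)).trans (hval r)
    · intro r r' h
      simp only [Subtype.mk.injEq] at h
      rw [ZMod.intCast_eq_intCast_iff_dvd_sub] at h
      have h4 := root_cong (e := 0) hB hp (by simpa using hpD) hj (hval r) (hval r') (by simpa using h)
      apply Subtype.ext
      apply ZMod.val_injective
      have h5 : r.1.val ≡ r'.1.val [MOD p^j] := by
        apply (Nat.modEq_iff_dvd).2
        exact_mod_cast h4
      exact Nat.ModEq.eq_of_lt_of_lt h5 r.1.val_lt r'.1.val_lt

/-- Bezout. -/
theorem exists_bezout {g : ℤ[X]} (hirr : Irreducible g) (hdeg : 1 ≤ g.natDegree) :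
    ∃ (u v : ℤ[X]) (D : ℤ), D ≠ 0 ∧ u * g + v * derivative g = C D ∧ g.leadingCoeff ∣ D := by
  have hprim : g.IsPrimitive := hirr.isPrimitive (by omega)
  have hirrQ : Irreducible (g.map (Int.castRingHom ℚ)) :=
    (IsPrimitive.Int.irreducible_iff_irreducible_map_cast hprim).1 hirr
  have hsep : (g.map (Int.castRingHom ℚ)).Separable := hirrQ.separable
  obtain ⟨a, b, hab⟩ := hsep
  obtain ⟨c, hc, hA⟩ := IsLocalization.integerNormalization_spec (nonZeroDivisors ℤ) a
  obtain ⟨d, hd, hB⟩ := IsLocalization.integerNormalization_spec (nonZeroDivisors ℤ) b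
  set A := IsLocalization.integerNormalization (nonZeroDivisors ℤ) a
  set B := IsLocalization.integerNormalization (nonZeroDivisors ℤ) b
  have hc0 : c ≠ 0 := nonZeroDivisors.ne_zero hc
  have hd0 : d ≠ 0 := nonZeroDivisors.ne_zero hd
  have hl0 : g.leadingCoeff ≠ 0 := leadingCoeff_ne_zero.2 hirr.ne_zero
  refine ⟨C g.leadingCoeff * C d * A, C g.leadingCoeff * C c * B, g.leadingCoeff * (c * d),
    mul_ne_zero hl0 (mul_ne_zero hc0 hd0), ?_, dvd_mul_right _ _⟩
  apply Polynomial.map_injective (Int.castRingHom ℚ) Int.cast_injective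
  have hA' : A.map (Int.castRingHom ℚ) = C (c:ℚ) * a := by
    have : A.map (Int.castRingHom ℚ) = c • a := hA
    rw [this, zsmul_eq_mul]; simp
  have hB' : B.map (Int.castRingHom ℚ) = C (d:ℚ) * b := by
    have : B.map (Int.castRingHom ℚ) = d • b := hB
    rw [this, zsmul_eq_mul]; simp
  rw [derivative_map] at hab
  simp only [Polynomial.map_add, Polynomial.map_mul, hA', hB', Polynomial.map_C, C_mul]
  simp only [Int.coe_castRingHom]
  linear_combination (C (g.leadingCoeff:ℚ) * C (c:ℚ) * C (d:ℚ)) * hab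
end ErdosDiv

namespace ErdosDiv
open Polynomial NumberField

theorem exponent_ne_zero_aux {K : Type*} [Field K] [NumberField K] (θ : 𝓞 K)
    (hθ : IntermediateField.adjoin ℚ {(θ : K)} = ⊤) : RingOfIntegers.exponent θ ≠ 0 := by
  have hisint : IsIntegral ℚ (θ : K) := θ.isIntegral_coe.tower_top
  let B : PowerBasis ℚ K := (IntermediateField.adjoin.powerBasis hisint).map
    ((IntermediateField.equivOfEq hθ).trans IntermediateField.topEquiv)
  have hgen : B.gen = (θ : K) := by
    simp [B, IntermediateField.adjoin.powerBasis_gen]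
  have hgint : IsIntegral ℤ B.gen := by rw [hgen]; exact θ.isIntegral_coe
  have hd0 : Algebra.discr ℚ B.basis ≠ 0 := Algebra.discr_not_zero_of_basis ℚ B.basis
  have hdint : IsIntegral ℤ (Algebra.discr ℚ B.basis) :=
    Algebra.discr_isIntegral _ (fun i => by rw [B.basis_eq_pow]; exact hgint.pow _)
  obtain ⟨d, hd⟩ := IsIntegrallyClosed.isIntegral_iff.1 hdint
  have hd0' : d ≠ 0 := by rintro rfl; exact hd0 (by rw [← hd]; simp)
  have hmem : ∀ z : 𝓞 K, (d : 𝓞 K) * z ∈ Algebra.adjoin ℤ {θ} := by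
    intro z
    have := Algebra.discr_mul_isIntegral_mem_adjoin ℚ hgint z.isIntegral_coe
    rw [← hd, hgen] at this
    have h2 : (algebraMap (𝓞 K) K) ((d : 𝓞 K) * z) ∈ Algebra.adjoin ℤ {(θ : K)} := by
      convert this using 1
      simp [Algebra.smul_def]
    have h3 : Algebra.adjoin ℤ {(θ : K)} = (Algebra.adjoin ℤ {θ}).map (IsScalarTower.toAlgHom ℤ (𝓞 K) K) := by
      rw [AlgHom.map_adjoin]; simp
    rw [h3] at h2
    obtain ⟨w, hw, hw2⟩ := h2
    have : w = (d : 𝓞 K) * z := by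
      apply RingOfIntegers.coe_injective
      simpa using hw2
    rw [← this]; exact hw
  unfold RingOfIntegers.exponent
  rw [Ne, Ideal.absNorm_eq_zero_iff]
  intro h0
  have : d ∈ Ideal.under ℤ (conductor ℤ θ) := by
    rw [Ideal.mem_comap, mem_conductor_iff]
    intro b
    simpa using hmem b
  rw [h0] at this
  exact hd0' (by simpa using this)

theorem exists_field {g : ℤ[X]} (hirr : Irreducible g) (hdeg : 1 ≤ g.natDegree) :
    ∃ (K : Type) (_ : Field K) (_ : NumberField K) (E : ℕ), E ≠ 0 ∧
      ∀ p : ℕ, p.Prime → ¬ p ∣ E →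
        rho g p ≤ Nat.card {P : Ideal (𝓞 K) // P.IsPrime ∧ Ideal.absNorm P = p} := by
  have hprim : g.IsPrimitive := hirr.isPrimitive (by omega)
  have hirrQ : Irreducible (g.map (Int.castRingHom ℚ)) :=
    (IsPrimitive.Int.irreducible_iff_irreducible_map_cast hprim).1 hirr
  have hF := Fact.mk hirrQ
  let K := AdjoinRoot (g.map (Int.castRingHom ℚ))
  have hK1 : CharZero K := charZero_of_injective_algebraMap (algebraMap ℚ K).injective
  have hfd : FiniteDimensional ℚ K := (AdjoinRoot.powerBasis hirrQ.ne_zero).finite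
  have hNF : NumberField K := ⟨⟩
  have hl0 : g.leadingCoeff ≠ 0 := leadingCoeff_ne_zero.2 hirr.ne_zero
  let x : K := AdjoinRoot.root (g.map (Int.castRingHom ℚ))
  have hx : aeval x g = 0 := by
    have := AdjoinRoot.eval₂_root (g.map (Int.castRingHom ℚ))
    rw [eval₂_map] at this
    convert this using 1
    rw [aeval_def]; congr 1
  let h := integralNormalization g
  have hmon : h.Monic := monic_integralNormalization hirr.ne_zero
  let y : K := algebraMap ℤ K g.leadingCoeff * x
  have hy : aeval y h = 0 := integralNormalization_aeval_eq_zero hx (by simp)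
  have hyint : IsIntegral ℤ y := ⟨h, hmon, hy⟩
  let θ : 𝓞 K := ⟨y, hyint⟩
  have hxadj : x ∈ IntermediateField.adjoin ℚ {(θ:K)} := by
    have : x = (algebraMap ℚ K (g.leadingCoeff : ℚ)⁻¹) * y := by
      have : (g.leadingCoeff : K) ≠ 0 := by exact_mod_cast hl0
      have h2 : (algebraMap ℚ K (g.leadingCoeff : ℚ)⁻¹) = (g.leadingCoeff : K)⁻¹ := by
        rw [map_inv₀]; simp
      rw [h2]
      change x = _ * (algebraMap ℤ K g.leadingCoeff * x)
      rw [← mul_assoc, eq_intCast, inv_mul_cancel₀ this, one_mul]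
    rw [this]
    exact mul_mem (IntermediateField.algebraMap_mem _ _) (IntermediateField.mem_adjoin_simple_self ℚ y)
  have htop : IntermediateField.adjoin ℚ {(θ:K)} = ⊤ := by
    rw [eq_top_iff]
    intro z _
    have h1 : Algebra.adjoin ℚ {x} ≤ (IntermediateField.adjoin ℚ {(θ:K)}).toSubalgebra :=
      Algebra.adjoin_le (Set.singleton_subset_iff.2 hxadj)
    have h2 : Algebra.adjoin ℚ {x} = ⊤ := AdjoinRoot.adjoinRoot_eq_top
    rw [h2] at h1
    exact h1 Algebra.mem_top
  have hfr : Module.finrank ℚ K = g.natDegree := by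
    rw [(AdjoinRoot.powerBasis hirrQ.ne_zero).finrank, AdjoinRoot.powerBasis_dim,
      natDegree_map_eq_of_injective Int.cast_injective]
  have hmin : minpoly ℤ θ = h := by
    have e1 : minpoly ℤ θ = minpoly ℤ y := (minpoly.algebraMap_eq RingOfIntegers.coe_injective θ).symm
    have e2 : minpoly ℚ y = (minpoly ℤ y).map (algebraMap ℤ ℚ) :=
      minpoly.isIntegrallyClosed_eq_field_fractions' ℚ hyint
    have e3 : (minpoly ℤ y).natDegree = g.natDegree := by
      rw [← natDegree_map_eq_of_injective (f := algebraMap ℤ ℚ) (by exact Int.cast_injective) (minpoly ℤ y), ← e2, ← hfr,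
        ← IntermediateField.adjoin.finrank hyint.tower_top]
      change Module.finrank ℚ (IntermediateField.adjoin ℚ {(θ:K)}) = _
      rw [htop]
      exact IntermediateField.finrank_top'
    have e4 : minpoly ℤ y ∣ h := minpoly.isIntegrallyClosed_dvd hyint hy
    rw [e1]
    refine (eq_of_monic_of_dvd_of_natDegree_le (minpoly.monic hyint) hmon e4 ?_).symm
    rw [e3]
    exact (natDegree_integralNormalization).le
  refine ⟨K, inferInstance, hNF, RingOfIntegers.exponent θ * g.leadingCoeff.natAbs,
    mul_ne_zero (exponent_ne_zero_aux θ htop) (by simpa using hl0), ?_⟩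
  intro p hp hpE
  have hFp := Fact.mk hp
  have hp1 : ¬ p ∣ RingOfIntegers.exponent θ := fun h => hpE (h.mul_right _)
  have hp2 : (algebraMap ℤ (ZMod p) g.leadingCoeff) ≠ 0 := by
    intro h0
    apply hpE
    apply Dvd.dvd.mul_left
    have : (p:ℤ) ∣ g.leadingCoeff := by
      rw [← ZMod.intCast_zmod_eq_zero_iff_dvd]; simpa using h0
    exact Int.natCast_dvd.1 this
  have hfin : Finite {P : Ideal (𝓞 K) // P.IsPrime ∧ Ideal.absNorm P = p} := by
    have := Ideal.finite_setOfPred_absNorm_eq (S := 𝓞 K) p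
    exact Set.Finite.to_subtype (this.subset (fun P hP => hP.2))
  have hQ : ∀ r : {r : ZMod p // aeval r g = 0},
      (X - C (algebraMap ℤ (ZMod p) g.leadingCoeff * r.1)) ∈ RingOfIntegers.monicFactorsMod θ p := by
    intro r
    have h0 : (minpoly ℤ θ).map (Int.castRingHom (ZMod p)) ≠ 0 :=
      map_monic_ne_zero (minpoly.monic θ.isIntegral)
    rw [Multiset.mem_toFinset, Polynomial.mem_normalizedFactors_iff h0]
    refine ⟨irreducible_X_sub_C _, monic_X_sub_C _, ?_⟩
    rw [dvd_iff_isRoot, IsRoot, hmin, eval_map]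
    have := integralNormalization_eval₂_leadingCoeff_mul hdeg (algebraMap ℤ (ZMod p)) r.1
    rw [← aeval_def r.1 g, r.2, mul_zero] at this
    exact this
  unfold rho
  refine Nat.card_le_card_of_injective (fun r =>
    ⟨((NumberField.Ideal.primesOverSpanEquivMonicFactorsMod hp1).symm ⟨_, hQ r⟩).1, ?_, ?_⟩) ?_
  · exact ((NumberField.Ideal.primesOverSpanEquivMonicFactorsMod hp1).symm ⟨_, hQ r⟩).2.1
  · have hi := NumberField.Ideal.inertiaDeg_primesOverSpanEquivMonicFactorsMod_symm_apply' hp1 (hQ r)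
    set P := (NumberField.Ideal.primesOverSpanEquivMonicFactorsMod hp1).symm ⟨_, hQ r⟩
    rw [natDegree_X_sub_C] at hi
    have h1 := P.2.1
    have h2 := P.2.2
    rw [← Ideal.pow_inertiaDeg p P.1, hi, pow_one]
  · intro r r' hrr
    simp only [Subtype.mk.injEq] at hrr
    have := (NumberField.Ideal.primesOverSpanEquivMonicFactorsMod hp1).symm.injective (Subtype.ext hrr)
    simp only [Subtype.mk.injEq, sub_right_inj, C_inj] at this
    exact Subtype.ext (mul_left_cancel₀ hp2 this)
end ErdosDiv

namespace ErdosDiv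
open Polynomial NumberField

/-- An upper bound in the style of Mertens. -/
theorem mertens_le {N : ℕ} (hN : 1 ≤ N) :
    ∑ p ∈ (Finset.Icc 1 N).filter Nat.Prime, Real.log p / p ≤ Real.log N + Real.log 4 := by
  have hN0 : (0:ℝ) < N := by exact_mod_cast hN
  have h1 : ∀ k ∈ Finset.Ioc 0 N,
      ∑ p ∈ (Finset.Icc 1 N).filter Nat.Prime, (if p ∣ k then Real.log p else 0) ≤ Real.log N := by
    intro k hk
    rw [Finset.mem_Ioc] at hk
    have e : ∑ p ∈ (Finset.Icc 1 N).filter Nat.Prime, (if p ∣ k then Real.log p else 0)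
        = ∑ p ∈ k.primeFactors, Real.log p := by
      rw [← Finset.sum_filter]
      apply Finset.sum_congr _ (fun _ _ => rfl)
      ext p
      simp only [Finset.mem_filter, Finset.mem_Icc, Nat.mem_primeFactors]
      constructor
      · rintro ⟨⟨_, h⟩, h'⟩; exact ⟨h, h', by omega⟩
      · rintro ⟨h, h', _⟩
        exact ⟨⟨⟨h.one_lt.le, (Nat.le_of_dvd hk.1 h').trans hk.2⟩, h⟩, h'⟩
    rw [e, ← Real.log_prod (fun p hp => by
      have := (Nat.prime_of_mem_primeFactors hp).ne_zero; exact_mod_cast this)]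
    apply Real.log_le_log
    · apply Finset.prod_pos
      intro p hp
      exact_mod_cast (Nat.prime_of_mem_primeFactors hp).pos
    · have := (Nat.le_of_dvd hk.1 (Nat.prod_primeFactors_dvd k)).trans hk.2
      rw [← Nat.cast_prod]
      exact Nat.cast_le.2 this
  have h2 := Finset.sum_le_sum h1
  rw [Finset.sum_comm] at h2
  simp only [Finset.sum_const, Nat.card_Ioc, nsmul_eq_mul, Nat.sub_zero] at h2
  have h3 : ∀ p ∈ (Finset.Icc 1 N).filter Nat.Prime,
      (N:ℝ) * (Real.log p / p) - Real.log p ≤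
        ∑ k ∈ Finset.Ioc 0 N, (if p ∣ k then Real.log p else 0) := by
    intro p hp
    rw [Finset.mem_filter] at hp
    rw [← Finset.sum_filter, Finset.sum_const, Nat.Ioc_filter_dvd_card_eq_div, nsmul_eq_mul]
    have hp0 : (0:ℝ) < p := by exact_mod_cast hp.2.pos
    have hl : 0 ≤ Real.log p := Real.log_natCast_nonneg p
    have : (N:ℝ) / p - 1 ≤ ((N / p : ℕ) : ℝ) := by
      have := Nat.lt_floor_add_one ((N:ℝ)/p)
      rw [Nat.floor_div_eq_div] at this
      linarith
    have := mul_le_mul_of_nonneg_right this hl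
    calc _ = ((N:ℝ) / p - 1) * Real.log p := by ring
      _ ≤ _ := this
  have h4 := (Finset.sum_le_sum h3).trans h2
  rw [Finset.sum_sub_distrib, ← Finset.mul_sum] at h4
  have h5 : ∑ p ∈ (Finset.Icc 1 N).filter Nat.Prime, Real.log p ≤ Real.log 4 * N := by
    have := Chebyshev.theta_le_log4_mul_x (x := N) (Nat.cast_nonneg _)
    rw [Chebyshev.theta_eq_sum_Icc, Nat.floor_natCast] at this
    refine le_trans (le_of_eq ?_) this
    apply Finset.sum_congr _ (fun _ _ => rfl)
    ext p
    simp only [Finset.mem_filter, Finset.mem_Icc]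
    constructor
    · rintro ⟨⟨_, h⟩, h'⟩; exact ⟨⟨Nat.zero_le _, h⟩, h'⟩
    · rintro ⟨⟨_, h⟩, h'⟩; exact ⟨⟨h'.one_lt.le, h⟩, h'⟩
  have h6 : (N:ℝ) * ∑ p ∈ (Finset.Icc 1 N).filter Nat.Prime, Real.log p / p ≤
      N * (Real.log N + Real.log 4) := by linarith
  exact le_of_mul_le_mul_left h6 hN0

open Filter Topology in
theorem zeta_bound (K : Type) [Field K] [NumberField K] :
    ∃ C : ℝ, 0 < C ∧ ∀ᶠ s : ℝ in 𝓝[>] 1, ∀ F : Finset (Ideal (𝓞 K)), (∀ I ∈ F, I ≠ ⊥) →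
      ∑ I ∈ F, (Ideal.absNorm I : ℝ) ^ (-s) ≤ C / (s - 1) := by
  have hr := dedekindZeta_residue_pos K
  refine ⟨dedekindZeta_residue K + 1, by linarith, ?_⟩
  have ht := (tendsto_sub_one_mul_dedekindZeta_nhdsGT K).norm
  have hn : ‖((dedekindZeta_residue K : ℝ) : ℂ)‖ = dedekindZeta_residue K := by
    rw [Complex.norm_real, Real.norm_of_nonneg hr.le]
  rw [hn] at ht
  filter_upwards [ht.eventually_lt_const (lt_add_one _), ht.eventually_const_lt hr,
    self_mem_nhdsWithin] with s h1 h2 h3 F hF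
  have hs : 1 < s := h3
  set a : ℕ → ℂ := (fun n ↦ (Nat.card {I : Ideal (𝓞 K) // Ideal.absNorm I = n} : ℂ)) with ha
  have hsum : Summable (LSeries.term a s) := by
    by_contra hcon
    have : dedekindZeta K s = 0 := by
      unfold dedekindZeta LSeries
      exact tsum_eq_zero_of_not_summable hcon
    rw [this] at h2
    simp at h2
  have hterm : ∀ m, LSeries.term a s m = ((‖LSeries.term a s m‖ : ℝ) : ℂ) := by
    intro m
    rw [LSeries.norm_term_eq, LSeries.term_def]
    split_ifs with hm
    · simp
    · simp only [ha, Complex.norm_natCast, Complex.ofReal_re]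
      rw [Complex.ofReal_div, Complex.ofReal_cpow (Nat.cast_nonneg _)]
      simp
  have hz : ‖dedekindZeta K s‖ = ∑' m, ‖LSeries.term a s m‖ := by
    unfold dedekindZeta LSeries
    rw [← ha]
    rw [tsum_congr hterm, ← Complex.ofReal_tsum, Complex.norm_real,
      Real.norm_of_nonneg (tsum_nonneg (fun _ => norm_nonneg _))]
  have hb : ∑ I ∈ F, (Ideal.absNorm I : ℝ) ^ (-s) ≤ ∑' m, ‖LSeries.term a s m‖ := by
    classical
    rw [← Finset.sum_fiberwise_of_maps_to (t := F.image Ideal.absNorm)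
      (g := Ideal.absNorm) (fun I hI => Finset.mem_image_of_mem _ hI)]
    refine le_trans (Finset.sum_le_sum ?_)
      (hsum.norm.sum_le_tsum (F.image Ideal.absNorm) (fun _ _ => norm_nonneg _))
    intro m hm
    obtain ⟨I0, hI0, rfl⟩ := Finset.mem_image.1 hm
    have hm0 : Ideal.absNorm I0 ≠ 0 := by
      rw [Ne, Ideal.absNorm_eq_zero_iff]; exact hF I0 hI0
    set m := Ideal.absNorm I0
    have e : ∑ I ∈ F.filter (fun I => Ideal.absNorm I = m), (Ideal.absNorm I : ℝ) ^ (-s)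
        = ((F.filter (fun I => Ideal.absNorm I = m)).card : ℝ) * (m:ℝ) ^ (-s) := by
      rw [← nsmul_eq_mul, ← Finset.sum_const]
      apply Finset.sum_congr rfl
      intro I hI
      rw [(Finset.mem_filter.1 hI).2]
    rw [e, LSeries.norm_term_eq, if_neg hm0, Complex.ofReal_re, ha, Complex.norm_natCast,
      Real.rpow_neg (Nat.cast_nonneg _), div_eq_mul_inv]
    apply mul_le_mul_of_nonneg_right _ (by positivity)
    have hfin : Finite {I : Ideal (𝓞 K) // Ideal.absNorm I = m} :=
      Ideal.finite_setOfPred_absNorm_eq m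
    have : (F.filter (fun I => Ideal.absNorm I = m)).card ≤
        Nat.card {I : Ideal (𝓞 K) // Ideal.absNorm I = m} := by
      rw [← Nat.card_eq_finsetCard]
      refine Nat.card_le_card_of_injective
        (fun I => ⟨I.1, (Finset.mem_filter.1 I.2).2⟩) ?_
      intro I J h
      exact Subtype.ext (Subtype.mk.inj h)
    exact_mod_cast this
  rw [le_div_iff₀ (by linarith)]
  refine le_trans (mul_le_mul_of_nonneg_right hb (by linarith)) ?_
  rw [← hz]
  have : ‖((s:ℂ) - 1) * dedekindZeta K s‖ = ‖dedekindZeta K s‖ * (s - 1) := by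
    rw [norm_mul, mul_comm]
    congr 1
    have : ((s:ℂ) - 1) = ((s - 1 : ℝ) : ℂ) := by push_cast; rfl
    rw [this, Complex.norm_real, Real.norm_of_nonneg (by linarith)]
  rw [← this]
  exact h1.le

end ErdosDiv

namespace ErdosDiv
open Polynomial NumberField

theorem prod_primes_inj {K : Type} [Field K] [NumberField K] (S : Finset (Ideal (𝓞 K)))
    (hS : ∀ P ∈ S, P.IsPrime ∧ P ≠ ⊥) :
    Set.InjOn (fun T : Finset (Ideal (𝓞 K)) => ∏ P ∈ T, P) (S.powerset : Set _) := by
  have key : ∀ T ⊆ S, ∀ P ∈ S, (P ∈ T ↔ P ∣ ∏ Q ∈ T, Q) := by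
    intro T hT P hP
    constructor
    · intro h; exact Finset.dvd_prod_of_mem _ h
    · intro h
      have hp : Prime P := Ideal.prime_of_isPrime (hS P hP).2 (hS P hP).1
      obtain ⟨Q, hQ, hd⟩ := (hp.dvd_finsetProd_iff _).1 h
      have hq : Prime Q := Ideal.prime_of_isPrime (hS Q (hT hQ)).2 (hS Q (hT hQ)).1
      have := (hp.dvd_prime_iff_associated hq).1 hd
      rw [associated_iff_eq.1 this]; exact hQ
  intro T hT T' hT' h
  simp only [Finset.coe_powerset, Set.mem_preimage, Set.mem_powerset_iff, Finset.coe_subset] at hT hT' h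
  ext P
  constructor
  · intro hP
    rw [key T' hT' P (hT hP), ← h, ← key T hT P (hT hP)]; exact hP
  · intro hP
    rw [key T hT P (hT' hP), h, ← key T' hT' P (hT' hP)]; exact hP

theorem prod_primes_le {K : Type} [Field K] [NumberField K] (S : Finset (Ideal (𝓞 K)))
    (hS : ∀ P ∈ S, P.IsPrime ∧ P ≠ ⊥) (s c : ℝ)
    (h : ∀ F : Finset (Ideal (𝓞 K)), (∀ I ∈ F, I ≠ ⊥) →
      ∑ I ∈ F, (Ideal.absNorm I : ℝ) ^ (-s) ≤ c) :
    ∏ P ∈ S, (1 + (Ideal.absNorm P : ℝ) ^ (-s)) ≤ c := by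
  classical
  rw [Finset.prod_one_add]
  have h1 := h (S.powerset.image (fun T : Finset (Ideal (𝓞 K)) => ∏ P ∈ T, P)) (by
    intro I hI
    obtain ⟨T, hT, rfl⟩ := Finset.mem_image.1 hI
    have := Finset.mem_powerset.1 hT
    exact Finset.prod_ne_zero_iff.2 (fun P hP => (hS P (this hP)).2))
  rw [Finset.sum_image (prod_primes_inj S hS)] at h1
  refine le_trans (le_of_eq ?_) h1
  apply Finset.sum_congr rfl
  intro T hT
  rw [map_prod, Nat.cast_prod, ← Real.finsetProd_rpow _ _ (fun _ _ => Nat.cast_nonneg _)]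

theorem sum_log_le {K : Type} [Field K] [NumberField K] {g : ℤ[X]} {E : ℕ}
    (hE : ∀ p : ℕ, p.Prime → ¬ p ∣ E →
      rho g p ≤ Nat.card {P : Ideal (𝓞 K) // P.IsPrime ∧ Ideal.absNorm P = p})
    (s c : ℝ) 
    (h : ∀ F : Finset (Ideal (𝓞 K)), (∀ I ∈ F, I ≠ ⊥) →
      ∑ I ∈ F, (Ideal.absNorm I : ℝ) ^ (-s) ≤ c) (A : Finset ℕ)
    (hA : ∀ p ∈ A, p.Prime ∧ ¬ p ∣ E) :
    ∑ p ∈ A, (rho g p : ℝ) * Real.log (1 + (p:ℝ) ^ (-s)) ≤ Real.log c := by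
  classical
  have hfin : ∀ p : ℕ, {P : Ideal (𝓞 K) | P.IsPrime ∧ Ideal.absNorm P = p}.Finite := fun p =>
    (Ideal.finite_setOfPred_absNorm_eq p).subset (fun P hP => hP.2)
  set S : Finset (Ideal (𝓞 K)) := A.biUnion (fun p => (hfin p).toFinset) with hSdef
  have hS : ∀ P ∈ S, P.IsPrime ∧ P ≠ ⊥ := by
    intro P hP
    obtain ⟨p, hp, hPp⟩ := Finset.mem_biUnion.1 hP
    have h2 : P.IsPrime ∧ Ideal.absNorm P = p := by simpa using hPp
    refine ⟨h2.1, ?_⟩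
    rintro rfl
    have := (hA p hp).1.ne_zero
    simp at h2
    exact this h2.2.symm
  have h1 := prod_primes_le S hS s c h
  have hpos : ∀ x : ℕ, (0:ℝ) < 1 + (x:ℝ) ^ (-s) := fun x => by positivity
  have h2 : Real.log (∏ P ∈ S, (1 + (Ideal.absNorm P : ℝ) ^ (-s))) ≤ Real.log c :=
    Real.log_le_log (Finset.prod_pos (fun P _ => hpos _)) h1
  refine le_trans ?_ h2
  rw [Real.log_prod (fun P _ => (hpos _).ne'), hSdef, Finset.sum_biUnion]
  · apply Finset.sum_le_sum
    intro p hp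
    have e : ∑ P ∈ (hfin p).toFinset, Real.log (1 + (Ideal.absNorm P : ℝ) ^ (-s)) =
        ((hfin p).toFinset.card : ℝ) * Real.log (1 + (p:ℝ) ^ (-s)) := by
      rw [← nsmul_eq_mul, ← Finset.sum_const]
      apply Finset.sum_congr rfl
      intro I hI
      have h2 : I.IsPrime ∧ Ideal.absNorm I = p := by simpa using hI
      rw [h2.2]
    rw [e]
    apply mul_le_mul_of_nonneg_right
    · have := hE p (hA p hp).1 (hA p hp).2
      have e2 : Nat.card {P : Ideal (𝓞 K) // P.IsPrime ∧ Ideal.absNorm P = p} =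
          (hfin p).toFinset.card := by
        rw [← Set.ncard_eq_toFinset_card _ (hfin p)]; rfl
      rw [e2] at this
      exact_mod_cast this
    · apply Real.log_nonneg
      have : (0:ℝ) ≤ (p:ℝ) ^ (-s) := by positivity
      linarith
  · intro p hp q hq hpq
    rw [Function.onFun, Finset.disjoint_left]
    intro P h3 h4
    have h3 : P.IsPrime ∧ Ideal.absNorm P = p := by simpa using h3
    have h4 : P.IsPrime ∧ Ideal.absNorm P = q := by simpa using h4
    exact hpq (h3.2.symm.trans h4.2)

open Filter Topology in
theorem lemmaA {g : ℤ[X]} (hirr : Irreducible g) (hdeg : 1 ≤ g.natDegree) {B : ℝ} (hB0 : 0 ≤ B)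
    (hB : ∀ p : ℕ, p.Prime → (rho g p : ℝ) ≤ B) :
    ∃ C : ℝ, ∀ᶠ N : ℕ in atTop,
      ∑ p ∈ (Finset.Icc 1 N).filter Nat.Prime, (rho g p : ℝ) / p ≤ Real.log (Real.log N) + C := by
  obtain ⟨K, _, _, E, hE0, hE⟩ := exists_field hirr hdeg
  obtain ⟨C, hC, hz⟩ := zeta_bound K
  have hlog : Tendsto (fun N : ℕ => Real.log N) atTop atTop :=
    Real.tendsto_log_atTop.comp tendsto_natCast_atTop_atTop
  have ht : Tendsto (fun N : ℕ => 1 + 1 / Real.log N) atTop (𝓝[>] 1) := by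
    rw [tendsto_nhdsWithin_iff]
    constructor
    · have : Tendsto (fun N : ℕ => 1 / Real.log N) atTop (𝓝 0) :=
        hlog.const_div_atTop 1
      simpa using this.const_add 1
    · filter_upwards [hlog.eventually_gt_atTop 0] with N hN
      have : 0 < 1 / Real.log N := by positivity
      simp only [Set.mem_Ioi]; linarith
  have hsq : Summable (fun p : ℕ => 1 / (p:ℝ)^2) := Real.summable_one_div_nat_pow.2 one_lt_two
  refine ⟨Real.log C + B * ∑' p : ℕ, 1 / (p:ℝ)^2 + B * (1 + Real.log 4) + E.primeFactors.card, ?_⟩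
  filter_upwards [ht.eventually hz, hlog.eventually_ge_atTop 1, eventually_ge_atTop 1] with N h1 h2 hN1
  set L := Real.log N with hL
  have hL0 : 0 < L := by linarith
  set s := 1 + 1 / L with hs
  have hs1 : s - 1 = 1 / L := by rw [hs]; ring
  have hspos : 0 ≤ 1 / L := by positivity
  rw [hs1] at h1
  have hCL : C / (1 / L) = C * L := by field_simp
  rw [hCL] at h1
  set PP := (Finset.Icc 1 N).filter Nat.Prime with hP
  have h3 := sum_log_le hE s (C * L) h1 (PP.filter (fun p => ¬ p ∣ E)) (by
    intro p hp
    simp only [hP, Finset.mem_filter] at hp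
    exact ⟨hp.1.2, hp.2⟩)
  rw [Finset.sum_filter, Real.log_mul hC.ne' hL0.ne'] at h3
  have hpt : ∀ p ∈ PP, (rho g p : ℝ) / p ≤
      (if ¬ p ∣ E then (rho g p : ℝ) * Real.log (1 + (p:ℝ) ^ (-s)) else 0) + B * (1 / (p:ℝ)^2)
        + (B / L) * (Real.log p / p) + (if p ∣ E then 1 else 0) := by
    intro p hp
    have hpp : p.Prime := (Finset.mem_filter.1 hp).2
    have hp0 : (0:ℝ) < p := by exact_mod_cast hpp.pos
    have hp1 : (1:ℝ) ≤ p := by exact_mod_cast hpp.one_lt.le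
    have hlp : 0 ≤ Real.log p := Real.log_nonneg hp1
    have hr0 : (0:ℝ) ≤ rho g p := Nat.cast_nonneg _
    by_cases hpE : p ∣ E
    · simp only [hpE, not_true, if_false, if_true]
      have : (rho g p : ℝ) / p ≤ 1 := by
        rw [div_le_one hp0]; exact_mod_cast rho_le_self g hpp.one_lt.le
      have : 0 ≤ B * (1 / (p:ℝ)^2) := by positivity
      have : 0 ≤ (B / L) * (Real.log p / p) := by positivity
      linarith
    · simp only [hpE, not_false_eq_true, if_false, if_true]
      set t := (p:ℝ) ^ (-s) with htdef
      have ht0 : 0 < t := by positivity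
      have ht1 : t ≤ 1 / p := by
        rw [htdef, one_div, ← Real.rpow_neg_one]
        exact Real.rpow_le_rpow_of_exponent_le hp1 (by rw [hs]; linarith)
      have ht2 : t ^ 2 ≤ 1 / (p:ℝ)^2 := by
        rw [← one_div_pow]; exact pow_le_pow_left₀ ht0.le ht1 2
      have hlog1 : t - t^2 ≤ Real.log (1 + t) := by
        have := Real.one_sub_inv_le_log_of_pos (x := 1 + t) (by linarith)
        refine le_trans ?_ this
        rw [show 1 - (1+t)⁻¹ = t / (1+t) by field_simp; ring, le_div_iff₀ (by linarith)]
        nlinarith [pow_pos ht0 3]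
      have hdiff : 1 / (p:ℝ) - t ≤ (1 / L) * (Real.log p / p) := by
        have e : t = 1 / p * Real.exp (-(1 / L * Real.log p)) := by
          have e1 : 1 / (p:ℝ) = Real.exp (-Real.log p) := by
            rw [Real.exp_neg, Real.exp_log hp0, one_div]
          rw [htdef, Real.rpow_def_of_pos hp0, hs, e1, ← Real.exp_add]
          congr 1; ring
        have := Real.add_one_le_exp (-(1 / L * Real.log p))
        rw [e]
        have h5 : 1 / (p:ℝ) - 1 / p * Real.exp (-(1 / L * Real.log p))
          = 1 / p * (1 - Real.exp (-(1 / L * Real.log p))) := by ring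
        rw [h5]
        calc _ ≤ 1 / (p:ℝ) * (1 / L * Real.log p) :=
              mul_le_mul_of_nonneg_left (by linarith) (by positivity)
          _ = _ := by ring
      have hu0 : 0 ≤ (1 / L) * (Real.log p / p) := by positivity
      have hBp := hB p hpp
      calc (rho g p : ℝ) / p = rho g p * (t - t^2) + rho g p * t^2 + rho g p * (1 / p - t) := by ring
        _ ≤ rho g p * Real.log (1 + t) + B * (1 / (p:ℝ)^2) + B * ((1 / L) * (Real.log p / p)) := by
          have a1 := mul_le_mul_of_nonneg_left hlog1 hr0
          have a2 : (rho g p : ℝ) * t^2 ≤ B * (1 / (p:ℝ)^2) :=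
            mul_le_mul hBp ht2 (by positivity) hB0
          have a3 : (rho g p : ℝ) * (1 / p - t) ≤ B * ((1 / L) * (Real.log p / p)) :=
            mul_le_mul hBp hdiff (by linarith) hB0
          linarith
        _ = _ := by ring
  refine (Finset.sum_le_sum hpt).trans ?_
  rw [Finset.sum_add_distrib, Finset.sum_add_distrib, Finset.sum_add_distrib, ← Finset.mul_sum,
    ← Finset.mul_sum]
  have b1 : ∑ p ∈ PP, 1 / (p:ℝ)^2 ≤ ∑' p : ℕ, 1 / (p:ℝ)^2 :=
    hsq.sum_le_tsum _ (fun _ _ => by positivity)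
  have b2 := mertens_le hN1
  have b3 : ∑ p ∈ PP, (if p ∣ E then (1:ℝ) else 0) ≤ E.primeFactors.card := by
    rw [← Finset.sum_filter, Finset.sum_const, nsmul_eq_mul, mul_one]
    have : (PP.filter (fun p => p ∣ E)).card ≤ E.primeFactors.card := by
      apply Finset.card_le_card
      intro p hp
      simp only [hP, Finset.mem_filter] at hp
      exact Nat.mem_primeFactors.2 ⟨hp.1.2, hp.2, hE0⟩
    exact_mod_cast this
  have b4 : B / L * ∑ p ∈ PP, Real.log p / p ≤ B * (1 + Real.log 4) := by
    have hl4 : 0 ≤ Real.log 4 := Real.log_nonneg (by norm_num)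
    calc _ ≤ B / L * (L + Real.log 4) := mul_le_mul_of_nonneg_left b2 (by positivity)
      _ = B * (1 + Real.log 4 / L) := by field_simp
      _ ≤ _ := by
        have := div_le_self hl4 h2
        gcongr
  have b5 := mul_le_mul_of_nonneg_left b1 hB0
  linarith

end ErdosDiv

namespace ErdosDiv
open Polynomial

theorem local_factor {g : ℤ[X]} {B : ℝ} (hB0 : 0 ≤ B)
    (hB : ∀ p j : ℕ, p.Prime → 1 ≤ j → (rho g (p ^ j) : ℝ) ≤ B) {η : ℝ} (h4 : η ≤ 1 / 4)
    {p : ℕ} (hp : p.Prime) :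
    Summable (fun e : ℕ => ‖(rho g (p ^ e) : ℝ) * ((p ^ e : ℕ) : ℝ) ^ (η - 1)‖) ∧
    ∑' e : ℕ, (rho g (p ^ e) : ℝ) * ((p ^ e : ℕ) : ℝ) ^ (η - 1) ≤
      Real.exp ((rho g p : ℝ) * (p:ℝ) ^ (η - 1) + 3 * B * (p:ℝ) ^ (-(3/2) : ℝ)) := by
  have hp0 : (0:ℝ) < p := by exact_mod_cast hp.pos
  have hp2 : (2:ℝ) ≤ p := by exact_mod_cast hp.two_le
  set x := (p:ℝ) ^ (η - 1) with hx
  have hx0 : 0 < x := by positivity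
  have hxe : ∀ e : ℕ, ((p ^ e : ℕ) : ℝ) ^ (η - 1) = x ^ e := by
    intro e
    rw [hx, Nat.cast_pow, ← Real.rpow_natCast, ← Real.rpow_natCast, ← Real.rpow_mul hp0.le,
      ← Real.rpow_mul hp0.le, mul_comm]
  have hx34 : x ≤ (p:ℝ) ^ (-(3/4) : ℝ) :=
    Real.rpow_le_rpow_of_exponent_le (by linarith) (by linarith)
  have hx2 : x ^ 2 ≤ (p:ℝ) ^ (-(3/2) : ℝ) := by
    calc x ^ 2 ≤ ((p:ℝ) ^ (-(3/4) : ℝ)) ^ 2 := pow_le_pow_left₀ hx0.le hx34 2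
      _ = _ := by rw [← Real.rpow_natCast, ← Real.rpow_mul hp0.le]; norm_num
  have hx23 : x ≤ 2 / 3 := by
    refine hx34.trans ?_
    have h1 : (p:ℝ) ^ (-(3/4) : ℝ) ≤ (2:ℝ) ^ (-(3/4) : ℝ) :=
      Real.rpow_le_rpow_of_nonpos (by norm_num) hp2 (by norm_num)
    refine h1.trans ?_
    have h2 : ((2:ℝ) ^ (-(3/4) : ℝ)) ^ 4 = 1 / 8 := by
      rw [← Real.rpow_natCast, ← Real.rpow_mul (by norm_num)]
      norm_num
    by_contra hc
    push Not at hc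
    have := pow_lt_pow_left₀ hc (by norm_num) (n := 4) (by norm_num)
    rw [h2] at this
    norm_num at this
  have hx1 : x < 1 := by linarith
  simp only [hxe]
  set a : ℕ → ℝ := fun e => (rho g (p ^ e) : ℝ) * x ^ e with ha
  have ha0 : ∀ e, 0 ≤ a e := fun e => by positivity
  have hgeo := summable_geometric_of_lt_one hx0.le hx1
  have hb : ∀ e, a e ≤ (B + 1) * x ^ e := by
    intro e
    apply mul_le_mul_of_nonneg_right _ (by positivity)
    rcases Nat.eq_zero_or_pos e with rfl | he
    · simp [rho_one, hB0]
    · linarith [hB p e hp he]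
  have hsum : Summable a := Summable.of_nonneg_of_le ha0 hb (hgeo.mul_left _)
  refine ⟨hsum.norm, ?_⟩
  have e1 : ∑' e, a e = a 0 + a 1 + ∑' e, a (e + 2) := by
    rw [← hsum.sum_add_tsum_nat_add 2]
    simp [Finset.sum_range_succ]
  have e2 : ∑' e, a (e + 2) ≤ ∑' e : ℕ, B * x ^ 2 * x ^ e := by
    apply Summable.tsum_le_tsum _ ((summable_nat_add_iff 2).2 hsum) (hgeo.mul_left _)
    intro e
    calc a (e+2) ≤ B * x ^ (e+2) :=
          mul_le_mul_of_nonneg_right (hB p (e+2) hp (by omega)) (by positivity)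
      _ = _ := by ring
  rw [tsum_mul_left, tsum_geometric_of_lt_one hx0.le hx1] at e2
  have e3 : (1 - x)⁻¹ ≤ 3 := by
    rw [inv_le_comm₀ (by linarith) (by norm_num)]; linarith
  have e4 : B * x ^ 2 * (1 - x)⁻¹ ≤ 3 * B * (p:ℝ) ^ (-(3/2) : ℝ) := by
    calc _ ≤ B * (p:ℝ) ^ (-(3/2) : ℝ) * 3 := by gcongr
      _ = _ := by ring
  have e5 := Real.add_one_le_exp ((rho g p : ℝ) * x + 3 * B * (p:ℝ) ^ (-(3/2) : ℝ))
  have a0 : a 0 = 1 := by simp [ha, rho_one]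
  have a1 : a 1 = rho g p * x := by simp [ha]
  rw [e1, a0, a1]
  linarith

theorem euler_le {g : ℤ[X]} {B : ℝ} (hB0 : 0 ≤ B)
    (hB : ∀ p j : ℕ, p.Prime → 1 ≤ j → (rho g (p ^ j) : ℝ) ≤ B) {η : ℝ} (h4 : η ≤ 1 / 4)
    (M : ℕ) (F : Finset ℕ) (hF : ∀ d ∈ F, d ∈ Nat.factoredNumbers (Finset.Icc 1 M)) :
    ∑ d ∈ F, (rho g d : ℝ) * (d:ℝ) ^ (η - 1) ≤
      Real.exp (∑ p ∈ (Finset.Icc 1 M).filter Nat.Prime,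
        ((rho g p : ℝ) * (p:ℝ) ^ (η - 1) + 3 * B * (p:ℝ) ^ (-(3/2) : ℝ))) := by
  set f : ℕ → ℝ := fun d => (rho g d : ℝ) * (d:ℝ) ^ (η - 1) with hf
  have hf0 : ∀ d, 0 ≤ f d := fun d => by positivity
  have hf1 : f 1 = 1 := by simp [hf, rho_one]
  have hmul : ∀ {m n : ℕ}, Nat.Coprime m n → f (m * n) = f m * f n := by
    intro m n h
    simp only [hf, rho_mul g h]
    push_cast
    rw [Real.mul_rpow (Nat.cast_nonneg _) (Nat.cast_nonneg _)]
    ring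
  obtain ⟨h1, h2⟩ := EulerProduct.summable_and_hasSum_factoredNumbers_prod_filter_prime_tsum
    hf1 hmul (fun hp => (local_factor hB0 hB h4 hp).1) (Finset.Icc 1 M)
  have h3 : ∑ d ∈ F, f d ≤ ∏ p ∈ (Finset.Icc 1 M).filter Nat.Prime, ∑' n : ℕ, f (p ^ n) := by
    rw [← Finset.sum_attach F f]
    let emb : {x // x ∈ F} ↪ Nat.factoredNumbers (Finset.Icc 1 M) :=
      ⟨fun d => ⟨d.1, hF d.1 d.2⟩, fun a b h => Subtype.ext (Subtype.mk.inj h)⟩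
    have := sum_le_hasSum (F.attach.map emb) (fun _ _ => hf0 _) h2
    rw [Finset.sum_map] at this
    exact this
  refine h3.trans ?_
  rw [Real.exp_sum]
  apply Finset.prod_le_prod
  · intro p _
    exact tsum_nonneg (fun _ => hf0 _)
  · intro p hp
    exact (local_factor hB0 hB h4 (Finset.mem_filter.1 hp).2).2

open Filter in
theorem lemmaM {g : ℤ[X]} (hirr : Irreducible g) (hdeg : 1 ≤ g.natDegree) {B : ℝ} (hB0 : 0 ≤ B)
    (hB : ∀ p j : ℕ, p.Prime → 1 ≤ j → (rho g (p ^ j) : ℝ) ≤ B) (C : ℝ) (hC : 0 ≤ C) :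
    ∃ K : ℝ, 0 < K ∧ ∃ M0 : ℕ, 2 ≤ M0 ∧ ∀ M : ℕ, M0 ≤ M → ∀ η : ℝ, 0 ≤ η → η ≤ 1 / 4 →
      η * Real.log M ≤ C → ∀ F : Finset ℕ,
      (∀ d ∈ F, d ∈ Nat.factoredNumbers (Finset.Icc 1 M)) →
      ∑ d ∈ F, (rho g d : ℝ) * (d:ℝ) ^ (η - 1) ≤ K * Real.log M := by
  have hB' : ∀ p : ℕ, p.Prime → (rho g p : ℝ) ≤ B := fun p hp => by
    simpa using hB p 1 hp le_rfl
  obtain ⟨CA, hA⟩ := lemmaA hirr hdeg hB0 hB'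
  obtain ⟨M1, hM1⟩ := eventually_atTop.1 hA
  have hs32 : Summable (fun p : ℕ => (p:ℝ) ^ (-(3/2) : ℝ)) :=
    Real.summable_nat_rpow.2 (by norm_num)
  refine ⟨Real.exp (CA + B * Real.exp C * (C + Real.log 4) +
    3 * B * ∑' p : ℕ, (p:ℝ) ^ (-(3/2) : ℝ)), Real.exp_pos _, max M1 2, le_max_right _ _, ?_⟩
  intro M hM η hη0 hη4 hηC F hF
  have hM2 : 2 ≤ M := (le_max_right _ _).trans hM
  have hMr : (1:ℝ) < M := by exact_mod_cast hM2
  have hlM : 0 < Real.log M := Real.log_pos hMr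
  refine (euler_le hB0 hB hη4 M F hF).trans ?_
  conv_rhs => rw [← Real.exp_log hlM]
  rw [← Real.exp_add]
  apply Real.exp_le_exp.2
  rw [Finset.sum_add_distrib, ← Finset.mul_sum]
  set PP := (Finset.Icc 1 M).filter Nat.Prime with hP
  have b1 : ∑ p ∈ PP, (p:ℝ) ^ (-(3/2) : ℝ) ≤ ∑' p : ℕ, (p:ℝ) ^ (-(3/2) : ℝ) :=
    hs32.sum_le_tsum _ (fun _ _ => by positivity)
  have b2 : ∑ p ∈ PP, (rho g p : ℝ) * (p:ℝ) ^ (η - 1) ≤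
      ∑ p ∈ PP, ((rho g p : ℝ) / p + (B * Real.exp C * η) * (Real.log p / p)) := by
    apply Finset.sum_le_sum
    intro p hp
    have hpp : p.Prime := (Finset.mem_filter.1 hp).2
    have hpM : p ≤ M := (Finset.mem_Icc.1 (Finset.mem_filter.1 hp).1).2
    have hp0 : (0:ℝ) < p := by exact_mod_cast hpp.pos
    have hp1 : (1:ℝ) ≤ p := by exact_mod_cast hpp.one_lt.le
    have hlp : 0 ≤ Real.log p := Real.log_nonneg hp1
    have hlpM : Real.log p ≤ Real.log M := Real.log_le_log hp0 (by exact_mod_cast hpM)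
    set u := η * Real.log p with hu
    have hu0 : 0 ≤ u := by positivity
    have huC : u ≤ C := (mul_le_mul_of_nonneg_left hlpM hη0).trans hηC
    have e1 : (p:ℝ) ^ (η - 1) = Real.exp u / p := by
      rw [Real.rpow_sub hp0, Real.rpow_one, Real.rpow_def_of_pos hp0, hu, mul_comm]
    have e2 : Real.exp u ≤ 1 + u * Real.exp C := by
      have h1 := Real.add_one_le_exp (-u)
      have h2 : Real.exp (-u) * Real.exp u = 1 := by rw [← Real.exp_add]; simp
      have h3 : Real.exp u ≤ Real.exp C := Real.exp_le_exp.2 huC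
      have h4 := Real.exp_pos u
      nlinarith
    rw [e1]
    have hBp := hB' p hpp
    calc (rho g p : ℝ) * (Real.exp u / p) ≤ rho g p * ((1 + u * Real.exp C) / p) := by gcongr
      _ = rho g p / p + rho g p * (u * Real.exp C / p) := by ring
      _ ≤ rho g p / p + B * (u * Real.exp C / p) := by gcongr
      _ = _ := by rw [hu]; ring
  rw [Finset.sum_add_distrib, ← Finset.mul_sum] at b2
  have b3 := hM1 M ((le_max_left _ _).trans hM)
  have b4 := mertens_le (N := M) (by omega)
  have b5 : B * Real.exp C * η * ∑ p ∈ PP, Real.log p / p ≤ B * Real.exp C * (C + Real.log 4) := by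
    have hl4 : 0 ≤ Real.log 4 := Real.log_nonneg (by norm_num)
    have hη1 : η ≤ 1 := by linarith
    calc _ ≤ B * Real.exp C * η * (Real.log M + Real.log 4) := by gcongr
      _ = B * Real.exp C * (η * Real.log M + η * Real.log 4) := by ring
      _ ≤ B * Real.exp C * (C + 1 * Real.log 4) := by gcongr
      _ = _ := by ring
  have b6 : 3 * B * ∑ p ∈ PP, (p:ℝ) ^ (-(3/2) : ℝ) ≤
    3 * B * ∑' p : ℕ, (p:ℝ) ^ (-(3/2) : ℝ) := by gcongr
  linarith

end ErdosDiv

namespace ErdosDiv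

theorem exists_split {m N : ℕ} (hN : 1 ≤ N) (hm : N < m) :
    ∃ a b q : ℕ, m = a * b ∧ a ≤ N ∧ q.Prime ∧ N < a * q ∧
      (∀ p : ℕ, p.Prime → p ∣ a → p ≤ q) ∧ (∀ p : ℕ, p.Prime → p ∣ b → q ≤ p) := by
  classical
  have hm0 : m ≠ 0 := by omega
  let S := (Finset.Icc 1 N).filter (fun d => d ∣ m ∧
    ∀ p r : ℕ, p.Prime → r.Prime → p ∣ d → r ∣ m / d → p ≤ r)
  have hS : S.Nonempty := by
    refine ⟨1, Finset.mem_filter.2 ⟨Finset.mem_Icc.2 ⟨le_rfl, hN⟩, one_dvd _, ?_⟩⟩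
    intro p r hp _ h
    exact absurd (Nat.dvd_one.1 h) hp.one_lt.ne'
  obtain ⟨a, ha, hmax⟩ := S.exists_max_image id hS
  obtain ⟨haN, ⟨b, hb⟩, hprop⟩ := Finset.mem_filter.1 ha
  rw [Finset.mem_Icc] at haN
  have hdiv : m / a = b := by rw [hb]; exact Nat.mul_div_cancel_left b (by omega)
  rw [hdiv] at hprop
  have hb1 : b ≠ 1 := by rintro rfl; omega
  have hq := Nat.minFac_prime hb1
  have hqle : ∀ p : ℕ, p.Prime → p ∣ b → b.minFac ≤ p := fun p hp h => Nat.minFac_le_of_dvd hp.two_le h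
  refine ⟨a, b, b.minFac, hb, haN.2, hq, ?_, fun p hp h => hprop p _ hp hq h (Nat.minFac_dvd b), hqle⟩
  by_contra hcon
  push Not at hcon
  obtain ⟨c, hc⟩ := Nat.minFac_dvd b
  have hmem : a * b.minFac ∈ S := by
    refine Finset.mem_filter.2 ⟨Finset.mem_Icc.2 ⟨Nat.mul_pos haN.1 hq.pos, hcon⟩,
      ⟨c, by rw [mul_assoc, ← hc]; exact hb⟩, ?_⟩
    intro p r hp hr h1 h2
    have hd2 : m / (a * b.minFac) = c := by
      conv_lhs => rw [hb]
      conv_lhs => rw [← Nat.div_div_eq_div_mul, Nat.mul_div_cancel_left b (by omega)]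
      conv_lhs => lhs; rw [hc]
      exact Nat.mul_div_cancel_left c hq.pos
    rw [hd2] at h2
    have hrb : r ∣ b := hc ▸ (h2.mul_left _)
    rcases (hp.dvd_mul).1 h1 with h | h
    · exact hprop p r hp hr h hrb
    · rw [(Nat.prime_dvd_prime_iff_eq hp hq).1 h]
      exact hqle r hr hrb
  have := hmax _ hmem
  simp only [id] at this
  have h2 : a * 2 ≤ a * b.minFac := Nat.mul_le_mul_left _ hq.two_le
  omega

theorem card_divisors_mul_le (a b : ℕ) :
    (a * b).divisors.card ≤ a.divisors.card * b.divisors.card := by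
  classical
  rw [Nat.divisors_mul]
  exact Finset.card_mul_le

theorem tau_le_two_pow (q : ℕ) : ∀ b : ℕ, b ≠ 0 → (∀ p : ℕ, p.Prime → p ∣ b → q ≤ p) →
    ∃ k, q ^ k ≤ b ∧ b.divisors.card ≤ 2 ^ k := by
  intro b
  induction b using induction_on_primes with
  | zero => intro h; exact absurd rfl h
  | one => intro _ _; exact ⟨0, by simp, by simp⟩
  | prime_mul p a hp ih =>
    intro h0 h
    obtain ⟨k, h1, h2⟩ := ih (by rintro rfl; simp at h0) (fun r hr hd => h r hr (hd.mul_left _))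
    refine ⟨k + 1, ?_, ?_⟩
    · rw [pow_succ, mul_comm]
      exact Nat.mul_le_mul (h p hp (dvd_mul_right _ _)) h1
    · refine (card_divisors_mul_le p a).trans ?_
      have : p.divisors.card = 2 := by
        rw [hp.divisors, Finset.card_pair hp.one_lt.ne]
      rw [this, pow_succ, mul_comm]
      exact Nat.mul_le_mul_right _ h2

theorem half_divisors {a : ℕ} (ha : a ≠ 0) :
    a.divisors.card ≤ 2 * (a.divisors.filter (fun d => a ≤ d ^ 2)).card := by
  have h1 := Finset.card_filter_add_card_filter_not (s := a.divisors) (fun d => a ≤ d ^ 2)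
  have h2 : (a.divisors.filter (fun d => ¬ a ≤ d ^ 2)).card ≤
      (a.divisors.filter (fun d => a ≤ d ^ 2)).card := by
    apply Finset.card_le_card_of_injOn (fun d => a / d)
    · intro d hd
      simp only [Finset.coe_filter, Nat.mem_divisors, Set.mem_ofPred_eq] at hd ⊢
      obtain ⟨⟨⟨c, hc⟩, _⟩, hd2⟩ := hd
      have hd0 : 0 < d := Nat.pos_of_ne_zero (by rintro rfl; simp at hc; exact ha hc)
      have e : a / d = c := by rw [hc]; exact Nat.mul_div_cancel_left c hd0
      rw [e]
      refine ⟨⟨⟨d, by rw [hc, mul_comm]⟩, ha⟩, ?_⟩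
      have : d < c := by
        by_contra hcon
        apply hd2
        rw [hc, sq]
        exact Nat.mul_le_mul_left _ (by omega)
      rw [hc, sq]
      exact Nat.mul_le_mul_right _ this.le
    · intro d hd e he h
      simp only [Finset.coe_filter, Nat.mem_divisors, Set.mem_ofPred_eq] at hd he h
      have := Nat.div_div_self hd.1.1 ha
      have h' := Nat.div_div_self he.1.1 ha
      rw [← this, ← h', h]
  omega

open Classical in
/-- number of divisors of `m` up to `N` satisfying `P`. -/
noncomputable def cnt (N m : ℕ) (P : ℕ → Prop) : ℕ :=
  ((Finset.Icc 1 N).filter (fun d => P d ∧ d ∣ m)).card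

theorem le_cnt {N m : ℕ} {P : ℕ → Prop} (S : Finset ℕ)
    (hS : ∀ d ∈ S, (1 ≤ d ∧ d ≤ N) ∧ P d ∧ d ∣ m) : S.card ≤ cnt N m P := by
  classical
  apply Finset.card_le_card
  intro d hd
  exact Finset.mem_filter.2 ⟨Finset.mem_Icc.2 (hS d hd).1, (hS d hd).2⟩

theorem comb {m N A Y : ℕ} (hN : 2 ≤ N) (hm0 : m ≠ 0) (hmN : m ≤ N ^ A) :
    m.divisors.card ≤ 4 ^ A * cnt N m (fun _ => True) +
      ∑ s ∈ (Finset.Icc 2 N).filter (fun s => Y ^ s ≤ N), 2 * 2 ^ (A * (s + 1)) *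
        cnt N m (fun d => N < d ^ 4 ∧ ∀ p : ℕ, p.Prime → p ∣ d → p ^ s ≤ N) +
      m.divisors.card * cnt N m (fun d => N < d ^ 4 ∧ ∀ p : ℕ, p.Prime → p ∣ d → p ≤ Y) := by
  have hdle : ∀ a, a ≤ N → a ∣ m → a.divisors.card ≤ cnt N m (fun _ => True) := by
    intro a haN ham
    apply le_cnt
    intro d hd
    have hd' := Nat.mem_divisors.1 hd
    have ha0 : 0 < a := Nat.pos_of_ne_zero hd'.2
    have := Nat.le_of_dvd ha0 hd'.1
    exact ⟨⟨Nat.pos_of_mem_divisors hd, by omega⟩,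
      trivial, hd'.1.trans ham⟩
  rcases le_or_gt m N with hle | hgt
  · have h1 := hdle m hle dvd_rfl
    have h2 : 1 ≤ 4 ^ A := Nat.one_le_pow _ _ (by norm_num)
    have := Nat.mul_le_mul h2 h1
    omega
  obtain ⟨a, b, q, hab, haN, hq, hNaq, ha, hb⟩ := exists_split (by omega) hgt
  have ha0 : a ≠ 0 := by rintro rfl; simp at hab; exact hm0 hab
  have hb0 : b ≠ 0 := by rintro rfl; simp at hab; exact hm0 hab
  have ham : a ∣ m := ⟨b, hab⟩
  set s := Nat.log q N with hs
  have hs1 : q ^ s ≤ N := Nat.pow_log_le_self q (by omega)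
  have hs2 : N < q ^ (s + 1) := Nat.lt_pow_succ_log_self hq.one_lt N
  obtain ⟨k, hk1, hk2⟩ := tau_le_two_pow q b hb0 hb
  have hkA : k ≤ A * (s + 1) := by
    have h1 : q ^ k ≤ q ^ (A * (s + 1)) := by
      calc q ^ k ≤ b := hk1
        _ ≤ m := Nat.le_of_dvd (by omega) ⟨a, by rw [hab, mul_comm]⟩
        _ ≤ N ^ A := hmN
        _ ≤ (q ^ (s + 1)) ^ A := Nat.pow_le_pow_left hs2.le A
        _ = _ := by rw [← pow_mul, mul_comm]
    exact (Nat.pow_le_pow_iff_right hq.one_lt).1 h1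
  have htb : b.divisors.card ≤ 2 ^ (A * (s + 1)) := hk2.trans (Nat.pow_le_pow_right (by norm_num) hkA)
  have htau : m.divisors.card ≤ a.divisors.card * 2 ^ (A * (s + 1)) := by
    rw [hab]
    exact (card_divisors_mul_le a b).trans (Nat.mul_le_mul_left _ htb)
  rcases Nat.lt_or_ge s 2 with hs' | hs'
  · have h1 := hdle a haN ham
    have h2 : 2 ^ (A * (s + 1)) ≤ 4 ^ A := by
      rw [show 4 = 2 ^ 2 by norm_num, ← pow_mul]
      apply Nat.pow_le_pow_right (by norm_num)
      rw [mul_comm 2 A]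
      exact Nat.mul_le_mul_left _ (by omega)
    have h3 := Nat.mul_le_mul h1 h2
    rw [mul_comm (cnt _ _ _)] at h3
    omega
  · have hq2 : q ^ 2 ≤ N := (Nat.pow_le_pow_right hq.pos hs').trans hs1
    have ha2 : N < a ^ 2 := by
      have h1 : N * q ^ 2 ≤ N * N := Nat.mul_le_mul_left _ hq2
      have h2 : N * N < (a * q) * (a * q) := Nat.mul_lt_mul'' hNaq hNaq
      have h3 : N * q ^ 2 < a ^ 2 * q ^ 2 := by
        calc _ ≤ N * N := h1
          _ < _ := h2
          _ = _ := by ring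
      exact lt_of_mul_lt_mul_right h3 (Nat.zero_le _)
    rcases le_or_gt Y q with hY | hY
    · have hsN : s ≤ N := (Nat.lt_pow_self hq.one_lt).le.trans hs1
      have hmem : s ∈ (Finset.Icc 2 N).filter (fun s => Y ^ s ≤ N) :=
        Finset.mem_filter.2 ⟨Finset.mem_Icc.2 ⟨hs', hsN⟩, (Nat.pow_le_pow_left hY s).trans hs1⟩
      have h1 : (a.divisors.filter (fun d => a ≤ d ^ 2)).card ≤
          cnt N m (fun d => N < d ^ 4 ∧ ∀ p : ℕ, p.Prime → p ∣ d → p ^ s ≤ N) := by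
        apply le_cnt
        intro d hd
        obtain ⟨hd, hd2⟩ := Finset.mem_filter.1 hd
        have hd' := Nat.mem_divisors.1 hd
        have := Nat.le_of_dvd (by omega) hd'.1
        refine ⟨⟨Nat.pos_of_mem_divisors hd, by omega⟩,
          ⟨?_, ?_⟩, hd'.1.trans ham⟩
        · calc N < a ^ 2 := ha2
            _ ≤ (d ^ 2) ^ 2 := Nat.pow_le_pow_left hd2 2
            _ = _ := by ring
        · intro p hp hpd
          exact (Nat.pow_le_pow_left (ha p hp (hpd.trans hd'.1)) s).trans hs1
      have h2 := Finset.single_le_sum (f := fun s => 2 * 2 ^ (A * (s + 1)) *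
        cnt N m (fun d => N < d ^ 4 ∧ ∀ p : ℕ, p.Prime → p ∣ d → p ^ s ≤ N))
        (fun _ _ => Nat.zero_le _) hmem
      have h3 : m.divisors.card ≤ 2 * 2 ^ (A * (s + 1)) *
        cnt N m (fun d => N < d ^ 4 ∧ ∀ p : ℕ, p.Prime → p ∣ d → p ^ s ≤ N) := by
        calc m.divisors.card ≤ a.divisors.card * 2 ^ (A * (s + 1)) := htau
          _ ≤ (2 * cnt N m (fun d => N < d ^ 4 ∧ ∀ p : ℕ, p.Prime → p ∣ d → p ^ s ≤ N)) *
            2 ^ (A * (s + 1)) :=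
              Nat.mul_le_mul_right _ ((half_divisors ha0).trans (Nat.mul_le_mul_left _ h1))
          _ = _ := by ring
      refine (h3.trans h2).trans ?_
      omega
    · have h1 : 1 ≤ cnt N m (fun d => N < d ^ 4 ∧ ∀ p : ℕ, p.Prime → p ∣ d → p ≤ Y) := by
        rw [← Finset.card_singleton a]
        apply le_cnt
        intro d hd
        rw [Finset.mem_singleton] at hd
        subst hd
        refine ⟨⟨by omega, haN⟩, ⟨?_, ?_⟩, ham⟩
        · exact ha2.trans_le (Nat.pow_le_pow_right (by omega) (by norm_num))
        · intro p hp hpa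
          exact (ha p hp hpa).trans hY.le
      have := Nat.mul_le_mul_left m.divisors.card h1
      omega

end ErdosDiv

namespace ErdosDiv

theorem tau_bound {ε : ℝ} (hε : 0 < ε) :
    ∃ C : ℝ, 0 < C ∧ ∀ m : ℕ, m ≠ 0 → (m.divisors.card : ℝ) ≤ C * (m:ℝ) ^ ε := by
  have hl2 : 0 < Real.log 2 := Real.log_pos one_lt_two
  set δ := ε * Real.log 2 with hδ
  have hδ0 : 0 < δ := by positivity
  set c := 1 + 1 / δ with hc
  have hc1 : 1 ≤ c := by
    have : 0 ≤ 1 / δ := by positivity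
    rw [hc]; linarith
  obtain ⟨Q, hQ⟩ := exists_nat_ge ((2:ℝ) ^ (1 / ε))
  have hQ2 : ∀ p : ℕ, Q ≤ p → (2:ℝ) ≤ (p:ℝ) ^ ε := by
    intro p hp
    have h1 : (2:ℝ) ^ (1 / ε) ≤ p := hQ.trans (by exact_mod_cast hp)
    calc (2:ℝ) = ((2:ℝ) ^ (1 / ε)) ^ ε := by
          rw [← Real.rpow_mul (by norm_num), one_div_mul_cancel hε.ne', Real.rpow_one]
      _ ≤ _ := Real.rpow_le_rpow (by positivity) h1 hε.le
  have key : ∀ m : ℕ, m ≠ 0 →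
      (m.divisors.card : ℝ) ≤ c ^ (m.primeFactors.filter (· < Q)).card * (m:ℝ) ^ ε := by
    intro m
    induction m using Nat.recOnPosPrimePosCoprime with
    | zero => intro h; exact absurd rfl h
    | one => intro _; simp
    | prime_pow p e hp he =>
      intro _
      have hp0 : (0:ℝ) < p := by exact_mod_cast hp.pos
      rw [Nat.divisors_prime_pow hp, Finset.card_map, Finset.card_range,
        Nat.primeFactors_prime_pow he.ne' hp]
      have hpe : ((p ^ e : ℕ) : ℝ) ^ ε = ((p:ℝ) ^ ε) ^ e := by
        rw [Nat.cast_pow, ← Real.rpow_natCast, ← Real.rpow_natCast, ← Real.rpow_mul hp0.le,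
          ← Real.rpow_mul hp0.le, mul_comm]
      rw [hpe]
      rcases lt_or_ge p Q with h | h
      · rw [Finset.filter_singleton, if_pos h, Finset.card_singleton, pow_one]
        have h1 : 1 + δ * e ≤ ((p:ℝ) ^ ε) ^ e := by
          have h2 : Real.exp δ ≤ (p:ℝ) ^ ε := by
            rw [Real.rpow_def_of_pos hp0, hδ]
            apply Real.exp_le_exp.2
            rw [mul_comm]
            apply mul_le_mul_of_nonneg_right _ hε.le
            exact Real.log_le_log (by norm_num) (by exact_mod_cast hp.two_le)
          calc 1 + δ * e ≤ Real.exp (e * δ) := by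
                have := Real.add_one_le_exp (e * δ); linarith
            _ = Real.exp δ ^ e := Real.exp_nat_mul _ _
            _ ≤ _ := pow_le_pow_left₀ (Real.exp_pos _).le h2 e
        have h3 : ((e + 1 : ℕ) : ℝ) ≤ c * (1 + δ * e) := by
          have : c * (1 + δ * e) = 1 + 1 / δ + δ * e + e := by
            rw [hc]; field_simp
            ring
          rw [this]
          push_cast
          have : 0 ≤ 1 / δ + δ * e := by positivity
          linarith
        exact h3.trans (mul_le_mul_of_nonneg_left h1 (by linarith))
      · rw [Finset.filter_singleton, if_neg (by omega), Finset.card_empty, pow_zero, one_mul]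
        calc ((e + 1 : ℕ) : ℝ) ≤ (2:ℝ) ^ e := by
              exact_mod_cast Nat.lt_two_pow_self (n := e)
          _ ≤ _ := pow_le_pow_left₀ (by norm_num) (hQ2 p h) e
    | coprime a b ha hb hab iha ihb =>
      intro _
      have ha0 : a ≠ 0 := by omega
      have hb0 : b ≠ 0 := by omega
      rw [hab.card_divisors_mul, hab.primeFactors_mul, Finset.filter_union,
        Finset.card_union_of_disjoint
          (Finset.disjoint_filter_filter hab.disjoint_primeFactors), pow_add]
      push_cast
      rw [Real.mul_rpow (Nat.cast_nonneg _) (Nat.cast_nonneg _)]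
      have h1 := iha ha0
      have h2 := ihb hb0
      calc _ ≤ _ := mul_le_mul h1 h2 (Nat.cast_nonneg _) (by positivity)
        _ = _ := by ring
  refine ⟨c ^ Q, by positivity, fun m hm => (key m hm).trans ?_⟩
  apply mul_le_mul_of_nonneg_right _ (by positivity)
  apply pow_le_pow_right₀ hc1
  calc _ ≤ (Finset.range Q).card := Finset.card_le_card (by
        intro p hp; exact Finset.mem_range.2 (Finset.mem_filter.1 hp).2)
    _ = Q := Finset.card_range Q

end ErdosDiv

namespace ErdosDiv
open Polynomial

theorem sum_cnt_le (g : ℤ[X]) (N : ℕ) (P : ℕ → Prop) [DecidablePred P] (S : Finset ℕ)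
    (hS : S ⊆ Finset.Icc 1 N) :
    ∑ k ∈ S, (cnt N (g.eval (k:ℤ)).natAbs P : ℝ) ≤
      2 * N * ∑ d ∈ (Finset.Icc 1 N).filter P, (rho g d : ℝ) / d := by
  classical
  have h1 : ∀ k ∈ S, (cnt N (g.eval (k:ℤ)).natAbs P : ℝ) =
      ∑ d ∈ (Finset.Icc 1 N).filter P, (if (d:ℤ) ∣ g.eval (k:ℤ) then (1:ℝ) else 0) := by
    intro k _
    rw [← Finset.sum_filter, Finset.filter_filter, Finset.sum_const, nsmul_eq_mul, mul_one]
    unfold cnt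
    congr 2
    ext d
    simp only [Finset.mem_filter, Int.natCast_dvd]
  rw [Finset.sum_congr rfl h1, Finset.sum_comm, Finset.mul_sum]
  apply Finset.sum_le_sum
  intro d hd
  rw [Finset.mem_filter, Finset.mem_Icc] at hd
  refine le_trans ?_ (count_le g hd.1.1 hd.1.2)
  rw [← Finset.sum_filter, Finset.sum_const, nsmul_eq_mul, mul_one]
  exact_mod_cast Finset.card_le_card (Finset.filter_subset_filter _ hS)

theorem shift_le (g : ℤ[X]) {N : ℕ} (hN : 1 ≤ N) {η : ℝ} (hη : 0 ≤ η) (F : Finset ℕ)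
    (hF : ∀ d ∈ F, N < d ^ 4) :
    ∑ d ∈ F, (rho g d : ℝ) / d ≤
      (N:ℝ) ^ (-(η / 4)) * ∑ d ∈ F, (rho g d : ℝ) * (d:ℝ) ^ (η - 1) := by
  rw [Finset.mul_sum]
  apply Finset.sum_le_sum
  intro d hd
  have hNd := hF d hd
  have hd0 : (0:ℝ) < d := by
    have : d ≠ 0 := by rintro rfl; simp at hNd
    exact_mod_cast Nat.pos_of_ne_zero this
  have hN0 : (0:ℝ) < N := by exact_mod_cast hN
  have h1 : (N:ℝ) ^ (η / 4) ≤ (d:ℝ) ^ η := by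
    calc (N:ℝ) ^ (η / 4) ≤ ((d:ℝ) ^ (4:ℕ)) ^ (η / 4) :=
          Real.rpow_le_rpow hN0.le (by exact_mod_cast hNd.le) (by positivity)
      _ = _ := by
          rw [← Real.rpow_natCast, ← Real.rpow_mul hd0.le]
          congr 1; push_cast; ring
  have h2 : 0 < (N:ℝ) ^ (η / 4) := by positivity
  have e : (N:ℝ) ^ (-(η / 4)) * ((rho g d : ℝ) * (d:ℝ) ^ (η - 1)) =
      (rho g d : ℝ) / d * ((d:ℝ) ^ η / (N:ℝ) ^ (η / 4)) := by
    rw [Real.rpow_neg hN0.le, Real.rpow_sub hd0, Real.rpow_one]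
    field_simp
  rw [e]
  apply le_mul_of_one_le_right (by positivity)
  rw [one_le_div h2]
  exact h1

theorem eval_bound (g : ℤ[X]) : ∃ G : ℕ, ∀ N k : ℕ, G ≤ N → 1 ≤ k → k ≤ N →
    (g.eval (k:ℤ)).natAbs ≤ N ^ (g.natDegree + 1) := by
  refine ⟨∑ i ∈ Finset.range (g.natDegree + 1), (g.coeff i).natAbs, ?_⟩
  intro N k hG hk hkN
  have h1 : (g.eval (k:ℤ)).natAbs ≤
      ∑ i ∈ Finset.range (g.natDegree + 1), (g.coeff i * (k:ℤ) ^ i).natAbs := by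
    rw [eval_eq_sum_range]
    exact Int.natAbs_sum_le _ _
  refine h1.trans ?_
  have hN : 1 ≤ N := hk.trans hkN
  calc _ ≤ ∑ i ∈ Finset.range (g.natDegree + 1), (g.coeff i).natAbs * N ^ g.natDegree := by
        apply Finset.sum_le_sum
        intro i hi
        rw [Int.natAbs_mul, Int.natAbs_pow, Int.natAbs_natCast]
        apply Nat.mul_le_mul_left
        exact (Nat.pow_le_pow_left hkN i).trans
          (Nat.pow_le_pow_right hN (by have := Finset.mem_range.1 hi; omega))
    _ = (∑ i ∈ Finset.range (g.natDegree + 1), (g.coeff i).natAbs) * N ^ g.natDegree := by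
        rw [Finset.sum_mul]
    _ ≤ N * N ^ g.natDegree := Nat.mul_le_mul_right _ hG
    _ = _ := by ring

theorem mem_factored {M d : ℕ} (hd : ∀ p : ℕ, p.Prime → p ∣ d → p ≤ M) (hd0 : d ≠ 0) :
    d ∈ Nat.factoredNumbers (Finset.Icc 1 M) := by
  rw [Nat.mem_factoredNumbers_iff_primeFactors_subset]
  refine ⟨hd0, ?_⟩
  intro p hp
  have := Nat.mem_primeFactors.1 hp
  exact Finset.mem_Icc.2 ⟨this.1.one_lt.le, hd p this.1 this.2.1⟩

theorem level_bound {g : ℤ[X]} {A : ℕ} {K : ℝ} (hK : 0 < K) {M0 : ℕ} (hM0 : 2 ≤ M0)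
    (hM : ∀ M : ℕ, M0 ≤ M → ∀ η : ℝ, 0 ≤ η → η ≤ 1 / 4 →
      η * Real.log M ≤ 4 * ((A:ℝ) + 1) → ∀ F : Finset ℕ,
      (∀ d ∈ F, d ∈ Nat.factoredNumbers (Finset.Icc 1 M)) →
      ∑ d ∈ F, (rho g d : ℝ) * (d:ℝ) ^ (η - 1) ≤ K * Real.log M)
    {Y : ℕ} (hY : M0 ≤ Y) (hY2 : 16 * ((A:ℝ) + 1) ≤ Real.log Y) {N s : ℕ} (hs : 2 ≤ s)
    (hsN : Y ^ s ≤ N) (F : Finset ℕ)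
    (hF : ∀ d ∈ F, N < d ^ 4 ∧ ∀ p : ℕ, p.Prime → p ∣ d → p ^ s ≤ N) :
    ∑ d ∈ F, (rho g d : ℝ) / d ≤ Real.exp (-((A:ℝ) + 1) * s) * (K * Real.log N) := by
  have hs0 : s ≠ 0 := by omega
  set M := Nat.findGreatest (fun M => M ^ s ≤ N) N with hMdef
  have hYN : Y ≤ N := (Nat.le_self_pow hs0 Y).trans hsN
  have hMs : M ^ s ≤ N := Nat.findGreatest_spec (P := fun M => M ^ s ≤ N) hYN hsN
  have hpM : ∀ p : ℕ, p ^ s ≤ N → p ≤ M := fun p hp =>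
    Nat.le_findGreatest ((Nat.le_self_pow hs0 p).trans hp) hp
  have hYM : Y ≤ M := hpM Y hsN
  have hN1 : 1 ≤ N := by omega
  have hlogpow : ∀ x : ℕ, 1 ≤ x → x ^ s ≤ N → s * Real.log x ≤ Real.log N := by
    intro x hx h
    rw [← Real.log_pow]
    apply Real.log_le_log
    · have : (0:ℝ) < x := by exact_mod_cast hx
      positivity
    · exact_mod_cast h
  have hl1 := hlogpow Y (by omega) hsN
  have hl2 := hlogpow M (by omega) hMs
  have hsr : (2:ℝ) ≤ s := by exact_mod_cast hs
  have hA0 : (0:ℝ) ≤ A := Nat.cast_nonneg _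
  have hlN : 0 < Real.log N := by nlinarith
  set η := 4 * ((A:ℝ) + 1) * s / Real.log N with hη
  have hη0 : 0 ≤ η := by positivity
  have hη4 : η ≤ 1 / 4 := by
    rw [hη, div_le_iff₀ hlN]
    nlinarith
  have hηM : η * Real.log M ≤ 4 * ((A:ℝ) + 1) := by
    rw [hη, div_mul_eq_mul_div, div_le_iff₀ hlN]
    nlinarith
  have h1 := hM M (hY.trans hYM) η hη0 hη4 hηM F (fun d hd => mem_factored
    (fun p hp hpd => hpM p ((hF d hd).2 p hp hpd))
    (by rintro rfl; have := (hF 0 hd).1; simp at this))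
  refine (shift_le g hN1 hη0 F (fun d hd => (hF d hd).1)).trans ?_
  have e : (N:ℝ) ^ (-(η / 4)) = Real.exp (-((A:ℝ) + 1) * s) := by
    rw [Real.rpow_def_of_pos (by exact_mod_cast hN1)]
    congr 1
    rw [hη]
    field_simp
  rw [e]
  apply mul_le_mul_of_nonneg_left _ (Real.exp_pos _).le
  refine h1.trans ?_
  apply mul_le_mul_of_nonneg_left _ hK.le
  apply Real.log_le_log
  · have : 0 < M := by omega
    exact_mod_cast this
  · exact_mod_cast (Nat.le_self_pow hs0 M).trans hMs

theorem main_nat (g : ℤ[X]) (hirr : Irreducible g) (hdeg : 1 ≤ g.natDegree) :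
    ∃ C : ℝ, 0 ≤ C ∧ ∃ N0 : ℕ, 2 ≤ N0 ∧ ∀ N : ℕ, N0 ≤ N →
      ∑ k ∈ (Finset.Icc 1 N).filter (fun k : ℕ => g.eval (k:ℤ) ≠ 0),
        ((g.eval (k:ℤ)).natAbs.divisors.card : ℝ) ≤ C * (N * Real.log N) := by
  classical
  obtain ⟨u, v, D, hD, hbez, hlD⟩ := exists_bezout hirr hdeg
  set B : ℝ := ((max g.natDegree (D.natAbs ^ 3) : ℕ) : ℝ) with hBdef
  have hB0 : 0 ≤ B := Nat.cast_nonneg _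
  have hB : ∀ p j : ℕ, p.Prime → 1 ≤ j → (rho g (p ^ j) : ℝ) ≤ B := by
    intro p j hp hj
    rw [hBdef]
    exact Nat.cast_le.2 (rho_pow_le hD hbez hlD hp hj)
  obtain ⟨G, hG⟩ := eval_bound g
  set A := g.natDegree + 1 with hA
  have hApos : (0:ℝ) < A := by exact_mod_cast Nat.succ_pos _
  obtain ⟨K, hK, M0, hM0, hM⟩ := lemmaM hirr hdeg hB0 hB (4 * ((A:ℝ) + 1)) (by positivity)
  obtain ⟨Y1, hY1⟩ := exists_nat_ge (Real.exp (16 * ((A:ℝ) + 1)))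
  set Y := max M0 Y1 with hYdef
  have hYM : M0 ≤ Y := le_max_left _ _
  have hY2 : 16 * ((A:ℝ) + 1) ≤ Real.log Y := by
    rw [Real.le_log_iff_exp_le]
    · refine hY1.trans ?_
      exact_mod_cast le_max_right M0 Y1
    · have : 0 < Y := by omega
      exact_mod_cast this
  obtain ⟨Ct, hCt, htau⟩ := tau_bound (ε := 1 / (16 * A)) (by positivity)
  set K3 := Real.exp (∑ p ∈ (Finset.Icc 1 Y).filter Nat.Prime,
        ((rho g p : ℝ) * (p:ℝ) ^ ((1/4 : ℝ) - 1) + 3 * B * (p:ℝ) ^ (-(3/2) : ℝ))) with hK3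
  have hK30 : 0 < K3 := Real.exp_pos _
  have hgeo : Summable (fun s : ℕ => Real.exp (-(s:ℝ))) := Real.summable_exp_neg_nat
  set W := ∑' s : ℕ, Real.exp (-(s:ℝ)) with hW
  have hW0 : 0 ≤ W := tsum_nonneg (fun _ => (Real.exp_pos _).le)
  refine ⟨2 * (4 ^ A * K + 2 * 2 ^ A * W * K + Ct * K3), by positivity,
    max (max M0 G) 3, by omega, ?_⟩
  intro N hN
  have hNM : M0 ≤ N := by omega
  have hNG : G ≤ N := by omega
  have hN3 : 3 ≤ N := by omega
  have hN0 : (0:ℝ) < N := by have : 0 < N := by omega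
                             exact_mod_cast this
  have hlN : 1 ≤ Real.log N := by
    rw [Real.le_log_iff_exp_le hN0]
    have : (3:ℝ) ≤ N := by exact_mod_cast hN3
    linarith [Real.exp_one_lt_d9]
  set S := (Finset.Icc 1 N).filter (fun k : ℕ => g.eval (k:ℤ) ≠ 0) with hS
  have hSsub : S ⊆ Finset.Icc 1 N := Finset.filter_subset _ _
  set P2 : ℕ → ℕ → Prop := fun s d => N < d ^ 4 ∧ ∀ p : ℕ, p.Prime → p ∣ d → p ^ s ≤ N with hP2
  set P3 : ℕ → Prop := fun d => N < d ^ 4 ∧ ∀ p : ℕ, p.Prime → p ∣ d → p ≤ Y with hP3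
  set SS := (Finset.Icc 2 N).filter (fun s => Y ^ s ≤ N) with hSS
  -- pointwise bound
  have hpt : ∀ k ∈ S, ((g.eval (k:ℤ)).natAbs.divisors.card : ℝ) ≤
      4 ^ A * (cnt N (g.eval (k:ℤ)).natAbs (fun _ => True) : ℝ) +
      ∑ s ∈ SS, 2 * 2 ^ (A * (s + 1)) * (cnt N (g.eval (k:ℤ)).natAbs (P2 s) : ℝ) +
      Ct * (N:ℝ) ^ (1 / 16 : ℝ) * (cnt N (g.eval (k:ℤ)).natAbs P3 : ℝ) := by
    intro k hk
    obtain ⟨hk1, hk2⟩ := Finset.mem_filter.1 hk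
    rw [Finset.mem_Icc] at hk1
    have hm0 : (g.eval (k:ℤ)).natAbs ≠ 0 := Int.natAbs_ne_zero.2 hk2
    have hmN := hG N k hNG hk1.1 hk1.2
    have h1 := comb (Y := Y) (show 2 ≤ N by omega) hm0 hmN
    set m := (g.eval (k:ℤ)).natAbs
    have h2 : (m.divisors.card : ℝ) ≤ Ct * (N:ℝ) ^ (1 / 16 : ℝ) := by
      refine (htau m hm0).trans ?_
      apply mul_le_mul_of_nonneg_left _ hCt.le
      calc (m:ℝ) ^ (1 / (16 * (A:ℝ))) ≤ ((N:ℝ) ^ A) ^ (1 / (16 * (A:ℝ))) :=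
            Real.rpow_le_rpow (Nat.cast_nonneg _) (by exact_mod_cast hmN) (by positivity)
        _ = _ := by
            rw [← Real.rpow_natCast, ← Real.rpow_mul hN0.le]
            congr 1
            field_simp
    have h3 : (m.divisors.card : ℝ) ≤ 4 ^ A * (cnt N m (fun _ => True) : ℝ) +
        ∑ s ∈ SS, 2 * 2 ^ (A * (s + 1)) * (cnt N m (P2 s) : ℝ) +
        m.divisors.card * (cnt N m P3 : ℝ) := by exact_mod_cast h1
    refine h3.trans ?_
    have := mul_le_mul_of_nonneg_right h2 (Nat.cast_nonneg (cnt N m P3))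
    linarith
  refine (Finset.sum_le_sum hpt).trans ?_
  rw [Finset.sum_add_distrib, Finset.sum_add_distrib, Finset.sum_comm, ← Finset.mul_sum,
    ← Finset.mul_sum]
  simp only [← Finset.mul_sum]
  -- type one
  have t1 : ∑ k ∈ S, (cnt N (g.eval (k:ℤ)).natAbs (fun _ => True) : ℝ) ≤
      2 * N * (K * Real.log N) := by
    refine (sum_cnt_le g N (fun _ => True) S hSsub).trans ?_
    apply mul_le_mul_of_nonneg_left _ (by positivity)
    have := hM N hNM 0 le_rfl (by norm_num) (by rw [zero_mul]; positivity)
      ((Finset.Icc 1 N).filter (fun _ => True)) (by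
        intro d hd
        have hd' := Finset.mem_Icc.1 (Finset.mem_filter.1 hd).1
        exact mem_factored (fun p _ hpd => (Nat.le_of_dvd hd'.1 hpd).trans hd'.2) (by omega))
    refine le_trans (le_of_eq ?_) this
    apply Finset.sum_congr rfl
    intro d _
    rw [zero_sub, Real.rpow_neg_one, div_eq_mul_inv]
  -- type two
  have t2 : ∑ s ∈ SS, 2 * 2 ^ (A * (s + 1)) * ∑ k ∈ S, (cnt N (g.eval (k:ℤ)).natAbs (P2 s) : ℝ) ≤
      2 * N * (2 * 2 ^ A * W * (K * Real.log N)) := by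
    calc _ ≤ ∑ s ∈ SS, (2 * N * (2 * 2 ^ A * (K * Real.log N))) * Real.exp (-(s:ℝ)) := by
          apply Finset.sum_le_sum
          intro s hs
          obtain ⟨hs1, hs2⟩ := Finset.mem_filter.1 hs
          rw [Finset.mem_Icc] at hs1
          have h1 := level_bound hK hM0 hM hYM hY2 hs1.1 hs2 ((Finset.Icc 1 N).filter (P2 s))
            (fun d hd => (Finset.mem_filter.1 hd).2)
          have h2 := (sum_cnt_le g N (P2 s) S hSsub).trans
            (mul_le_mul_of_nonneg_left h1 (by positivity))
          have h3 : (2:ℝ) ^ (A * s) * Real.exp (-((A:ℝ) + 1) * s) ≤ Real.exp (-(s:ℝ)) := by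
            have h4 : (2:ℝ) ^ (A * s) ≤ Real.exp ((A:ℝ) * s) := by
              calc (2:ℝ) ^ (A * s) ≤ Real.exp 1 ^ (A * s) :=
                    pow_le_pow_left₀ (by norm_num) (by linarith [Real.exp_one_gt_d9]) _
                _ = _ := by rw [← Real.exp_nat_mul]; push_cast; rw [mul_one]
            calc _ ≤ Real.exp ((A:ℝ) * s) * Real.exp (-((A:ℝ) + 1) * s) := by gcongr
              _ = _ := by rw [← Real.exp_add]; congr 1; ring
          calc _ ≤ 2 * 2 ^ (A * (s + 1)) *
                (2 * N * (Real.exp (-((A:ℝ) + 1) * s) * (K * Real.log N))) :=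
                mul_le_mul_of_nonneg_left h2 (by positivity)
            _ = (2 * N * (2 * 2 ^ A * (K * Real.log N))) *
                ((2:ℝ) ^ (A * s) * Real.exp (-((A:ℝ) + 1) * s)) := by
                rw [mul_add, pow_add, mul_one]; ring
            _ ≤ _ := mul_le_mul_of_nonneg_left h3 (by positivity)
      _ = (2 * N * (2 * 2 ^ A * (K * Real.log N))) * ∑ s ∈ SS, Real.exp (-(s:ℝ)) := by
          rw [Finset.mul_sum]
      _ ≤ (2 * N * (2 * 2 ^ A * (K * Real.log N))) * W := by
          apply mul_le_mul_of_nonneg_left _ (by positivity)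
          exact hgeo.sum_le_tsum _ (fun _ _ => (Real.exp_pos _).le)
      _ = _ := by ring
  -- type three
  have t3 : Ct * (N:ℝ) ^ (1 / 16 : ℝ) * ∑ k ∈ S, (cnt N (g.eval (k:ℤ)).natAbs P3 : ℝ) ≤
      2 * N * (Ct * K3 * Real.log N) := by
    have h1 := sum_cnt_le g N P3 S hSsub
    have h2 := shift_le g (show 1 ≤ N by omega) (η := 1 / 4) (by norm_num)
      ((Finset.Icc 1 N).filter P3) (fun d hd => (Finset.mem_filter.1 hd).2.1)
    have h3 := euler_le hB0 hB (η := 1 / 4) le_rfl Y ((Finset.Icc 1 N).filter P3) (by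
      intro d hd
      obtain ⟨hd1, hd2⟩ := Finset.mem_filter.1 hd
      have := (Finset.mem_Icc.1 hd1).1
      exact mem_factored hd2.2 (by omega))
    rw [← hK3] at h3
    have h4 : ∑ d ∈ (Finset.Icc 1 N).filter P3, (rho g d : ℝ) / d ≤
        (N:ℝ) ^ (-(1 / 16 : ℝ)) * K3 := by
      refine h2.trans ?_
      rw [show -((1/4 : ℝ) / 4) = -(1/16) by norm_num]
      exact mul_le_mul_of_nonneg_left h3 (by positivity)
    have h5 := h1.trans (mul_le_mul_of_nonneg_left h4 (by positivity))
    have h6 : (N:ℝ) ^ (1 / 16 : ℝ) * (N:ℝ) ^ (-(1 / 16 : ℝ)) = 1 := by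
      rw [← Real.rpow_add hN0]; simp
    calc _ ≤ Ct * (N:ℝ) ^ (1 / 16 : ℝ) * (2 * N * ((N:ℝ) ^ (-(1 / 16 : ℝ)) * K3)) :=
          mul_le_mul_of_nonneg_left h5 (by positivity)
      _ = 2 * N * (Ct * K3 * 1) * ((N:ℝ) ^ (1 / 16 : ℝ) * (N:ℝ) ^ (-(1 / 16 : ℝ))) := by ring
      _ = 2 * N * (Ct * K3 * 1) := by rw [h6, mul_one]
      _ ≤ _ := by gcongr
  have t1' := mul_le_mul_of_nonneg_left t1 (show (0:ℝ) ≤ 4 ^ A by positivity)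
  calc _ ≤ _ := add_le_add (add_le_add t1' t2) t3
    _ = _ := by ring

theorem main_real (g : ℤ[X]) (hirr : Irreducible g) (hdeg : 1 ≤ g.natDegree) :
    ∃ Cg : ℝ, ∀ x : ℝ, 2 ≤ x →
      (∑ k ∈ (Finset.Icc 1 ⌊x⌋₊).filter (fun k : ℕ => g.eval (k:ℤ) ≠ 0),
          (((g.eval (k:ℤ)).natAbs.divisors.card : ℝ)))
        ≤ Cg * x * Real.log x := by
  obtain ⟨C, hC, N0, hN0, h⟩ := main_nat g hirr hdeg
  have hN0r : (2:ℝ) ≤ N0 := by exact_mod_cast hN0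
  have hl2 : 0 < Real.log 2 := Real.log_pos one_lt_two
  set R := C * (N0 * Real.log N0) with hR
  have hR0 : 0 ≤ R := by
    have : 0 ≤ Real.log N0 := Real.log_natCast_nonneg _
    positivity
  refine ⟨C + R / (2 * Real.log 2), ?_⟩
  intro x hx
  have hlx : Real.log 2 ≤ Real.log x := Real.log_le_log (by norm_num) hx
  have hlx0 : 0 < Real.log x := by linarith
  have hfl : (⌊x⌋₊ : ℝ) ≤ x := Nat.floor_le (by linarith)
  have hRx : R ≤ R / (2 * Real.log 2) * x * Real.log x := by
    have : 2 * Real.log 2 ≤ x * Real.log x := by gcongr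
    calc R = R / (2 * Real.log 2) * (2 * Real.log 2) := by field_simp
      _ ≤ R / (2 * Real.log 2) * (x * Real.log x) := by gcongr
      _ = _ := by ring
  rcases le_total N0 ⌊x⌋₊ with hc | hc
  · refine (h _ hc).trans ?_
    have hf2 : (0:ℝ) < ⌊x⌋₊ := by
      have : 0 < ⌊x⌋₊ := by omega
      exact_mod_cast this
    have : C * (⌊x⌋₊ * Real.log ⌊x⌋₊) ≤ C * (x * Real.log x) := by
      have : Real.log ⌊x⌋₊ ≤ Real.log x := Real.log_le_log hf2 hfl
      have : 0 ≤ Real.log ⌊x⌋₊ := Real.log_natCast_nonneg _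
      gcongr
    nlinarith
  · have h1 : ∑ k ∈ (Finset.Icc 1 ⌊x⌋₊).filter (fun k : ℕ => g.eval (k:ℤ) ≠ 0),
          (((g.eval (k:ℤ)).natAbs.divisors.card : ℝ)) ≤ R := by
      refine le_trans ?_ (h N0 le_rfl)
      apply Finset.sum_le_sum_of_subset_of_nonneg
      · exact Finset.filter_subset_filter _ (Finset.Icc_subset_Icc_right hc)
      · intro _ _ _; positivity
    have : 0 ≤ C * x * Real.log x := by positivity
    nlinarith

end ErdosDiv

open scoped BigOperators Classical

noncomputable section

/-- **Erdős' theorem on divisors of polynomial values.**  For any irreducible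
polynomial `g ∈ ℤ[x]` of degree at least `1` there is a constant `C_g` such that for
all `x ≥ 2` one has `∑_{1 ≤ k ≤ x, g(k) ≠ 0} τ(|g(k)|) ≤ C_g · x · log x`, where
`τ(n)` is the number of positive divisors of `n`. -/
theorem stmt9 (g : Polynomial ℤ) (hirr : Irreducible g) (hdeg : 1 ≤ g.natDegree) :
    ∃ Cg : ℝ, ∀ x : ℝ, 2 ≤ x →
      (∑ k ∈ (Finset.Icc (1 : ℤ) ⌊x⌋).filter (fun k => g.eval k ≠ 0),
          (((g.eval k).natAbs.divisors.card : ℝ)))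
        ≤ Cg * x * Real.log x := by
  obtain ⟨C, hC⟩ := ErdosDiv.main_real g hirr hdeg
  refine ⟨C, fun x hx => le_trans (le_of_eq ?_) (hC x hx)⟩
  have hfl : ((⌊x⌋₊ : ℕ) : ℤ) = ⌊x⌋ := Int.natCast_floor_eq_floor (by linarith)
  refine Finset.sum_nbij' Int.toNat (fun k : ℕ => (k : ℤ)) ?_ ?_ ?_ ?_ ?_
  · intro k hk
    obtain ⟨h1, h2⟩ := Finset.mem_filter.1 hk
    rw [Finset.mem_Icc] at h1
    have h3 : ((k.toNat : ℕ) : ℤ) = k := Int.toNat_of_nonneg (by omega)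
    refine Finset.mem_filter.2 ⟨Finset.mem_Icc.2 ⟨by omega, by omega⟩, ?_⟩
    rw [h3]; exact h2
  · intro k hk
    obtain ⟨h1, h2⟩ := Finset.mem_filter.1 hk
    rw [Finset.mem_Icc] at h1
    exact Finset.mem_filter.2 ⟨Finset.mem_Icc.2 ⟨by omega, by omega⟩, h2⟩
  · intro k hk
    have h1 := Finset.mem_Icc.1 (Finset.mem_filter.1 hk).1
    exact Int.toNat_of_nonneg (by omega)
  · intro k _
    exact Int.toNat_natCast k
  · intro k hk
    have h1 := Finset.mem_Icc.1 (Finset.mem_filter.1 hk).1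
    have h3 : ((k.toNat : ℕ) : ℤ) = k := Int.toNat_of_nonneg (by omega)
    rw [h3]

end
end

section
/- Let (I_p) be the polynomial sieving system of f and F the associated difference-root polynomial. For every nonzero integer v, every prime p with v mod p ∈ I_p − I_p divides F(v); consequently N(v) ≤ ω(F(v)), and there is a constant C_f such that N(v) ≤ C_f(log|v| + 1) for all nonzero integers v. In particular, hypothesis (f) holds: N(v) ≪ v^{0.49} for all v ≥ 1. -/
open scoped BigOperators Pointwise Classical

noncomputable section

/-- The set of primes `p` such that `v mod p ∈ I_p - I_p`; `N(v)` is its cardinality. -/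
def Nset (I : ∀ p : ℕ, Finset (ZMod p)) (v : ℤ) : Set ℕ :=
  {p : ℕ | p.Prime ∧ (v : ZMod p) ∈ (I p - I p)}

open Polynomial in
lemma aux_lift (f : ℚ[X]) (t : ℕ) (htf : ∀ n : ℕ, ∃ m : ℤ, (t : ℚ) * f.coeff n = (m : ℚ)) :
    ∃ g : ℤ[X], g.map (Int.castRingHom ℚ) = C (t : ℚ) * f := by
  have : C (t : ℚ) * f ∈ lifts (Int.castRingHom ℚ) := by
    rw [lifts_iff_coeff_lifts]
    intro n
    obtain ⟨m, hm⟩ := htf n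
    exact ⟨m, by simp [hm]⟩
  exact (mem_lifts _).1 this

open Polynomial in
lemma aux_res (g : ℤ[X]) (d : ℕ) (hd1 : 1 ≤ d) (hdeg : g.natDegree = d) (c : ℂ)
    (hc : c = (g.leadingCoeff : ℂ)) (hc0 : c ≠ 0)
    (r : Fin d → ℂ)
    (hroots : g.map (Int.castRingHom ℂ) = C c * ∏ i : Fin d, (X - C (r i))) (v : ℤ) :
    ∃ R : ℤ, (R : ℂ) = c ^ (d ^ 2 + d) * ∏ ij : Fin d × Fin d, ((v : ℂ) - (r ij.1 - r ij.2)) ∧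
      ∀ (p : ℤ) (m : ℤ), p ∣ g.eval m → p ∣ g.eval (m + v) → p ∣ R := by
  set h : ℤ[X] := g.comp (X + C v) with hh
  have hhdeg : h.natDegree = d := by
    rw [hh, natDegree_comp, hdeg, natDegree_X_add_C, mul_one]
  have hroot : (g.map (Int.castRingHom ℂ)).roots = Finset.univ.val.map r := by
    rw [hroots, roots_C_mul _ hc0]
    have := roots_multiset_prod_X_sub_C (Finset.univ.val.map r)
    rw [Multiset.map_map] at this
    exact this
  have hsplit : (g.map (Int.castRingHom ℂ)).Splits := IsAlgClosed.splits _
  have hnd : (g.map (Int.castRingHom ℂ)).natDegree = d := by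
    rw [natDegree_map_eq_of_injective (RingHom.injective_int _), hdeg]
  have hlc : (g.map (Int.castRingHom ℂ)).leadingCoeff = c := by
    rw [leadingCoeff_map_of_injective (RingHom.injective_int _), hc]; simp
  have key := resultant_eq_prod_eval (g.map (Int.castRingHom ℂ)) (h.map (Int.castRingHom ℂ)) d
    (natDegree_map_le.trans hhdeg.le) hsplit
  rw [hnd, resultant_map_map, hroot, hlc, Multiset.map_map] at key
  have hev : ∀ z : ℂ, (h.map (Int.castRingHom ℂ)).eval z = c * ∏ i, (z + v - r i) := by
    intro z
    rw [hh, Polynomial.map_comp, hroots]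
    simp [eval_prod]
  have key2 : ((resultant g h d d : ℤ) : ℂ) = c ^ d * ∏ j, (c * ∏ i, (r j + v - r i)) := by
    rw [← eq_intCast (Int.castRingHom ℂ), key]
    congr 1
    simp only [Function.comp_def, hev]
    rfl
  refine ⟨g.leadingCoeff ^ (d ^ 2 - d) * resultant g h d d, ?_, ?_⟩
  · push_cast
    rw [key2, ← hc, Finset.prod_mul_distrib, Fintype.prod_prod_type_right]
    have e : d ^ 2 + d = (d ^ 2 - d) + d + d := by
      have : d ≤ d ^ 2 := Nat.le_self_pow (by norm_num) d
      omega
    rw [e, pow_add, pow_add]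
    simp only [Finset.prod_const, Finset.card_univ, Fintype.card_fin]
    have : ∀ i j, (v : ℂ) - (r i - r j) = r j + v - r i := by intros; ring
    simp only [this]
    ring
  · intro p m h1 h2
    obtain ⟨a, b, -, -, hab⟩ := exists_mul_add_mul_eq_C_resultant g h hdeg.le hhdeg.le
      (Or.inl (by omega))
    have := congrArg (eval m) hab
    rw [eval_add, eval_mul, eval_mul, eval_C, hh, eval_comp] at this
    simp only [eval_add, eval_X, eval_C] at this
    rw [← hh] at this
    rw [← this]
    exact ((h1.mul_right _).add (h2.mul_right _)).mul_left _

open Polynomial in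
lemma aux_ne (f : ℚ[X]) (hirr : Irreducible f) (z : ℂ) (v : ℤ) (hv : v ≠ 0)
    (h1 : aeval z f = 0) (h2 : aeval (z + v) f = 0) : False := by
  have hdvd : f ∣ f.comp (X + C (v : ℚ)) := by
    have e := minpoly.eq_of_irreducible hirr h1
    refine (Dvd.intro _ e).trans (minpoly.dvd ℚ z ?_)
    rw [aeval_comp]
    simpa using h2
  obtain ⟨u, hu⟩ := hdvd
  have step : ∀ w : ℂ, aeval w f = 0 → aeval (w + v) f = 0 := by
    intro w hw
    have := congrArg (aeval w) hu
    rw [aeval_comp, map_mul, hw] at this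
    simpa using this
  have all : ∀ n : ℕ, aeval (z + n * v) f = 0 := by
    intro n
    induction n with
    | zero => simpa using h1
    | succ k ih =>
      have := step _ ih
      rw [← this]; push_cast; ring_nf
  have hfin := (f.rootSet_finite ℂ)
  refine Set.infinite_of_injective_forall_mem (f := fun n : ℕ => z + n * (v : ℂ)) ?_ ?_ hfin
  · intro a b hab
    have hv' : (v : ℂ) ≠ 0 := by exact_mod_cast hv
    simpa [hv'] using hab
  · intro n
    exact (mem_rootSet_of_ne hirr.ne_zero).2 (all n)

lemma aux_omega (n : ℕ) (hn : n ≠ 0) :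
    (n.primeFactors.card : ℝ) * Real.log 2 ≤ Real.log n := by
  have h : 2 ^ n.primeFactors.card ≤ n := by
    calc 2 ^ n.primeFactors.card ≤ ∏ p ∈ n.primeFactors, p :=
          Finset.pow_card_le_prod _ _ _ (fun p hp => (Nat.prime_of_mem_primeFactors hp).two_le)
      _ ≤ n := Nat.le_of_dvd (Nat.pos_of_ne_zero hn) (Nat.prod_primeFactors_dvd n)
  have h' : (2 : ℝ) ^ n.primeFactors.card ≤ n := by exact_mod_cast h
  have := Real.log_le_log (by positivity) h'
  rwa [Real.log_pow] at this

lemma aux_bound (d : ℕ) (c : ℂ) (r : Fin d → ℂ) :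
    ∃ K : ℝ, 1 ≤ K ∧ ∀ v : ℤ, v ≠ 0 →
      ‖c ^ (d ^ 2 + d) * ∏ ij : Fin d × Fin d, ((v : ℂ) - (r ij.1 - r ij.2))‖
        ≤ K * |(v : ℝ)| ^ (d ^ 2) := by
  refine ⟨1 + ‖c‖ ^ (d ^ 2 + d) * ∏ ij : Fin d × Fin d, (1 + ‖r ij.1 - r ij.2‖),
    le_add_of_nonneg_right (by positivity), ?_⟩
  intro v hv
  have hv1 : 1 ≤ |(v : ℝ)| := by exact_mod_cast Int.one_le_abs hv
  rw [norm_mul, norm_pow, norm_prod]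
  have : ∏ ij : Fin d × Fin d, ‖(v : ℂ) - (r ij.1 - r ij.2)‖
      ≤ ∏ ij : Fin d × Fin d, ((1 + ‖r ij.1 - r ij.2‖) * |(v : ℝ)|) := by
    apply Finset.prod_le_prod
    · intros; positivity
    · intro ij _
      have h1 := norm_sub_le (v : ℂ) (r ij.1 - r ij.2)
      have h2 : ‖(v : ℂ)‖ = |(v : ℝ)| := Complex.norm_intCast v
      nlinarith [norm_nonneg (r ij.1 - r ij.2)]
  rw [Finset.prod_mul_distrib] at this
  simp only [Finset.prod_const, Finset.card_univ, Fintype.card_prod, Fintype.card_fin, ← sq] at this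
  calc _ ≤ ‖c‖ ^ (d ^ 2 + d) * ((∏ ij : Fin d × Fin d, (1 + ‖r ij.1 - r ij.2‖))
            * |(v : ℝ)| ^ (d ^ 2)) := by gcongr
    _ ≤ _ := by
      have : 0 ≤ |(v : ℝ)| ^ (d ^ 2) := by positivity
      nlinarith

/-- **Hypothesis (f) for polynomial sieving systems.**  Every prime `p` with
`v mod p ∈ I_p - I_p` divides the integer `F(v)`; consequently `N(v) ≤ ω(F(v))`,
`N(v) ≤ C_f (log|v| + 1)` and in particular `N(v) ≪ v^{0.49}` for `v ≥ 1`. -/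
theorem stmt14 (f : Polynomial ℚ) (d : ℕ) (hdeg : f.natDegree = d) (hd1 : 1 ≤ d)
    (hint : ∀ n : ℤ, ∃ m : ℤ, f.eval (n : ℚ) = (m : ℚ))
    (hlead : 0 < f.leadingCoeff)
    (hirr : Irreducible f)
    -- `t` is the minimal positive integer with `t·f ∈ ℤ[x]`
    (t : ℕ) (ht : 0 < t)
    (htf : ∀ n : ℕ, ∃ m : ℤ, (t : ℚ) * f.coeff n = (m : ℚ))
    (htmin : ∀ t' : ℕ, 0 < t' → (∀ n : ℕ, ∃ m : ℤ, (t' : ℚ) * f.coeff n = (m : ℚ)) → t ≤ t')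
    -- `c` is the leading coefficient of `f̃ = t·f` and `r 0, …, r (d-1)` its complex roots
    (c : ℂ) (hc : c = (t : ℂ) * (f.map (algebraMap ℚ ℂ)).leadingCoeff)
    (r : Fin d → ℂ)
    (hroots : (Polynomial.C (t : ℚ) * f).map (algebraMap ℚ ℂ)
      = Polynomial.C c * ∏ i : Fin d, (Polynomial.X - Polynomial.C (r i)))
    -- `F(x) = c^{d²+d} ∏_{1 ≤ i,j ≤ d} (x - (r_i - r_j))`
    (F : Polynomial ℂ)
    (hF : F = Polynomial.C (c ^ (d ^ 2 + d)) *
      ∏ ij : Fin d × Fin d, (Polynomial.X - Polynomial.C (r ij.1 - r ij.2)))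
    -- the polynomial sieving system of `f`
    (I : ∀ p : ℕ, Finset (ZMod p))
    (hI : ∀ p : ℕ, p.Prime →
      (p ≤ d → I p = ∅) ∧
      (d < p → ∀ nres : ZMod p, nres ∈ I p ↔
        ∃ m : ℤ, ((m : ZMod p) = nres ∧ ∀ v : ℤ, (v : ℚ) = f.eval (m : ℚ) → (p : ℤ) ∣ v)))
    :
    ∃ Cf : ℝ, 0 < Cf ∧
      (∀ v : ℤ, v ≠ 0 →
        (∀ p : ℕ, p.Prime → (v : ZMod p) ∈ (I p - I p) →
          ∀ vF : ℤ, (vF : ℂ) = F.eval ((v : ℤ) : ℂ) → (p : ℤ) ∣ vF) ∧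
        (Nset I v).Finite ∧
        (∀ vF : ℤ, (vF : ℂ) = F.eval ((v : ℤ) : ℂ) →
          (Nset I v).ncard ≤ vF.natAbs.primeFactors.card) ∧
        ((Nset I v).ncard : ℝ) ≤ Cf * (Real.log |(v : ℝ)| + 1)) ∧
      (∀ v : ℤ, 1 ≤ v → ((Nset I v).ncard : ℝ) ≤ Cf * (v : ℝ) ^ (0.49 : ℝ)) := by
  obtain ⟨g, hg⟩ := aux_lift f t htf
  have ht0 : (t : ℚ) ≠ 0 := by exact_mod_cast ht.ne'
  have hgdeg : g.natDegree = d := by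
    rw [← Polynomial.natDegree_map_eq_of_injective (RingHom.injective_int (Int.castRingHom ℚ)) g,
      hg, Polynomial.natDegree_C_mul ht0, hdeg]
  have hgmap : g.map (Int.castRingHom ℂ)
      = Polynomial.C c * ∏ i : Fin d, (Polynomial.X - Polynomial.C (r i)) := by
    rw [← hroots, ← hg, Polynomial.map_map]
    congr 1
  have hcg : c = (g.leadingCoeff : ℂ) := by
    have h1 : ((g.leadingCoeff : ℤ) : ℚ) = t * f.leadingCoeff := by
      have := Polynomial.leadingCoeff_map_of_injective
        (RingHom.injective_int (Int.castRingHom ℚ)) g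
      rw [hg, Polynomial.leadingCoeff_mul, Polynomial.leadingCoeff_C] at this
      rw [this]; simp
    rw [hc, Polynomial.leadingCoeff_map]
    have := congrArg (fun q : ℚ => (q : ℂ)) h1
    simp only [Rat.cast_intCast, Rat.cast_mul, Rat.cast_natCast] at this
    rw [this]; simp
  have hg0 : g ≠ 0 := by
    rintro rfl
    simp at hgdeg; omega
  have hc0 : c ≠ 0 := by
    rw [hcg]; exact_mod_cast Polynomial.leadingCoeff_ne_zero.2 hg0
  have hFe : ∀ v : ℤ, F.eval (v : ℂ) =
      c ^ (d ^ 2 + d) * ∏ ij : Fin d × Fin d, ((v : ℂ) - (r ij.1 - r ij.2)) := by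
    intro v
    rw [hF]
    simp only [Polynomial.eval_mul, Polynomial.eval_C, Polynomial.eval_prod, Polynomial.eval_sub,
      Polynomial.eval_X]
  have hrr : ∀ i, Polynomial.aeval (r i) f = 0 := by
    intro i
    have h := congrArg (Polynomial.eval (r i)) hroots
    rw [Polynomial.eval_mul, Polynomial.eval_prod, Finset.prod_eq_zero (Finset.mem_univ i)
      (by simp), mul_zero, Polynomial.map_mul, Polynomial.eval_mul, Polynomial.map_C,
      Polynomial.eval_C] at h
    rw [Polynomial.aeval_def, ← Polynomial.eval_map]
    refine (mul_eq_zero.1 h).resolve_left ?_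
    simpa using ht.ne'
  have hFne : ∀ v : ℤ, v ≠ 0 → F.eval (v : ℂ) ≠ 0 := by
    intro v hv h
    rw [hFe] at h
    rcases mul_eq_zero.1 h with h | h
    · exact pow_ne_zero _ hc0 h
    · obtain ⟨ij, -, hij⟩ := Finset.prod_eq_zero_iff.1 h
      refine aux_ne f hirr (r ij.2) v hv (hrr _) ?_
      have : r ij.2 + v = r ij.1 := by linear_combination hij
      rw [this]; exact hrr _
  have hmem : ∀ p : ℕ, p.Prime → ∀ a : ZMod p, a ∈ I p →
      ∃ m : ℤ, (m : ZMod p) = a ∧ (p : ℤ) ∣ g.eval m := by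
    intro p hp a ha
    have hpd : d < p := by
      by_contra hcon
      rw [(hI p hp).1 (not_lt.1 hcon)] at ha
      simp at ha
    obtain ⟨m, hm, hdv⟩ := ((hI p hp).2 hpd a).1 ha
    obtain ⟨k, hk⟩ := hint m
    refine ⟨m, hm, ?_⟩
    have e : g.eval m = t * k := by
      have h1 : ((g.eval m : ℤ) : ℚ) = (g.map (Int.castRingHom ℚ)).eval (m : ℚ) := by
        rw [Polynomial.eval_intCast_map]; simp
      rw [hg, Polynomial.eval_mul, Polynomial.eval_C, hk] at h1
      exact_mod_cast h1
    rw [e]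
    exact (hdv k hk.symm).mul_left _
  have hdvd : ∀ v : ℤ, ∀ p : ℕ, p.Prime → (v : ZMod p) ∈ (I p - I p) →
      ∀ vF : ℤ, (vF : ℂ) = F.eval ((v : ℤ) : ℂ) → (p : ℤ) ∣ vF := by
    intro v p hp hv vF hvF
    obtain ⟨R, hR, hRd⟩ := aux_res g d hd1 hgdeg c hcg hc0 r hgmap v
    have : vF = R := by
      have : (vF : ℂ) = R := by rw [hvF, hFe, hR]
      exact_mod_cast this
    rw [this]
    obtain ⟨a, ha, b, hb, hab⟩ := Finset.mem_sub.1 hv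
    obtain ⟨m, hm, hpm⟩ := hmem p hp a ha
    obtain ⟨n, hn, hpn⟩ := hmem p hp b hb
    refine hRd p n hpn ?_
    have hz : ((m - (n + v) : ℤ) : ZMod p) = 0 := by
      push_cast
      rw [hm, hn, ← hab]; ring
    have h1 : (p : ℤ) ∣ m - (n + v) := (ZMod.intCast_zmod_eq_zero_iff_dvd _ p).1 hz
    have h2 := h1.trans (Polynomial.sub_dvd_eval_sub m (n + v) g)
    exact (dvd_sub_right hpm).1 h2
  have hex : ∀ v : ℤ, ∃ R : ℤ, (R : ℂ) = F.eval ((v : ℤ) : ℂ) := by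
    intro v
    obtain ⟨R, hR, -⟩ := aux_res g d hd1 hgdeg c hcg hc0 r hgmap v
    exact ⟨R, by rw [hR, hFe]⟩
  have hsub : ∀ v : ℤ, v ≠ 0 → ∀ vF : ℤ, (vF : ℂ) = F.eval ((v : ℤ) : ℂ) →
      vF ≠ 0 ∧ Nset I v ⊆ (vF.natAbs.primeFactors : Set ℕ) := by
    intro v hv vF hvF
    have h0 : vF ≠ 0 := by
      rintro rfl
      exact hFne v hv (by rw [← hvF]; simp)
    refine ⟨h0, ?_⟩
    rintro p ⟨hp, hpv⟩
    have := hdvd v p hp hpv vF hvF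
    simp only [Finset.mem_coe, Nat.mem_primeFactors]
    exact ⟨hp, Int.natCast_dvd.1 this, by simpa using h0⟩
  have hcard : ∀ v : ℤ, v ≠ 0 → ∀ vF : ℤ, (vF : ℂ) = F.eval ((v : ℤ) : ℂ) →
      (Nset I v).ncard ≤ vF.natAbs.primeFactors.card := by
    intro v hv vF hvF
    have := Set.ncard_le_ncard (hsub v hv vF hvF).2 (Finset.finite_toSet _)
    rwa [Set.ncard_coe_finset] at this
  obtain ⟨K, hK1, hK⟩ := aux_bound d c r
  have hl2 : 0 < Real.log 2 := Real.log_pos (by norm_num)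
  have hKl : 0 ≤ Real.log K := Real.log_nonneg hK1
  set C1 : ℝ := (Real.log K + (d : ℝ) ^ 2 + 1) / Real.log 2 with hC1
  have hC1pos : 0 < C1 := by positivity
  have hlogv : ∀ v : ℤ, v ≠ 0 → 0 ≤ Real.log |(v : ℝ)| := by
    intro v hv
    apply Real.log_nonneg
    exact_mod_cast Int.one_le_abs hv
  have hmain : ∀ v : ℤ, v ≠ 0 → ((Nset I v).ncard : ℝ) ≤ C1 * (Real.log |(v : ℝ)| + 1) := by
    intro v hv
    obtain ⟨R, hR⟩ := hex v
    have h1 := hcard v hv R hR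
    have hR0 := (hsub v hv R hR).1
    have h2 := aux_omega R.natAbs (by simpa using hR0)
    have h3 : (R.natAbs : ℝ) ≤ K * |(v : ℝ)| ^ (d ^ 2) := by
      have h := hK v hv
      rw [← hFe, ← hR, Complex.norm_intCast] at h
      rwa [Nat.cast_natAbs, Int.cast_abs]
    have hvpos : (0 : ℝ) < |(v : ℝ)| := abs_pos.2 (by exact_mod_cast hv)
    have hRpos : (0 : ℝ) < R.natAbs := by
      exact_mod_cast Int.natAbs_pos.2 hR0
    have h4 := Real.log_le_log hRpos h3
    rw [Real.log_mul (by positivity) (by positivity), Real.log_pow] at h4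
    push_cast at h4
    have h5 : ((Nset I v).ncard : ℝ) ≤ (R.natAbs.primeFactors.card : ℝ) := by exact_mod_cast h1
    rw [hC1, div_mul_eq_mul_div, le_div_iff₀ hl2]
    have h6 := mul_le_mul_of_nonneg_right h5 hl2.le
    have h7 := hlogv v hv
    nlinarith [mul_nonneg hKl h7, sq_nonneg (d : ℝ)]
  refine ⟨C1 * (1 / 0.49 + 1), by positivity, ?_, ?_⟩
  · intro v hv
    obtain ⟨R, hR⟩ := hex v
    refine ⟨hdvd v, (Finset.finite_toSet _).subset (hsub v hv R hR).2, hcard v hv,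
      (hmain v hv).trans ?_⟩
    have h7 := hlogv v hv
    apply mul_le_mul_of_nonneg_right _ (by linarith)
    exact le_mul_of_one_le_right hC1pos.le (by norm_num)
  · intro v hv
    have hv0 : v ≠ 0 := by omega
    have hv1 : (1 : ℝ) ≤ v := by exact_mod_cast hv
    refine (hmain v hv0).trans ?_
    rw [mul_assoc]
    apply mul_le_mul_of_nonneg_left _ hC1pos.le
    rw [abs_of_nonneg (by linarith)]
    have h1 := Real.log_le_rpow_div (by linarith : (0 : ℝ) ≤ v) (by norm_num : (0 : ℝ) < 0.49)
    have h2 : (1 : ℝ) ≤ (v : ℝ) ^ (0.49 : ℝ) := Real.one_le_rpow hv1 (by norm_num)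
    rw [div_eq_mul_inv] at h1
    rw [one_div, add_mul, one_mul]
    linarith

end
end

section
/- The polynomial sieving system of f satisfies hypothesis (g) with c₁ = 2 and c₂ = (log 2)/d²: there is a constant C_f such that for every u ≥ 10, every choice of nonzero integers m_q with m_q mod q ∈ I_q − I_q (one for each prime q with |I_q| ≥ 1), every integer w with |w| ≤ u, and every k ≥ 1, one has #{q prime : |I_q| ≥ 1, 0 < |m_q| ≤ u, m_q + w ≠ 0, N(m_q + w) ≥ k} ≤ C_f · 2^{−k/d²} · u · (log u)². -/
open scoped BigOperators Pointwise Classical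

noncomputable section

/-- The set of primes `q` counted in Hypothesis (g). -/
def gSet (I : ∀ p : ℕ, Finset (ZMod p)) (mq : ℕ → ℤ) (u : ℝ) (w : ℤ) (k : ℕ) : Set ℕ :=
  {q : ℕ | q.Prime ∧ (I q).Nonempty ∧ 0 < |mq q| ∧ ((|mq q| : ℤ) : ℝ) ≤ u ∧
    mq q + w ≠ 0 ∧ k ≤ (Nset I (mq q + w)).ncard}

lemma fiber_card (F : Finset ℤ) (L : ℕ) (e : ℕ) (he : 0 < e)
    (hF : ∀ v ∈ F, -(L:ℤ) ≤ v ∧ v ≤ L) (hc : ∀ v ∈ F, ∀ v' ∈ F, (e:ℤ) ∣ v - v') :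
    F.card ≤ 2 * L / e + 1 := by
  have : F.card ≤ (Finset.range (2 * L / e + 1)).card := by
    apply Finset.card_le_card_of_injOn (fun v : ℤ => ((v + L) / (e:ℤ)).toNat)
    · intro v hv
      have h := hF v hv
      simp only [Finset.coe_range, Set.mem_Iio]
      have h1 : (v + L) / e ≤ (2 * L : ℤ) / e := Int.ediv_le_ediv (by exact_mod_cast he) (by linarith)
      have h2 : ((2 * L / e : ℕ) : ℤ) = (2 * L : ℤ) / e := by push_cast; rfl
      have h3 : 0 ≤ (2 * L : ℤ) / e := Int.ediv_nonneg (by positivity) (by positivity)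
      omega
    · intro v hv v' hv' h
      have a := hF v hv
      have b := hF v' hv'
      have he' : (0:ℤ) < e := by exact_mod_cast he
      have h1 : 0 ≤ (v + L) / (e:ℤ) := Int.ediv_nonneg (by linarith) he'.le
      have h2 : 0 ≤ (v' + L) / (e:ℤ) := Int.ediv_nonneg (by linarith) he'.le
      simp only at h
      have h3 : (v + L) / (e:ℤ) = (v' + L) / (e:ℤ) := by omega
      have h4 : (v + L) % (e:ℤ) = (v' + L) % (e:ℤ) := by
        apply Int.emod_eq_emod_iff_emod_sub_eq_zero.2
        apply Int.emod_eq_zero_of_dvd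
        have := hc v hv v' hv'
        convert this using 1; ring
      have h5 := Int.emod_add_mul_ediv (v + L) e
      have h6 := Int.emod_add_mul_ediv (v' + L) e
      rw [h3, h4] at h5
      linarith
  simpa using this

lemma count_res (D : ∀ p : ℕ, Finset (ZMod p)) (T : Finset ℕ) (hT : ∀ p ∈ T, p.Prime) (L : ℕ) :
    ((Finset.Icc (-(L:ℤ)) L).filter (fun v => ∀ p ∈ T, (v : ZMod p) ∈ D p)).card
      ≤ (2 * L / (∏ p ∈ T, p) + 1) * ∏ p ∈ T, (D p).card := by
  rw [← Finset.card_pi]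
  apply Finset.card_le_mul_card_image_of_maps_to (f := fun (v:ℤ) (p : ℕ) (_ : p ∈ T) => (v : ZMod p))
  · intro v hv
    simp only [Finset.mem_filter, Finset.mem_pi] at hv ⊢
    exact hv.2
  · intro b hb
    apply fiber_card
    · exact Finset.prod_pos fun p hp => (hT p hp).pos
    · intro v hv
      simp only [Finset.mem_filter, Finset.mem_Icc] at hv
      exact hv.1.1
    · intro v hv v' hv'
      simp only [Finset.mem_filter] at hv hv'
      push_cast
      apply Finset.prod_dvd_of_coprime
      · intro p hp q hq hpq
        have := (Nat.coprime_primes (hT p hp) (hT q hq)).2 hpq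
        exact Nat.isCoprime_iff_coprime.2 this
      · intro p hp
        have h := congrFun (congrFun (hv.2.trans hv'.2.symm) p) hp
        have := (ZMod.intCast_eq_intCast_iff_dvd_sub v' v p).1 h.symm
        exact this

lemma sum_log_div (N : ℕ) :
    ∑ p ∈ (Finset.range (N+1)).filter Nat.Prime, Real.log p / p ≤ 2 * Real.log N := by
  rcases Nat.eq_zero_or_pos N with rfl | hN
  · simp [Finset.sum_filter]
  set P := (Finset.range (N+1)).filter Nat.Prime with hP
  have h1 : ∀ n ∈ Finset.Ioc 0 N, ∑ p ∈ P.filter (· ∣ n), Real.log p ≤ Real.log N := by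
    intro n hn
    simp only [Finset.mem_Ioc] at hn
    rw [← Real.log_prod]
    · apply Real.log_le_log
      · apply Finset.prod_pos
        intro p hp
        simp [hP] at hp
        exact_mod_cast hp.1.2.pos
      · rw [← Nat.cast_prod]
        have : ∏ p ∈ P.filter (· ∣ n), p ≤ n := by
          apply Nat.le_of_dvd hn.1
          apply Finset.prod_primes_dvd
          · intro p hp
            simp [hP] at hp
            exact hp.1.2.prime
          · intro p hp
            simp [hP] at hp
            exact hp.2
        exact_mod_cast this.trans hn.2
    · intro p hp
      simp [hP] at hp
      exact_mod_cast hp.1.2.ne_zero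
  have h2 : ∑ n ∈ Finset.Ioc 0 N, ∑ p ∈ P.filter (· ∣ n), Real.log p ≤ N * Real.log N := by
    refine (Finset.sum_le_sum h1).trans ?_
    simp
  have h3 : ∑ n ∈ Finset.Ioc 0 N, ∑ p ∈ P.filter (· ∣ n), Real.log p
      = ∑ p ∈ P, (N / p : ℕ) * Real.log p := by
    simp_rw [Finset.sum_filter]
    rw [Finset.sum_comm]
    apply Finset.sum_congr rfl
    intro p hp
    rw [← Finset.sum_filter, Finset.sum_const, Nat.Ioc_filter_dvd_card_eq_div]
    simp
  rw [h3] at h2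
  have h4 : ∑ p ∈ P, Real.log p / p * (N / 2 : ℝ) ≤ N * Real.log N := by
    refine le_trans (Finset.sum_le_sum ?_) h2
    intro p hp
    simp [hP] at hp
    have hp0 : 0 < p := hp.2.pos
    have : (N:ℝ) / 2 ≤ p * (N / p : ℕ) := by
      have h5 := Nat.div_add_mod N p
      have h6 := Nat.mod_lt N hp0
      have h7 : 1 ≤ N / p := Nat.div_pos (by omega) hp0
      have h8 : p ≤ p * (N / p) := Nat.le_mul_of_pos_right _ h7
      have : N ≤ 2 * (p * (N / p)) := by omega
      have : (N:ℝ) ≤ 2 * (p * (N / p : ℕ)) := by exact_mod_cast this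
      linarith
    have hl : 0 ≤ Real.log p := Real.log_natCast_nonneg p
    have hp0' : (0:ℝ) < p := by exact_mod_cast hp0
    calc Real.log p / p * (N/2 : ℝ) ≤ Real.log p / p * (p * (N / p : ℕ)) := by gcongr
      _ = _ := by field_simp
  rw [← Finset.sum_mul] at h4
  have hN' : (0:ℝ) < N := by exact_mod_cast hN
  have : (N:ℝ) * (∑ p ∈ P, Real.log p / p) ≤ N * (2 * Real.log N) := by linarith
  exact le_of_mul_le_mul_left this hN'

lemma sum_inv (P : Finset ℕ) (hP : ∀ p ∈ P, p.Prime) (u : ℝ) (hu : 1 ≤ u) :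
    ∑ e ∈ P.powerset.filter (fun e => ((∏ p ∈ e, p : ℕ) : ℝ) ≤ u), ∏ q ∈ e, (1 / (q:ℝ))
      ≤ 1 + Real.log u := by
  have h1 : ∑ n ∈ Finset.Icc 1 ⌊u⌋₊, (1 / (n:ℝ)) ≤ 1 + Real.log u := by
    have := harmonic_floor_le_one_add_log u hu
    rw [harmonic_eq_sum_Icc] at this
    push_cast at this
    simpa using this
  refine le_trans ?_ h1
  have h2 : ∀ e ∈ P.powerset.filter (fun e => ((∏ p ∈ e, p : ℕ) : ℝ) ≤ u),
     ∏ q ∈ e, (1 / (q:ℝ)) = (fun n : ℕ => 1 / (n:ℝ)) (∏ p ∈ e, p) := by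
    intro e he
    simp
  have hpr : ∀ e ∈ P.powerset.filter (fun e => ((∏ p ∈ e, p : ℕ) : ℝ) ≤ u), ∀ p ∈ e, p.Prime := by
    intro e he p hp
    simp only [Finset.mem_filter, Finset.mem_powerset] at he
    exact hP p (he.1 hp)
  rw [Finset.sum_congr rfl h2]
  rw [← Finset.sum_image (f := fun n : ℕ => 1 / (n:ℝ)) (g := fun e : Finset ℕ => ∏ p ∈ e, p)]
  · apply Finset.sum_le_sum_of_subset_of_nonneg
    · intro n hn
      simp only [Finset.mem_image] at hn
      obtain ⟨e, he, rfl⟩ := hn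
      have := hpr e he
      simp only [Finset.mem_filter] at he
      rw [Finset.mem_Icc]
      exact ⟨Finset.prod_pos fun p hp => (this p hp).pos, Nat.le_floor he.2⟩
    · intros; positivity
  · intro e he e' he' h
    have h3 := congrArg Nat.primeFactors h
    simp only at h3
    rwa [Nat.primeFactors_prod (hpr e he), Nat.primeFactors_prod (hpr e' he')] at h3

lemma sum_weights (P : Finset ℕ) (hP : ∀ p ∈ P, p.Prime) (u : ℝ) (hu : 1 ≤ u) (h : ℕ → ℝ)
    (hh : ∀ p ∈ P, 0 ≤ h p) :
    ∑ e ∈ P.powerset.filter (fun e => ((∏ p ∈ e, p : ℕ) : ℝ) ≤ u), ∏ q ∈ e, ((1 + h q) / (q:ℝ))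
      ≤ Real.exp (∑ q ∈ P, h q / q) * (1 + Real.log u) := by
  set 𝓔 := P.powerset.filter (fun e => ((∏ p ∈ e, p : ℕ) : ℝ) ≤ u) with h𝓔
  have h1 : ∀ e ∈ 𝓔, ∏ q ∈ e, ((1 + h q) / (q:ℝ)) =
      ∑ t ∈ e.powerset, (∏ q ∈ t, h q / q) * ∏ q ∈ e \ t, 1 / (q:ℝ) := by
    intro e he
    rw [← Finset.prod_add]
    apply Finset.prod_congr rfl
    intros; ring
  rw [Finset.sum_congr rfl h1]
  rw [Finset.sum_comm' (t' := P.powerset) (s' := fun t => 𝓔.filter (t ⊆ ·))]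
  · have h2 : ∀ t ∈ P.powerset, ∑ e ∈ 𝓔.filter (t ⊆ ·), (∏ q ∈ t, h q / q) * ∏ q ∈ e \ t, 1 / (q:ℝ)
        ≤ (∏ q ∈ t, h q / q) * (1 + Real.log u) := by
      intro t ht
      rw [Finset.mem_powerset] at ht
      rw [← Finset.mul_sum]
      apply mul_le_mul_of_nonneg_left
      · refine le_trans ?_ (sum_inv P hP u hu)
        rw [← Finset.sum_image (f := fun e : Finset ℕ => ∏ q ∈ e, 1 / (q:ℝ)) (g := fun e => e \ t)]
        · apply Finset.sum_le_sum_of_subset_of_nonneg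
          · intro e' he'
            simp only [Finset.mem_image, h𝓔, Finset.mem_filter, Finset.mem_powerset] at he' ⊢
            obtain ⟨e, ⟨⟨he, heu⟩, hte⟩, rfl⟩ := he'
            refine ⟨Finset.sdiff_subset.trans he, le_trans ?_ heu⟩
            have : ∏ p ∈ e \ t, p ≤ ∏ p ∈ e, p :=
              Finset.prod_le_prod_of_subset_of_one_le' Finset.sdiff_subset
                (fun p hp _ => (hP p (he hp)).pos)
            exact_mod_cast this
          · intros; apply Finset.prod_nonneg; intros; positivity
        · intro e he e' he' hee
          simp only [Finset.coe_filter, Set.mem_ofPred_eq] at he he' hee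
          rw [← Finset.sdiff_union_of_subset he.2, hee, Finset.sdiff_union_of_subset he'.2]
      · apply Finset.prod_nonneg
        intro q hq
        have := hh q (ht hq)
        positivity
    refine (Finset.sum_le_sum h2).trans ?_
    rw [← Finset.sum_mul, ← Finset.prod_one_add]
    apply mul_le_mul_of_nonneg_right
    · rw [Real.exp_sum]
      apply Finset.prod_le_prod
      · intro q hq; have := hh q hq; positivity
      · intro q hq; linarith [Real.add_one_le_exp (h q / q)]
    · have := Real.log_nonneg hu; linarith
  · intro e t
    simp only [h𝓔, Finset.mem_filter, Finset.mem_powerset]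
    constructor
    · rintro ⟨⟨a, b⟩, c⟩
      exact ⟨⟨⟨a, b⟩, c⟩, c.trans a⟩
    · rintro ⟨⟨⟨a, b⟩, c⟩, _⟩
      exact ⟨⟨a, b⟩, c⟩

/-- greedy prefix decomposition -/
lemma greedy (S : Finset ℕ) (hS : ∀ p ∈ S, p.Prime) (u : ℝ) (hu : 1 ≤ u) (A : ℕ)
    (hA : ((∏ p ∈ S, p : ℕ) : ℝ) ≤ u ^ A) :
    ∃ s : ℕ, ∃ T ⊆ S, ((∏ p ∈ T, p : ℕ) : ℝ) ≤ u ∧ S.card ≤ T.card + A * (s + 1) ∧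
      (∀ q ∈ T, (q:ℝ) ^ s ≤ u) ∧ (2:ℝ) ^ s ≤ u ∧ (2 ≤ s → u < ((∏ p ∈ T, p : ℕ) : ℝ) ^ 2) := by
  by_cases hSu : ((∏ p ∈ S, p : ℕ) : ℝ) ≤ u
  · exact ⟨0, S, subset_rfl, hSu, by omega, by simpa using fun _ _ => hu, by simpa using hu, by simp⟩
  push Not at hSu
  -- the bad elements
  set Bd := S.filter (fun p => u < ((∏ q ∈ S.filter (· ≤ p), q : ℕ) : ℝ)) with hBd
  have hne : Bd.Nonempty := by
    have hSne : S.Nonempty := by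
      rw [Finset.nonempty_iff_ne_empty]
      rintro rfl
      simp at hSu
      linarith
    refine ⟨S.max' hSne, ?_⟩
    rw [hBd, Finset.mem_filter]
    refine ⟨S.max'_mem hSne, ?_⟩
    rwa [Finset.filter_true_of_mem (fun x hx => S.le_max' x hx)]
  set p := Bd.min' hne with hp
  have hpB : p ∈ Bd := Bd.min'_mem hne
  have hpS : p ∈ S := (Finset.mem_filter.1 hpB).1
  have hpu := (Finset.mem_filter.1 hpB).2
  have hpp := hS p hpS
  set T := S.filter (· < p) with hT
  have hTu : ((∏ p ∈ T, p : ℕ) : ℝ) ≤ u := by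
    rcases T.eq_empty_or_nonempty with h0 | h0
    · rw [h0]; simpa using hu
    · by_contra hcon
      push Not at hcon
      have hm := T.max'_mem h0
      have hm2 := Finset.mem_filter.1 hm
      have : T.max' h0 ∈ Bd := by
        rw [hBd, Finset.mem_filter]
        refine ⟨hm2.1, ?_⟩
        suffices hh : S.filter (· ≤ T.max' h0) = T by rw [hh]; exact hcon
        ext q
        simp only [hT, Finset.mem_filter]
        constructor
        · rintro ⟨a, b⟩; exact ⟨a, b.trans_lt hm2.2⟩
        · rintro ⟨a, b⟩; exact ⟨a, T.le_max' q (Finset.mem_filter.2 ⟨a, b⟩)⟩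
      have := Bd.min'_le _ this
      exact absurd hm2.2 (not_lt.2 this)
  have hprod : ∏ q ∈ S.filter (· ≤ p), q = p * ∏ q ∈ T, q := by
    have : S.filter (· ≤ p) = insert p T := by
      ext q
      simp only [hT, Finset.mem_filter, Finset.mem_insert]
      constructor
      · rintro ⟨a, b⟩
        rcases b.eq_or_lt with h | h
        · exact Or.inl h
        · exact Or.inr ⟨a, h⟩
      · rintro (h | ⟨a, b⟩)
        · rw [h]; exact ⟨hpS, le_rfl⟩
        · exact ⟨a, b.le⟩
    rw [this, Finset.prod_insert (by simp [hT])]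
  rw [hprod] at hpu
  push_cast at hpu
  have hp2 : (2:ℝ) ≤ p := by exact_mod_cast hpp.two_le
  obtain ⟨s, hs1, hs2⟩ := exists_nat_pow_near hu (show (1:ℝ) < p by linarith)
  refine ⟨s, T, Finset.filter_subset _ _, hTu, ?_, ?_, ?_, ?_⟩
  · have hsplit : S.card = T.card + (S.filter (fun q => ¬ q < p)).card :=
      (Finset.card_filter_add_card_filter_not _).symm
    rw [hsplit]
    gcongr
    set W := S.filter (fun q => ¬ q < p)
    have h1 : p ^ W.card ≤ ∏ q ∈ S, q := by
      calc p ^ W.card ≤ ∏ q ∈ W, q := by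
            apply Finset.pow_card_le_prod
            intro q hq
            exact not_lt.1 (Finset.mem_filter.1 hq).2
        _ ≤ _ := Finset.prod_le_prod_of_subset_of_one_le' (Finset.filter_subset _ _)
                (fun p hp _ => (hS p hp).pos)
    have h2 : (p:ℝ) ^ W.card ≤ u ^ A := le_trans (by exact_mod_cast h1) hA
    have h3 : u ^ A ≤ ((p:ℝ) ^ (s+1)) ^ A := pow_le_pow_left₀ (by linarith) hs2.le _
    have h4 := h2.trans h3
    rw [← pow_mul] at h4
    have := (pow_le_pow_iff_right₀ (show (1:ℝ) < p by linarith)).1 h4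
    rwa [mul_comm] at this
  · intro q hq
    have : q < p := (Finset.mem_filter.1 hq).2
    refine le_trans ?_ hs1
    gcongr
  · refine le_trans ?_ hs1
    gcongr
  · intro h2
    have hps : (p:ℝ)^2 ≤ u := le_trans (pow_le_pow_right₀ (by linarith) h2) hs1
    push_cast
    set Q : ℝ := ∏ q ∈ T, (q:ℝ)
    have hQ : 0 ≤ Q := Finset.prod_nonneg fun _ _ => by positivity
    -- u < p Q, u^2 < p^2 Q^2 ≤ u Q^2
    have h5 : u * u < (p * Q) * (p * Q) := by nlinarith
    have h6 : (p * Q) * (p * Q) ≤ u * Q ^ 2 := by nlinarith [sq_nonneg Q]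
    have h7 : u * u < u * Q ^ 2 := by linarith
    exact lt_of_mul_lt_mul_left h7 (by linarith)

/-- primes `q ≤ u` with `q^s ≤ u` -/
def PS (u : ℝ) (s : ℕ) : Finset ℕ :=
  (Finset.range (⌊u⌋₊+1)).filter (fun q => q.Prime ∧ (q:ℝ)^s ≤ u)

def EE (u : ℝ) (s : ℕ) : Finset (Finset ℕ) :=
  (PS u s).powerset.filter (fun e => ((∏ p ∈ e, p : ℕ) : ℝ) ≤ u)

def tt (c u : ℝ) (s q : ℕ) : ℝ := 2 * c * s * Real.log q / Real.log u

def ww (y c u : ℝ) (s q : ℕ) : ℝ := y * Real.exp (tt c u s q)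

lemma PS_prime {u : ℝ} {s q : ℕ} (h : q ∈ PS u s) : q.Prime := (Finset.mem_filter.1 h).2.1

lemma log10 {u : ℝ} (hu : 10 ≤ u) : 1 ≤ Real.log u := by
  rw [Real.le_log_iff_exp_le (by linarith)]
  linarith [Real.exp_one_lt_d9]

lemma tt_nonneg {c u : ℝ} (hc : 0 ≤ c) (hu : 10 ≤ u) (s q : ℕ) : 0 ≤ tt c u s q := by
  have := log10 hu
  have := Real.log_natCast_nonneg q
  unfold tt; positivity

lemma tt_le {c u : ℝ} (hc : 0 ≤ c) (hu : 10 ≤ u) {s q : ℕ} (h : q ∈ PS u s) :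
    tt c u s q ≤ 2 * c := by
  have hl := log10 hu
  have hq := (Finset.mem_filter.1 h).2
  have hq0 : (0:ℝ) < q := by exact_mod_cast hq.1.pos
  have h1 := Real.log_le_log (pow_pos hq0 s) hq.2
  rw [Real.log_pow] at h1
  unfold tt
  rw [div_le_iff₀ (by linarith)]
  have : 2 * c * (s * Real.log q) ≤ 2 * c * Real.log u := by gcongr
  linarith

lemma sum_tt {c u : ℝ} (hc : 0 ≤ c) (hu : 10 ≤ u) (s : ℕ) :
    ∑ q ∈ PS u s, tt c u s q / q ≤ 4 * c := by
  have hl := log10 hu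
  rcases (PS u s).eq_empty_or_nonempty with h0 | h0
  · rw [h0]; simp; exact hc
  set N := (PS u s).max' h0 with hN
  have hNm : N ∈ PS u s := Finset.max'_mem _ _
  have h1 : ∑ q ∈ PS u s, Real.log q / q ≤ 2 * Real.log N := by
    refine le_trans ?_ (sum_log_div N)
    apply Finset.sum_le_sum_of_subset_of_nonneg
    · intro q hq
      have := (PS u s).le_max' q hq
      simp only [Finset.mem_filter, Finset.mem_range]
      exact ⟨by omega, PS_prime hq⟩
    · intro q _ _
      have := Real.log_natCast_nonneg q
      positivity
  have h2 : ∑ q ∈ PS u s, tt c u s q / q = 2 * c * s / Real.log u * ∑ q ∈ PS u s, Real.log q / q := by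
    rw [Finset.mul_sum]
    apply Finset.sum_congr rfl
    intro q _
    unfold tt; ring
  rw [h2]
  calc 2 * c * s / Real.log u * ∑ q ∈ PS u s, Real.log q / q 
      ≤ 2 * c * s / Real.log u * (2 * Real.log N) := by gcongr
    _ = 2 * tt c u s N := by unfold tt; ring
    _ ≤ 2 * (2 * c) := by gcongr; exact tt_le hc hu hNm
    _ = 4 * c := by ring

lemma count_V (M : ℕ) (u : ℝ) (hu : 10 ≤ u) (D : ∀ p : ℕ, Finset (ZMod p))
    (hD : ∀ p, p.Prime → (D p).card ≤ M) (S : ℤ → Finset ℕ)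
    (hS : ∀ v, ∀ p ∈ S v, p.Prime ∧ (v : ZMod p) ∈ D p) (V : Finset ℤ)
    (hV : ∀ v ∈ V, ((|v| : ℤ) : ℝ) ≤ 2 * u) (e : Finset ℕ) (hep : ∀ q ∈ e, q.Prime)
    (heu : ((∏ p ∈ e, p : ℕ) : ℝ) ≤ u) :
    (((V.filter (fun v => e ⊆ S v)).card : ℕ) : ℝ)
      ≤ 5 * u / (∏ p ∈ e, p : ℕ) * (M:ℝ) ^ e.card := by
  have hn0 : 0 < ∏ p ∈ e, p := Finset.prod_pos fun p hp => (hep p hp).pos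
  have a1 : (V.filter (fun v => e ⊆ S v)).card ≤
      ((Finset.Icc (-((⌊2*u⌋₊:ℕ):ℤ)) (⌊2*u⌋₊:ℕ)).filter
        (fun v => ∀ p ∈ e, (v : ZMod p) ∈ D p)).card := by
    apply Finset.card_le_card
    intro v hv
    simp only [Finset.mem_filter, Finset.mem_Icc] at hv ⊢
    refine ⟨?_, fun p hp => (hS v p (hv.2 hp)).2⟩
    rw [← abs_le]
    have h1 := hV v hv.1
    rw [← Int.natCast_natAbs] at h1 ⊢
    rw [Int.cast_natCast] at h1
    have h2 := Nat.le_floor h1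
    exact_mod_cast h2
  have a2 := a1.trans (count_res D e hep ⌊2*u⌋₊)
  have a3 : ∏ p ∈ e, (D p).card ≤ M ^ e.card := by
    apply Finset.prod_le_pow_card
    intro p hp; exact hD p (hep p hp)
  generalize ∏ p ∈ e, p = n at *
  generalize ∏ p ∈ e, (D p).card = m at *
  have hn0' : (0:ℝ) < n := by exact_mod_cast hn0
  have b2 : (⌊2*u⌋₊ : ℝ) ≤ 2 * u := Nat.floor_le (by linarith)
  generalize ⌊2*u⌋₊ = L at *
  have a4 : ((2 * L / n + 1 : ℕ) : ℝ) ≤ 5 * u / n := by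
    have b1 : ((2 * L / n : ℕ) : ℝ) ≤ ((2 * L : ℕ) : ℝ) / n := Nat.cast_div_le
    have b3 : ((2 * L : ℕ) : ℝ) / n ≤ 4 * u / n := by
      apply div_le_div_of_nonneg_right _ hn0'.le
      push_cast; linarith
    have b4 : 1 ≤ u / n := by rw [le_div_iff₀ hn0']; linarith
    have b5 : 5 * u / n = 4 * u / n + u / n := by ring
    rw [Nat.cast_add, Nat.cast_one]
    linarith
  have a5 : (m:ℝ) ≤ (M:ℝ) ^ e.card := by exact_mod_cast a3
  calc (((V.filter (fun v => e ⊆ S v)).card : ℕ) : ℝ)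
      ≤ ((2 * L / n + 1 : ℕ) : ℝ) * (m : ℝ) := by
        rw [← Nat.cast_mul]; exact Nat.cast_le.2 a2
    _ ≤ 5 * u / n * (M:ℝ) ^ e.card := by
        apply mul_le_mul a4 a5 (by positivity) (by positivity)

lemma perS (M : ℕ) (y c : ℝ) (hy1 : 1 ≤ y) (hy2 : y ≤ 2) (hMy : M * (y - 1) ≤ 1)
    (hc : 0 ≤ c) (u : ℝ) (hu : 10 ≤ u) (D : ∀ p : ℕ, Finset (ZMod p))
    (hD : ∀ p, p.Prime → (D p).card ≤ M) (S : ℤ → Finset ℕ)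
    (hS : ∀ v, ∀ p ∈ S v, p.Prime ∧ (v : ZMod p) ∈ D p) (V : Finset ℤ)
    (hV : ∀ v ∈ V, ((|v| : ℤ) : ℝ) ≤ 2 * u) (s : ℕ) :
    ∑ v ∈ V, ∑ e ∈ (EE u s).filter (· ⊆ S v), ∏ q ∈ e, (ww y c u s q - 1)
      ≤ 10 * Real.exp (8 * M * Real.exp (2 * c) * c) * u * Real.log u := by
  have hl := log10 hu
  have hE : ∀ e ∈ EE u s, (∀ q ∈ e, q ∈ PS u s) ∧ ((∏ p ∈ e, p : ℕ) : ℝ) ≤ u := by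
    intro e he
    simp only [EE, Finset.mem_filter, Finset.mem_powerset] at he
    exact ⟨fun q hq => he.1 hq, he.2⟩
  have hw : ∀ q, 0 ≤ ww y c u s q - 1 := by
    intro q
    have : 1 ≤ Real.exp (tt c u s q) := Real.one_le_exp (tt_nonneg hc hu s q)
    unfold ww
    nlinarith
  set h : ℕ → ℝ := fun q => M * 2 * Real.exp (2 * c) * tt c u s q with hh
  have hMw : ∀ q ∈ PS u s, M * (ww y c u s q - 1) ≤ 1 + h q := by
    intro q hq
    have h1 : Real.exp (tt c u s q) - 1 ≤ tt c u s q * Real.exp (2 * c) := by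
      have h2 : Real.exp (tt c u s q) - 1 ≤ tt c u s q * Real.exp (tt c u s q) := by
        have h3 := Real.add_one_le_exp (-(tt c u s q))
        have h4 : Real.exp (-(tt c u s q)) * Real.exp (tt c u s q) = 1 := by
          rw [← Real.exp_add]; simp
        nlinarith [Real.exp_pos (tt c u s q)]
      refine h2.trans ?_
      have := tt_nonneg hc hu s q
      gcongr
      exact tt_le hc hu hq
    have h5 : 0 ≤ tt c u s q * Real.exp (2 * c) := mul_nonneg (tt_nonneg hc hu s q) (Real.exp_pos _).le
    have h6 : y * (Real.exp (tt c u s q) - 1) ≤ 2 * (tt c u s q * Real.exp (2 * c)) := by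
      nlinarith
    have h7 : (M:ℝ) * (y * (Real.exp (tt c u s q) - 1)) ≤ M * (2 * (tt c u s q * Real.exp (2 * c))) := by
      gcongr
    simp only [hh, ww]
    linarith
  rw [Finset.sum_comm' (t' := EE u s) (s' := fun e => V.filter (fun v => e ⊆ S v))]
  · have h1 : ∀ e ∈ EE u s, ∑ v ∈ V.filter (fun v => e ⊆ S v), ∏ q ∈ e, (ww y c u s q - 1)
        ≤ 5 * u * ∏ q ∈ e, ((1 + h q) / q) := by
      intro e he
      have ⟨heP, heu⟩ := hE e he
      have hep : ∀ q ∈ e, q.Prime := fun q hq => PS_prime (heP q hq)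
      set n := ∏ p ∈ e, p with hn
      have hn0 : 0 < n := Finset.prod_pos fun p hp => (hep p hp).pos
      have hn0' : (0:ℝ) < n := by exact_mod_cast hn0
      have hcard := count_V M u hu D hD S hS V hV e hep heu
      rw [← hn] at hcard
      rw [Finset.sum_const, nsmul_eq_mul]
      have hpn : 0 ≤ ∏ q ∈ e, (ww y c u s q - 1) := Finset.prod_nonneg fun q _ => hw q
      calc _ ≤ 5 * u / n * (M:ℝ) ^ e.card * ∏ q ∈ e, (ww y c u s q - 1) := by gcongr
        _ = 5 * u * ∏ q ∈ e, (M * (ww y c u s q - 1) / q) := by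
            rw [Finset.prod_div_distrib, Finset.prod_mul_distrib, Finset.prod_const, hn]
            push_cast; ring
        _ ≤ _ := by
            gcongr with q hq
            · intro q hq
              have := hw q
              positivity
            · exact hMw q (heP q hq)
    refine (Finset.sum_le_sum h1).trans ?_
    rw [← Finset.mul_sum]
    have h2 := sum_weights (PS u s) (fun q hq => PS_prime hq) u (by linarith) h (fun q _ => by
      have := tt_nonneg hc hu s q
      simp only [hh]; positivity)
    have h3 : ∑ q ∈ PS u s, h q / q ≤ 8 * M * Real.exp (2 * c) * c := by
      have : ∑ q ∈ PS u s, h q / q = M * 2 * Real.exp (2 * c) * ∑ q ∈ PS u s, tt c u s q / q := by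
        rw [Finset.mul_sum]; apply Finset.sum_congr rfl; intro q _; simp only [hh]; ring
      rw [this]
      calc _ ≤ M * 2 * Real.exp (2 * c) * (4 * c) := by gcongr; exact sum_tt hc hu s
        _ = _ := by ring
    calc 5 * u * ∑ e ∈ EE u s, ∏ q ∈ e, ((1 + h q) / q) 
        ≤ 5 * u * (Real.exp (∑ q ∈ PS u s, h q / q) * (1 + Real.log u)) := by
          apply mul_le_mul_of_nonneg_left h2 (by linarith)
      _ ≤ 5 * u * (Real.exp (8 * M * Real.exp (2 * c) * c) * (2 * Real.log u)) := by
          gcongr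
          linarith
      _ = _ := by ring
  · intro v e
    simp only [Finset.mem_filter]
    tauto

lemma pointwise (y c : ℝ) (hy1 : 1 ≤ y) (hc : 0 ≤ c) (u : ℝ) (hu : 10 ≤ u) (A : ℕ)
    (S : Finset ℕ) (hS : ∀ p ∈ S, p.Prime) (hA : ((∏ p ∈ S, p : ℕ) : ℝ) ≤ u ^ A) :
    y ^ S.card ≤ ∑ s ∈ Finset.range (⌊u⌋₊ + 1), y ^ (A * (s+1)) * Real.exp (2 * c - c * s) *
      ∑ e ∈ (EE u s).filter (· ⊆ S), ∏ q ∈ e, (ww y c u s q - 1) := by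
  have hl := log10 hu
  have hw : ∀ s q, 0 ≤ ww y c u s q - 1 := by
    intro s q
    have : 1 ≤ Real.exp (tt c u s q) := Real.one_le_exp (tt_nonneg hc hu s q)
    unfold ww
    nlinarith
  obtain ⟨s, T, hTS, hTu, hcard, hTs, h2s, hs2⟩ := greedy S hS u (by linarith) A hA
  have hsm : s ∈ Finset.range (⌊u⌋₊ + 1) := by
    rw [Finset.mem_range, Nat.lt_succ_iff]
    apply Nat.le_floor
    have : s < 2 ^ s := Nat.lt_two_pow_self
    have : (s:ℝ) ≤ 2 ^ s := by exact_mod_cast this.le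
    linarith
  refine le_trans ?_ (Finset.single_le_sum (fun i _ => ?_) hsm)
  swap
  · apply mul_nonneg (by positivity)
    apply Finset.sum_nonneg; intro e _
    apply Finset.prod_nonneg; intro q _; exact hw i q
  have h1 : ∏ q ∈ T, ww y c u s q ≤ ∑ e ∈ (EE u s).filter (· ⊆ S), ∏ q ∈ e, (ww y c u s q - 1) := by
    have : ∏ q ∈ T, ww y c u s q = ∑ e ∈ T.powerset, ∏ q ∈ e, (ww y c u s q - 1) := by
      rw [← Finset.prod_one_add]; apply Finset.prod_congr rfl; intros; ring
    rw [this]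
    apply Finset.sum_le_sum_of_subset_of_nonneg
    · intro e he
      rw [Finset.mem_powerset] at he
      have hle : ∏ p ∈ e, p ≤ ∏ p ∈ T, p := Finset.prod_le_prod_of_subset_of_one_le' he
                (fun p hp _ => (hS p (hTS hp)).pos)
      have hle' : ((∏ p ∈ e, p : ℕ):ℝ) ≤ u := le_trans (by exact_mod_cast hle) hTu
      simp only [EE, Finset.mem_filter, Finset.mem_powerset]
      refine ⟨⟨?_, hle'⟩, he.trans hTS⟩
      intro q hq
      simp only [PS, Finset.mem_filter, Finset.mem_range, Nat.lt_succ_iff]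
      refine ⟨?_, hS q (hTS (he hq)), hTs q (he hq)⟩
      apply Nat.le_floor
      refine le_trans ?_ hle'
      have : q ≤ ∏ p ∈ e, p := Finset.single_le_prod' (f := fun p => p)
        (fun p hp => (hS p (hTS (he hp))).pos) hq
      exact_mod_cast this
    · intro e _ _
      apply Finset.prod_nonneg; intro q _; exact hw s q
  have hTpos : 0 < ∏ p ∈ T, p := Finset.prod_pos fun p hp => (hS p (hTS hp)).pos
  have h2 : y ^ T.card * Real.exp (c * s - 2 * c) ≤ ∏ q ∈ T, ww y c u s q := by
    have : ∏ q ∈ T, ww y c u s q = y ^ T.card * Real.exp (∑ q ∈ T, tt c u s q) := by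
      unfold ww
      rw [Finset.prod_mul_distrib, Finset.prod_const, Real.exp_sum]
    rw [this]
    gcongr
    have h3 : ∑ q ∈ T, tt c u s q = 2 * c * s * Real.log ((∏ p ∈ T, p : ℕ):ℝ) / Real.log u := by
      push_cast
      rw [Real.log_prod, Finset.mul_sum, Finset.sum_div]
      · rfl
      · intro q hq
        exact_mod_cast (hS q (hTS hq)).ne_zero
    rcases lt_or_ge s 2 with h | h
    · have h4 : (s:ℝ) ≤ 2 := by exact_mod_cast h.le
      have h5 : 0 ≤ ∑ q ∈ T, tt c u s q := Finset.sum_nonneg fun q _ => tt_nonneg hc hu s q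
      nlinarith
    · have h6 := Real.log_le_log (by linarith) (hs2 h).le
      rw [Real.log_pow] at h6
      push_cast at h6
      rw [h3]
      have : c * s ≤ 2 * c * s * Real.log ((∏ p ∈ T, p : ℕ):ℝ) / Real.log u := by
        rw [le_div_iff₀ (by linarith)]
        push_cast
        have := mul_le_mul_of_nonneg_left h6 (show 0 ≤ c * s by positivity)
        linarith
      linarith
  calc y ^ S.card ≤ y ^ (T.card + A * (s+1)) := pow_le_pow_right₀ hy1 hcard
    _ = y ^ (A * (s+1)) * Real.exp (2 * c - c * s) * (y ^ T.card * Real.exp (c * s - 2 * c)) := by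
        have : Real.exp (2 * c - c * s) * Real.exp (c * s - 2 * c) = 1 := by
          rw [← Real.exp_add]; simp
        rw [pow_add]
        linear_combination (- y ^ T.card * y ^ (A * (s+1))) * this
    _ ≤ _ := by
        gcongr
        exact h2.trans h1

lemma core (M A : ℕ) (y : ℝ) (hy1 : 1 ≤ y) (hy2 : y ≤ 2) (hMy : M * (y - 1) ≤ 1) :
    ∃ C : ℝ, 0 < C ∧ ∀ (u : ℝ) (_ : 10 ≤ u) (D : ∀ p : ℕ, Finset (ZMod p))
    (_ : ∀ p, p.Prime → (D p).card ≤ M) (S : ℤ → Finset ℕ)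
    (_ : ∀ v, ∀ p ∈ S v, p.Prime ∧ (v : ZMod p) ∈ D p) (V : Finset ℤ)
    (_ : ∀ v ∈ V, ((|v| : ℤ) : ℝ) ≤ 2 * u) (_ : ∀ v ∈ V, ((∏ p ∈ S v, p : ℕ) : ℝ) ≤ u ^ A),
    ∑ v ∈ V, y ^ (S v).card ≤ C * u * Real.log u := by
  set c : ℝ := (A + 1) * Real.log 2 with hcdef
  have hlog2 := Real.log_pos (show (1:ℝ) < 2 by norm_num)
  have hc : 0 ≤ c := by positivity
  set K := 10 * Real.exp (8 * M * Real.exp (2 * c) * c) with hK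
  refine ⟨2 ^ A * Real.exp (2 * c) * 2 * K, by positivity, ?_⟩
  intro u hu D hD S hS V hV hVA
  have hl := log10 hu
  have hfac : ∀ s : ℕ, y ^ (A * (s+1)) * Real.exp (2 * c - c * s) ≤ 2 ^ A * Real.exp (2 * c) * (1/2) ^ s := by
    intro s
    have h1 : Real.exp (2 * c - c * s) = Real.exp (2 * c) * ((1/2) ^ ((A+1) * s)) := by
      rw [sub_eq_add_neg, Real.exp_add]
      congr 1
      have : -(c * s) = ((A+1) * s : ℕ) * (-Real.log 2) := by push_cast; rw [hcdef]; ring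
      rw [this, Real.exp_nat_mul, Real.exp_neg, Real.exp_log (by norm_num)]
      norm_num
    have h2 : y ^ (A * (s+1)) ≤ 2 ^ (A * (s+1)) := by gcongr
    rw [h1]
    calc _ ≤ (2:ℝ) ^ (A * (s+1)) * (Real.exp (2 * c) * ((1/2) ^ ((A+1) * s))) := by gcongr
      _ = _ := by
        have : (2:ℝ) ^ (A * s) * (1/2) ^ (A * s) = 1 := by rw [← mul_pow]; norm_num
        have e1 : (2:ℝ) ^ (A * (s+1)) = 2 ^ (A*s) * 2 ^ A := by rw [← pow_add]; rfl
        have e2 : (1/2:ℝ) ^ ((A+1) * s) = (1/2) ^ (A*s) * (1/2) ^ s := by rw [← pow_add]; ring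
        rw [e1, e2]
        linear_combination (2 ^ A * Real.exp (2 * c) * (1/2) ^ s) * this
  calc ∑ v ∈ V, y ^ (S v).card 
      ≤ ∑ v ∈ V, ∑ s ∈ Finset.range (⌊u⌋₊ + 1), y ^ (A * (s+1)) * Real.exp (2 * c - c * s) *
      ∑ e ∈ (EE u s).filter (· ⊆ S v), ∏ q ∈ e, (ww y c u s q - 1) := 
        Finset.sum_le_sum fun v hv => pointwise y c hy1 hc u hu A (S v) (fun p hp => (hS v p hp).1) (hVA v hv)
    _ = ∑ s ∈ Finset.range (⌊u⌋₊ + 1), y ^ (A * (s+1)) * Real.exp (2 * c - c * s) *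
        ∑ v ∈ V, ∑ e ∈ (EE u s).filter (· ⊆ S v), ∏ q ∈ e, (ww y c u s q - 1) := by
        rw [Finset.sum_comm]
        apply Finset.sum_congr rfl
        intro s _
        rw [Finset.mul_sum]
    _ ≤ ∑ s ∈ Finset.range (⌊u⌋₊ + 1), 2 ^ A * Real.exp (2 * c) * (1/2) ^ s * (K * u * Real.log u) := by
        apply Finset.sum_le_sum
        intro s _
        have h1 := perS M y c hy1 hy2 hMy hc u hu D hD S hS V hV s
        have h2 := hfac s
        calc _ ≤ y ^ (A * (s+1)) * Real.exp (2 * c - c * s) * (K * u * Real.log u) := by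
              apply mul_le_mul_of_nonneg_left h1 (by positivity)
          _ ≤ _ := by
              apply mul_le_mul_of_nonneg_right h2 (by positivity)
    _ = (∑ s ∈ Finset.range (⌊u⌋₊ + 1), (1/2:ℝ) ^ s) * (2 ^ A * Real.exp (2 * c) * (K * u * Real.log u)) := by
        rw [Finset.sum_mul]
        apply Finset.sum_congr rfl
        intros; ring
    _ ≤ 2 * (2 ^ A * Real.exp (2 * c) * (K * u * Real.log u)) := by
        apply mul_le_mul_of_nonneg_right (sum_geometric_two_le _) (by positivity)
    _ = _ := by ring

open Polynomial in
lemma exists_int_poly (f : ℚ[X]) : ∃ b : ℤ, b ≠ 0 ∧ ∃ g : ℤ[X],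
    g.map (Int.castRingHom ℚ) = C (b:ℚ) * f := by
  obtain ⟨b, hbM, hb⟩ := IsLocalization.integerNormalization_spec (nonZeroDivisors ℤ) f
  refine ⟨b, nonZeroDivisors.ne_zero hbM, IsLocalization.integerNormalization (nonZeroDivisors ℤ) f, ?_⟩
  have : (algebraMap ℤ ℚ) = Int.castRingHom ℚ := rfl
  rw [← this, hb]
  ext n
  simp

open Polynomial in
lemma coprime_shift (h : ℚ[X]) (hirr : Irreducible h) (v : ℤ) (hv : v ≠ 0) :
    IsCoprime h (h.comp (X + C (v:ℚ))) := by
  rw [hirr.coprime_iff_not_dvd]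
  intro hdvd
  have hd : h.natDegree ≠ 0 := hirr.natDegree_pos.ne'
  have h0 : h ≠ 0 := hirr.ne_zero
  have hlc : (h.comp (X + C (v:ℚ))).leadingCoeff = h.leadingCoeff := by
    rw [leadingCoeff_comp (by rw [natDegree_X_add_C]; exact one_ne_zero), leadingCoeff_X_add_C,
      one_pow, mul_one]
  have hdeg : (h.comp (X + C (v:ℚ))).degree = h.degree := by
    rw [degree_eq_natDegree h0, degree_eq_natDegree, natDegree_comp, natDegree_X_add_C, mul_one]
    rw [← leadingCoeff_ne_zero, hlc]; simpa using h0
  have heq : h.comp (X + C (v:ℚ)) - h = 0 := by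
    by_contra hne
    have h1 : h ∣ h.comp (X + C (v:ℚ)) - h := dvd_sub hdvd dvd_rfl
    have h2 := degree_sub_lt_left hdeg (by rw [← leadingCoeff_ne_zero, hlc]; simpa using h0) hlc
    have h3 := degree_le_of_dvd h1 hne
    rw [hdeg] at h2
    exact absurd h3 (not_le.2 h2)
  have heq' : h.comp (X + C (v:ℚ)) = h := sub_eq_zero.1 heq
  have hper : ∀ n : ℕ, h.eval ((n:ℚ) * v) = h.eval 0 := by
    intro n
    induction n with
    | zero => simp
    | succ n ih =>
      rw [← ih]
      conv_rhs => rw [← heq']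
      rw [eval_comp]; simp; ring_nf
  have : h = C (h.eval 0) := by
    apply Polynomial.eq_of_infinite_eval_eq
    apply Set.Infinite.mono (s := Set.range (fun n : ℕ => (n:ℚ) * v))
    · rintro _ ⟨n, rfl⟩
      simp [hper n]
    · apply Set.infinite_range_of_injective
      intro a b hab
      have hv' : (v:ℚ) ≠ 0 := by exact_mod_cast hv
      simpa [hv'] using hab
  apply hd
  rw [this]; simp

open Polynomial in
lemma res_exists (g : ℤ[X]) (d : ℕ) (hg : g.natDegree = d) (hd1 : 1 ≤ d) :
    ∃ R : ℤ[X], ∀ v : ℤ, R.eval v = resultant g (g.comp (X + C v)) d d := by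
  refine ⟨resultant (g.map (C : ℤ →+* ℤ[X])) ((g.map (C : ℤ →+* ℤ[X])).comp (X + C X)) d d, ?_⟩
  intro v
  rw [← coe_evalRingHom, ← resultant_map_map, Polynomial.map_comp, Polynomial.map_map]
  have : (evalRingHom v).comp (C : ℤ →+* ℤ[X]) = RingHom.id ℤ := RingHom.ext_int _ _
  rw [this, Polynomial.map_id]
  congr 2
  rw [Polynomial.map_add, map_X, map_C, coe_evalRingHom, eval_X]

open Polynomial in
lemma algebra_part (f : ℚ[X]) (d : ℕ) (hdeg : f.natDegree = d) (hd1 : 1 ≤ d)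
    (hint : ∀ n : ℤ, ∃ m : ℤ, f.eval (n : ℚ) = (m : ℚ))
    (hirr : Irreducible f)
    (I : ∀ p : ℕ, Finset (ZMod p))
    (hI : ∀ p : ℕ, p.Prime →
      (p ≤ d → I p = ∅) ∧
      (d < p → ∀ nres : ZMod p, nres ∈ I p ↔
        ∃ m : ℤ, ((m : ZMod p) = nres ∧ ∀ v : ℤ, (v : ℚ) = f.eval (m : ℚ) → (p : ℤ) ∣ v))) :
    (∃ R : ℤ[X], ∀ v : ℤ, v ≠ 0 → R.eval v ≠ 0 ∧
      ∀ p : ℕ, p.Prime → (v : ZMod p) ∈ I p - I p → (p:ℤ) ∣ R.eval v) ∧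
    ∃ l : ℕ, l ≠ 0 ∧ ∀ p : ℕ, p.Prime → ¬ p ∣ l → (I p).card ≤ d := by
  obtain ⟨b, hb, g, hg⟩ := exists_int_poly f
  have hbQ : (b:ℚ) ≠ 0 := by exact_mod_cast hb
  have hgd : g.natDegree = d := by
    rw [← natDegree_map_eq_of_injective (f := Int.castRingHom ℚ) Int.cast_injective g, hg,
      natDegree_C_mul hbQ, hdeg]
  have hmem : ∀ p : ℕ, p.Prime → ∀ r ∈ I p, ∃ m : ℤ, (m : ZMod p) = r ∧ (p:ℤ) ∣ g.eval m := by
    intro p hp r hr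
    rcases le_or_gt p d with h | h
    · rw [(hI p hp).1 h] at hr; simp at hr
    · obtain ⟨m, hm, hv⟩ := ((hI p hp).2 h r).1 hr
      refine ⟨m, hm, ?_⟩
      obtain ⟨v, hv'⟩ := hint m
      have h1 := hv v hv'.symm
      have h2 : g.eval m = b * v := by
        have : ((g.eval m : ℤ) : ℚ) = b * v := by
          have := congrArg (Polynomial.eval (m:ℚ)) hg
          rw [eval_mul, eval_C, hv'] at this
          rw [← this]
          simp
        exact_mod_cast this
      rw [h2]
      exact h1.mul_left b
  have hirr' : Irreducible (g.map (Int.castRingHom ℚ)) := by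
    rw [hg]
    have : IsUnit (C (b:ℚ)) := Polynomial.isUnit_C.2 hbQ.isUnit
    rwa [irreducible_isUnit_mul this]
  constructor
  · obtain ⟨R, hR⟩ := res_exists g d hgd hd1
    refine ⟨R, fun v hv => ⟨?_, ?_⟩⟩
    · rw [hR]
      intro h0
      have h1 := congrArg (Int.castRingHom ℚ) h0
      rw [← resultant_map_map, Polynomial.map_comp, map_zero] at h1
      have h2 := resultant_ne_zero _ _ (coprime_shift _ hirr' v hv)
      apply h2
      rw [natDegree_comp, natDegree_X_add_C, mul_one,
        natDegree_map_eq_of_injective (f := Int.castRingHom ℚ) Int.cast_injective g, hgd]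
      rwa [Polynomial.map_add, map_X, map_C, eq_intCast] at h1
    · intro p hp hvp
      rw [hR]
      obtain ⟨r1, hr1, r2, hr2, hr⟩ := Finset.mem_sub.1 hvp
      obtain ⟨m1, hm1, hp1⟩ := hmem p hp r1 hr1
      obtain ⟨m2, hm2, hp2⟩ := hmem p hp r2 hr2
      obtain ⟨P, Q, _, _, hPQ⟩ := exists_mul_add_mul_eq_C_resultant (m := d) (n := d) g
        (g.comp (X + C v)) hgd.le (by rw [natDegree_comp, natDegree_X_add_C, mul_one, hgd]) (Or.inl (by omega))
      have h1 := congrArg (Polynomial.eval m2) hPQ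
      rw [eval_C, eval_add, eval_mul, eval_mul, eval_comp] at h1
      rw [← h1]
      apply dvd_add (hp2.mul_right _)
      apply Dvd.dvd.mul_right
      have h2 : (p:ℤ) ∣ (m2 + v) - m1 := by
        rw [← ZMod.intCast_zmod_eq_zero_iff_dvd]
        push_cast
        rw [hm1, hm2, ← hr]; ring
      have h3 := h2.trans (Polynomial.sub_dvd_eval_sub (m2 + v) m1 g)
      have h4 := dvd_add h3 hp1
      simpa using h4
  · have hlc : g.leadingCoeff ≠ 0 := by
      rw [leadingCoeff_ne_zero]
      rintro rfl
      simp at hgd; omega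
    refine ⟨g.leadingCoeff.natAbs, by simpa using hlc, ?_⟩
    intro p hp hpl
    have := Fact.mk hp
    set gp := g.map (Int.castRingHom (ZMod p)) with hgp
    have hgp0 : gp ≠ 0 := by
      intro h0
      have := congrArg (fun q => coeff q g.natDegree) h0
      simp only [hgp, coeff_map, coeff_zero, coeff_natDegree, eq_intCast] at this
      rw [ZMod.intCast_zmod_eq_zero_iff_dvd] at this
      exact hpl (Int.natCast_dvd.1 this)
    have hsub : I p ⊆ gp.roots.toFinset := by
      intro r hr
      obtain ⟨m, hm, hpm⟩ := hmem p hp r hr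
      rw [Multiset.mem_toFinset, mem_roots hgp0, IsRoot, ← hm, hgp]
      have := (ZMod.intCast_zmod_eq_zero_iff_dvd _ p).2 hpm
      rw [← this]
      simp
    calc (I p).card ≤ gp.roots.toFinset.card := Finset.card_le_card hsub
      _ ≤ Multiset.card gp.roots := Multiset.toFinset_card_le _
      _ ≤ gp.natDegree := card_roots' _
      _ ≤ g.natDegree := natDegree_map_le
      _ = d := hgd

open Polynomial in
lemma poly_bound (R : ℤ[X]) : ∃ A : ℕ, 1 ≤ A ∧ ∀ u : ℝ, 10 ≤ u → ∀ v : ℤ, ((|v| : ℤ) : ℝ) ≤ 2 * u →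
    ((R.eval v).natAbs : ℝ) ≤ u ^ A := by
  set B : ℝ := ∑ i ∈ Finset.range (R.natDegree + 1), |(R.coeff i : ℝ)| with hB
  have hB0 : 0 ≤ B := Finset.sum_nonneg fun _ _ => abs_nonneg _
  obtain ⟨a, ha⟩ := pow_unbounded_of_one_lt B (show (1:ℝ) < 10 by norm_num)
  refine ⟨a + 2 * R.natDegree + 1, by omega, ?_⟩
  intro u hu v hv
  have h1 : ((R.eval v).natAbs : ℝ) = |((R.eval v : ℤ) : ℝ)| := by
    rw [← Int.cast_abs, ← Int.natCast_natAbs, Int.cast_natCast]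
  have hv2 : |(v:ℝ)| ≤ u ^ 2 := by
    rw [Int.cast_abs] at hv
    nlinarith
  rw [h1, eval_eq_sum_range]
  push_cast
  calc |∑ i ∈ Finset.range (R.natDegree + 1), (R.coeff i : ℝ) * (v:ℝ) ^ i|
      ≤ ∑ i ∈ Finset.range (R.natDegree + 1), |(R.coeff i : ℝ) * (v:ℝ) ^ i| :=
        Finset.abs_sum_le_sum_abs _ _
    _ ≤ ∑ i ∈ Finset.range (R.natDegree + 1), |(R.coeff i : ℝ)| * u ^ (2 * R.natDegree) := by
        apply Finset.sum_le_sum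
        intro i hi
        rw [abs_mul, abs_pow]
        apply mul_le_mul_of_nonneg_left _ (abs_nonneg _)
        calc |(v:ℝ)| ^ i ≤ (u ^ 2) ^ i := by gcongr
          _ = u ^ (2 * i) := by rw [pow_mul]
          _ ≤ _ := by
            apply pow_le_pow_right₀ (by linarith)
            have := Finset.mem_range.1 hi
            omega
    _ = B * u ^ (2 * R.natDegree) := by rw [← Finset.sum_mul]
    _ ≤ u ^ a * u ^ (2 * R.natDegree) := by
        gcongr
        exact ha.le.trans (by gcongr)
    _ = u ^ (a + 2 * R.natDegree) := by rw [pow_add]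
    _ ≤ _ := pow_le_pow_right₀ (by linarith) (by omega)

lemma y_facts (M : ℕ) (hM : 1 ≤ M) : ∃ y : ℝ, 1 ≤ y ∧ y ≤ 2 ∧ M * (y - 1) ≤ 1 ∧
    ∀ k : ℕ, (2:ℝ) ^ (-(k:ℝ) / (M:ℝ)) * y ^ k = 1 := by
  have hM0 : (0:ℝ) < M := by exact_mod_cast hM
  refine ⟨(2:ℝ) ^ (1 / (M:ℝ)), ?_, ?_, ?_, ?_⟩
  · exact Real.one_le_rpow (by norm_num) (by positivity)
  · calc (2:ℝ) ^ (1 / (M:ℝ)) ≤ (2:ℝ) ^ (1:ℝ) := by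
          apply Real.rpow_le_rpow_of_exponent_le (by norm_num)
          rw [div_le_one hM0]; exact_mod_cast hM
      _ = 2 := by simp
  · have h1 : ((2:ℝ) ^ (1 / (M:ℝ))) ^ M = 2 := by
      rw [← Real.rpow_natCast, ← Real.rpow_mul (by norm_num), one_div_mul_cancel hM0.ne',
        Real.rpow_one]
    have h2 : (2:ℝ) ≤ (1 + 1 / (M:ℝ)) ^ M := by
      have := one_add_mul_le_pow (show (-2:ℝ) ≤ 1 / (M:ℝ) by
        have : (0:ℝ) ≤ 1 / M := by positivity
        linarith) M
      rw [mul_one_div_cancel hM0.ne'] at this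
      linarith
    have h3 : (2:ℝ) ^ (1 / (M:ℝ)) ≤ 1 + 1 / (M:ℝ) := by
      apply (pow_le_pow_iff_left₀ (by positivity) (by positivity) (show M ≠ 0 by omega)).1
      rw [h1]; exact h2
    have h4 : (M:ℝ) * ((2:ℝ) ^ (1 / (M:ℝ)) - 1) ≤ M * (1 / M) := by gcongr; linarith
    rwa [mul_one_div_cancel hM0.ne'] at h4
  · intro k
    rw [← Real.rpow_natCast, ← Real.rpow_mul (by norm_num), ← Real.rpow_add (by norm_num)]
    have : -(k:ℝ) / M + 1 / M * k = 0 := by ring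
    rw [this, Real.rpow_zero]

lemma card_primeFactors_le {n : ℕ} (hn : n ≠ 0) {u : ℝ} (hu : 10 ≤ u) {A : ℕ} (h : (n:ℝ) ≤ u ^ A) :
    (n.primeFactors.card : ℝ) ≤ 2 * A * Real.log u := by
  have h1 : 2 ^ n.primeFactors.card ≤ n := by
    calc 2 ^ n.primeFactors.card ≤ ∏ p ∈ n.primeFactors, p := by
          apply Finset.pow_card_le_prod
          intro p hp
          exact (Nat.prime_of_mem_primeFactors hp).two_le
      _ ≤ n := Nat.le_of_dvd (Nat.pos_of_ne_zero hn) (Nat.prod_primeFactors_dvd n)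
  have h2 : (2:ℝ) ^ n.primeFactors.card ≤ u ^ A := le_trans (by exact_mod_cast h1) h
  have h3 := Real.log_le_log (by positivity) h2
  rw [Real.log_pow, Real.log_pow] at h3
  have h4 := Real.log_two_gt_d9
  have h5 : (0:ℝ) ≤ n.primeFactors.card := by positivity
  nlinarith

/-- **Hypothesis (g) for polynomial sieving systems**, with `c₁ = 2` and
`c₂ = (log 2)/d²`:  there is `C_f` such that for every `u ≥ 10`, every choice of
nonzero integers `m_q` with `m_q mod q ∈ I_q - I_q` (for primes `q` with `|I_q| ≥ 1`),
every `|w| ≤ u` and every `k ≥ 1`, the number of primes `q` with `|I_q| ≥ 1`,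
`0 < |m_q| ≤ u`, `m_q + w ≠ 0` and `N(m_q + w) ≥ k` is at most
`C_f · 2^{-k/d²} · u · (log u)²`. -/
theorem stmt15 (f : Polynomial ℚ) (d : ℕ) (hdeg : f.natDegree = d) (hd1 : 1 ≤ d)
    (hint : ∀ n : ℤ, ∃ m : ℤ, f.eval (n : ℚ) = (m : ℚ))
    (hlead : 0 < f.leadingCoeff)
    (hirr : Irreducible f)
    -- the polynomial sieving system of `f`
    (I : ∀ p : ℕ, Finset (ZMod p))
    (hI : ∀ p : ℕ, p.Prime →
      (p ≤ d → I p = ∅) ∧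
      (d < p → ∀ nres : ZMod p, nres ∈ I p ↔
        ∃ m : ℤ, ((m : ZMod p) = nres ∧ ∀ v : ℤ, (v : ℚ) = f.eval (m : ℚ) → (p : ℤ) ∣ v)))
    :
    ∃ Cf : ℝ, 0 < Cf ∧
      ∀ u : ℝ, 10 ≤ u → ∀ mq : ℕ → ℤ,
        (∀ q : ℕ, q.Prime → (I q).Nonempty → mq q ≠ 0 ∧ (mq q : ZMod q) ∈ (I q - I q)) →
        ∀ w : ℤ, ((|w| : ℤ) : ℝ) ≤ u → ∀ k : ℕ, 1 ≤ k →
          (gSet I mq u w k).Finite ∧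
          ((gSet I mq u w k).ncard : ℝ)
            ≤ Cf * (2 : ℝ) ^ (-(k : ℝ) / (d : ℝ) ^ 2) * u * Real.log u ^ 2 := by
  obtain ⟨⟨R, hR⟩, l, hl0, hl⟩ := algebra_part f d hdeg hd1 hint hirr I hI
  obtain ⟨A, hA1, hA⟩ := poly_bound R
  obtain ⟨y, hy1, hy2, hMy, hyk⟩ := y_facts (d ^ 2) (Nat.one_le_pow _ _ hd1)
  obtain ⟨C, hC, hcore⟩ := core (d ^ 2) A y hy1 hy2 hMy
  have hy0 : 0 < y := by linarith
  have hA0 : (0:ℝ) < A := by exact_mod_cast hA1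
  refine ⟨C * y ^ l.primeFactors.card * (2 * A), by positivity, ?_⟩
  intro u hu mq hmq w hw k hk
  have hlog := log10 hu
  set D : ∀ p : ℕ, Finset (ZMod p) := fun p => if p ∣ l then ∅ else I p - I p with hD
  have hDcard : ∀ p, p.Prime → (D p).card ≤ d ^ 2 := by
    intro p hp
    simp only [hD]
    split_ifs with h
    · simp
    · have h1 := hl p hp h
      calc (I p - I p).card ≤ (I p).card * (I p).card := Finset.card_sub_le
        _ ≤ d * d := Nat.mul_le_mul h1 h1
        _ = d ^ 2 := by ring
  set S : ℤ → Finset ℕ := fun v =>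
    (R.eval v).natAbs.primeFactors.filter (fun p => (v : ZMod p) ∈ D p) with hSdef
  have hS : ∀ v, ∀ p ∈ S v, p.Prime ∧ (v : ZMod p) ∈ D p := by
    intro v p hp
    rw [hSdef, Finset.mem_filter] at hp
    exact ⟨Nat.prime_of_mem_primeFactors hp.1, hp.2⟩
  have hRne : ∀ v : ℤ, v ≠ 0 → (R.eval v).natAbs ≠ 0 := fun v hv => by
    simpa using (hR v hv).1
  have hmemR : ∀ v : ℤ, v ≠ 0 → ∀ p : ℕ, p.Prime → (v : ZMod p) ∈ I p - I p →
      p ∈ (R.eval v).natAbs.primeFactors := by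
    intro v hv p hp h
    rw [Nat.mem_primeFactors]
    exact ⟨hp, Int.natCast_dvd.1 ((hR v hv).2 p hp h), hRne v hv⟩
  have hN : ∀ v : ℤ, v ≠ 0 → (Nset I v).ncard ≤ (S v).card + l.primeFactors.card := by
    intro v hv
    have hsub : Nset I v ⊆ ((S v ∪ l.primeFactors : Finset ℕ) : Set ℕ) := by
      rintro p ⟨hp, hvp⟩
      rw [Finset.mem_coe, Finset.mem_union]
      by_cases hpl : p ∣ l
      · right; exact Nat.mem_primeFactors.2 ⟨hp, hpl, hl0⟩
      · left
        rw [hSdef, Finset.mem_filter]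
        refine ⟨hmemR v hv p hp hvp, ?_⟩
        simp only [hD, if_neg hpl]
        exact hvp
    calc (Nset I v).ncard ≤ ((S v ∪ l.primeFactors : Finset ℕ) : Set ℕ).ncard :=
          Set.ncard_le_ncard hsub (Finset.finite_toSet _)
      _ = (S v ∪ l.primeFactors).card := Set.ncard_coe_finset _
      _ ≤ _ := Finset.card_union_le _ _
  set V : Finset ℤ := (Finset.Icc (-((⌊2*u⌋₊:ℕ):ℤ)) (⌊2*u⌋₊:ℕ)).filter
    (fun v => v ≠ 0 ∧ k ≤ (Nset I v).ncard) with hVdef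
  have hV : ∀ v ∈ V, ((|v| : ℤ) : ℝ) ≤ 2 * u := by
    intro v hv
    rw [hVdef, Finset.mem_filter, Finset.mem_Icc, ← abs_le] at hv
    have h1 : ((|v| : ℤ) : ℝ) ≤ ((⌊2*u⌋₊ : ℤ) : ℝ) := Int.cast_le.2 hv.1
    rw [Int.cast_natCast] at h1
    exact h1.trans (Nat.floor_le (by linarith))
  have hVA : ∀ v ∈ V, ((∏ p ∈ S v, p : ℕ) : ℝ) ≤ u ^ A := by
    intro v hv
    refine le_trans ?_ (hA u hu v (hV v hv))
    have hv0 : v ≠ 0 := (Finset.mem_filter.1 hv).2.1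
    have h1 : ∏ p ∈ S v, p ∣ (R.eval v).natAbs :=
      (Finset.prod_dvd_prod_of_subset _ _ _ (Finset.filter_subset _ _)).trans
        (Nat.prod_primeFactors_dvd _)
    exact_mod_cast Nat.le_of_dvd (Nat.pos_of_ne_zero (hRne v hv0)) h1
  have hsum := hcore u hu D hDcard S hS V hV hVA
  have hVcard : (V.card : ℝ) * y ^ k ≤ C * u * Real.log u * y ^ l.primeFactors.card := by
    calc (V.card : ℝ) * y ^ k = ∑ v ∈ V, y ^ k := by simp
      _ ≤ ∑ v ∈ V, y ^ (S v).card * y ^ l.primeFactors.card := by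
          apply Finset.sum_le_sum
          intro v hv
          have hv' := (Finset.mem_filter.1 hv).2
          rw [← pow_add]
          exact pow_le_pow_right₀ hy1 (hv'.2.trans (hN v hv'.1))
      _ = (∑ v ∈ V, y ^ (S v).card) * y ^ l.primeFactors.card := by rw [Finset.sum_mul]
      _ ≤ _ := by gcongr
  set W : Finset ℤ := V.filter (fun v => v - w ≠ 0 ∧ ((|v - w| : ℤ) : ℝ) ≤ u) with hW
  set Z : Finset ℕ := W.biUnion (fun v => (R.eval (v - w)).natAbs.primeFactors) with hZ
  have hsub : gSet I mq u w k ⊆ (Z : Set ℕ) := by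
    rintro q ⟨hq, hIq, hm0, hmu, hmw, hkN⟩
    obtain ⟨hne, hmem⟩ := hmq q hq hIq
    rw [Finset.mem_coe, hZ, Finset.mem_biUnion]
    refine ⟨mq q + w, ?_, ?_⟩
    · rw [hW, Finset.mem_filter, hVdef, Finset.mem_filter, add_sub_cancel_right]
      refine ⟨⟨?_, hmw, hkN⟩, hne, hmu⟩
      rw [Finset.mem_Icc, ← abs_le]
      have h1 : ((|mq q + w| : ℤ) : ℝ) ≤ 2 * u := by
        have h2 : |mq q + w| ≤ |mq q| + |w| := abs_add_le _ _
        have h3 : ((|mq q + w| : ℤ) : ℝ) ≤ ((|mq q| : ℤ) : ℝ) + ((|w| : ℤ) : ℝ) := by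
          exact_mod_cast h2
        linarith
      rw [← Int.natCast_natAbs] at h1 ⊢
      rw [Int.cast_natCast] at h1
      have h2 := Nat.le_floor h1
      exact_mod_cast h2
    · rw [add_sub_cancel_right]
      exact hmemR _ hne q hq hmem
  have hfin : (gSet I mq u w k).Finite := (Finset.finite_toSet Z).subset hsub
  refine ⟨hfin, ?_⟩
  have hZcard : (Z.card : ℝ) ≤ V.card * (2 * A * Real.log u) := by
    calc (Z.card : ℝ) ≤ ((∑ v ∈ W, (R.eval (v - w)).natAbs.primeFactors.card : ℕ) : ℝ) := by
          exact_mod_cast Finset.card_biUnion_le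
      _ = ∑ v ∈ W, ((R.eval (v - w)).natAbs.primeFactors.card : ℝ) := by push_cast; rfl
      _ ≤ ∑ v ∈ W, (2 * A * Real.log u) := by
          apply Finset.sum_le_sum
          intro v hv
          have hv' := (Finset.mem_filter.1 hv).2
          exact card_primeFactors_le (hRne _ hv'.1) hu (hA u hu _ (by linarith))
      _ = W.card * (2 * A * Real.log u) := by simp
      _ ≤ _ := by
          gcongr
          exact Finset.filter_subset _ _
  have hg : ((gSet I mq u w k).ncard : ℝ) ≤ Z.card := by
    rw [← Set.ncard_coe_finset Z]
    exact_mod_cast Set.ncard_le_ncard hsub (Finset.finite_toSet _)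
  have hyk' := hyk k
  push_cast at hyk'
  set t : ℝ := (2 : ℝ) ^ (-(k : ℝ) / (d : ℝ) ^ 2) with ht
  have ht0 : 0 ≤ t := by positivity
  have hVt : (V.card : ℝ) ≤ t * (C * u * Real.log u * y ^ l.primeFactors.card) := by
    calc (V.card : ℝ) = t * (V.card * y ^ k) := by linear_combination (-(V.card : ℝ)) * hyk'
      _ ≤ _ := by gcongr
  calc ((gSet I mq u w k).ncard : ℝ) ≤ V.card * (2 * A * Real.log u) := hg.trans hZcard
    _ ≤ t * (C * u * Real.log u * y ^ l.primeFactors.card) * (2 * A * Real.log u) := by gcongr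
    _ = _ := by ring

end
end
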